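/- arXiv:1208.2210 — 4 statements merged into one kernel-verified Lean document; each statement's English description precedes it below -/
import Mathlib

section
/- For every natural number n, PD(3n + 2) is divisible by 3. -/
open Finset

/-- The number of partitions of `n` with designated summands: for each part size that occurs,
one part of that size is designated, so each partition `λ` contributes
`∏_{k distinct part size of λ} m_k(λ)`. -/
def PD (n : ℕ) : ℕ :=
  ∑ p : Nat.Partition n, ∏ k ∈ p.parts.toFinset, p.parts.count k

set_option linter.style.haveILetI false

def gP {A : Type*} [CommRing A] (x : A) (r : ℕ → A) (n s : ℕ) : A :=
  ∏ k ∈ Ico s n, (1 - x ^ (k + 1)) * r (k + 1)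

def gT {A : Type*} [CommRing A] (x : A) (r : ℕ → A) (n s : ℕ) : A :=
  2 * (-1) ^ s * gP x r n s * x ^ (s * (n + 1)) * r s

lemma gP_top {A : Type*} [CommRing A] (x : A) (r : ℕ → A) (n s : ℕ) (h : s ≤ n) :
    gP x r (n + 1) s = gP x r n s * ((1 - x ^ (n + 1)) * r (n + 1)) := by
  unfold gP; rw [Finset.prod_Ico_succ_top h]

lemma gP_bot {A : Type*} [CommRing A] (x : A) (r : ℕ → A) (n s : ℕ) (h : s < n) :
    gP x r n s = ((1 - x ^ (s + 1)) * r (s + 1)) * gP x r n (s + 1) := by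
  unfold gP; rw [Finset.prod_eq_prod_Ico_succ_bot h]

lemma g_tele {A : Type*} [CommRing A] (x : A) (r : ℕ → A) (hr : ∀ k, r k * (1 + x ^ k) = 1)
    (n m : ℕ) (h : m ≤ n) :
    ∑ s ∈ range (m + 1), (gT x r (n + 1) s - gT x r n s)
      = 2 * r (n + 1) * ((-1) ^ (m + 1) * x ^ ((m + 1) * (n + 1)) * gP x r n m) := by
  induction m with
  | zero =>
    simp only [zero_add, sum_range_one, gT, gP_top x r n 0 h]
    have h0 := hr 0
    have h1 := hr (n + 1)
    simp only [pow_zero, zero_mul, one_mul, pow_one, mul_one] at *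
    generalize x ^ (n + 1) = y at *
    linear_combination (gP x r n 0) * ((1 - y) * r (n + 1) - 1) * h0 + gP x r n 0 * h1
  | succ m ih =>
    rw [sum_range_succ, ih (by omega)]
    simp only [gT, gP_top x r n (m + 1) h, gP_bot x r n m h]
    have h0 := hr (m + 1)
    have h1 := hr (n + 1)
    have e1 : x ^ ((m + 1) * (n + 1 + 1)) = x ^ ((m + 1) * (n + 1)) * x ^ (m + 1) := by ring
    have e2 : x ^ ((m + 1 + 1) * (n + 1)) = x ^ ((m + 1) * (n + 1)) * x ^ (n + 1) := by ring
    rw [e1, e2]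
    generalize x ^ ((m + 1) * (n + 1)) = w at *
    generalize x ^ (n + 1) = y at *
    generalize x ^ (m + 1) = z at *
    generalize r (n + 1) = a at *
    generalize r (m + 1) = b at *
    generalize gP x r n (m + 1) = p at *
    rw [pow_succ (-1 : A) (m + 1)]
    generalize (-1 : A) ^ (m + 1) = e at *
    linear_combination 2 * e * p * w * b * h1 - 2 * e * p * w * a * y * h0

lemma g_main {A : Type*} [CommRing A] (x : A) (r : ℕ → A) (hr : ∀ k, r k * (1 + x ^ k) = 1)
    (n : ℕ) :
    ∑ s ∈ range (n + 1), gT x r n s = 1 + ∑ s ∈ range n, 2 * (-1) ^ (s + 1) * x ^ ((s + 1) ^ 2) := by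
  induction n with
  | zero => 
    have h0 := hr 0
    simp [gT, gP] at *
    linear_combination h0
  | succ n ih =>
    have h := g_tele x r hr n n le_rfl
    rw [sum_sub_distrib, ih] at h
    rw [sum_range_succ _ (n + 1),
      sum_range_succ (fun s => 2 * (-1 : A) ^ (s + 1) * x ^ ((s + 1) ^ 2)) n, ← add_assoc]
    have h1 := hr (n + 1)
    have e : x ^ ((n + 1) * (n + 1 + 1)) = x ^ ((n + 1) ^ 2) * x ^ (n + 1) := by ring
    have e' : x ^ ((n + 1) * (n + 1)) = x ^ ((n + 1) ^ 2) := by ring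
    rw [e'] at h
    simp only [gT, gP, Ico_self, prod_empty] at *
    rw [e]
    linear_combination h + 2 * (-1) ^ (n + 1) * x ^ ((n + 1) ^ 2) * h1

open PowerSeries in
lemma g_charP : CharP (ZMod 3)⟦X⟧ 3 :=
  charP_of_injective_ringHom (f := (C : ZMod 3 →+* (ZMod 3)⟦X⟧)) PowerSeries.C_injective 3

open PowerSeries in
lemma g_factor [TopologicalSpace (ZMod 3)] [DiscreteTopology (ZMod 3)] (i : ℕ) :
    letI := PowerSeries.WithPiTopology.instTopologicalSpace (R := ZMod 3)
    (1 + ∑' j : ℕ, ((j + 1 : ℕ) : ZMod 3) • (X : (ZMod 3)⟦X⟧) ^ ((i + 1) * (j + 1)))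
      * (1 - X ^ (i + 1)) ^ 2 = (1 + X ^ (i + 1)) ^ 2 := by
  letI := PowerSeries.WithPiTopology.instTopologicalSpace (R := ZMod 3)
  haveI := PowerSeries.WithPiTopology.instT2Space (R := ZMod 3)
  haveI := PowerSeries.WithPiTopology.instIsTopologicalRing (ZMod 3)
  set y : (ZMod 3)⟦X⟧ := X ^ (i + 1) with hy
  have hc : y.constantCoeff = 0 := by simp [hy]
  have hs := Nat.Partition.summable_genFun_term (R := ZMod 3) (fun _ c => (c : ZMod 3)) i
  have h1 := PowerSeries.WithPiTopology.summable_pow_of_constantCoeff_eq_zero hc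
  have h2 := PowerSeries.WithPiTopology.one_sub_mul_tsum_pow_of_constantCoeff_eq_zero hc
  simp only [pow_mul, ← hy] at hs ⊢
  set T := ∑' j : ℕ, ((j + 1 : ℕ) : ZMod 3) • y ^ (j + 1) with hT
  have key : T = y * T + y * ∑' j : ℕ, y ^ j := by
    have e0 : ∀ j : ℕ, ((j + 1 : ℕ) : ZMod 3) • y ^ (j + 1)
        = y * (((j : ℕ) : ZMod 3) • y ^ j) + y * y ^ j := by
      intro j
      rw [Nat.cast_smul_eq_nsmul, Nat.cast_smul_eq_nsmul, nsmul_eq_mul, nsmul_eq_mul]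
      push_cast; ring
    have hs' : Summable (fun j : ℕ => (((j : ℕ) : ZMod 3) • y ^ j)) := by
      rw [← summable_nat_add_iff 1]; exact hs
    have e1 : ∑' j : ℕ, (((j : ℕ) : ZMod 3) • y ^ j) = T := by
      rw [hs'.tsum_eq_zero_add]; simp [hT]
    conv_lhs => rw [hT]
    simp_rw [e0]
    rw [(hs'.mul_left y).tsum_add (h1.mul_left y), hs'.tsum_mul_left, h1.tsum_mul_left, e1]
  haveI := g_charP
  have h3 : (3 : (ZMod 3)⟦X⟧) = 0 := by
    have := CharP.cast_eq_zero ((ZMod 3)⟦X⟧) 3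
    exact_mod_cast this
  linear_combination (1 - y) * key + y * h2 - y * h3

open PowerSeries in
lemma g_prod (d : ℕ) : ∃ (N : ℕ) (G : (ZMod 3)⟦X⟧), d ≤ N ∧ (∀ e ≤ d, coeff e G = (PD e : ZMod 3)) ∧
    G * (∏ k ∈ range N, (1 - X ^ (k + 1))) ^ 2 = (∏ k ∈ range N, (1 + X ^ (k + 1))) ^ 2 := by
  letI : TopologicalSpace (ZMod 3) := ⊥
  haveI : DiscreteTopology (ZMod 3) := ⟨rfl⟩
  letI := PowerSeries.WithPiTopology.instTopologicalSpace (R := ZMod 3)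
  have h := (Nat.Partition.hasProd_genFun (R := ZMod 3) (fun _ c => (c : ZMod 3))).tendsto_prod_nat
  rw [PowerSeries.WithPiTopology.tendsto_iff_coeff_tendsto] at h
  have h' : ∀ᶠ N in Filter.atTop, ∀ e ∈ range (d + 1), 
    coeff e (∏ i ∈ range N, (1 + ∑' j : ℕ, ((j + 1 : ℕ) : ZMod 3) • (X : (ZMod 3)⟦X⟧) ^ ((i + 1) * (j + 1))))
      = coeff e (Nat.Partition.genFun (R := ZMod 3) (fun _ c => (c : ZMod 3))) := by
    rw [Filter.eventually_all_finset]
    intro e _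
    have := h e
    rw [nhds_discrete, Filter.tendsto_pure] at this
    exact this
  obtain ⟨N, hN, hd⟩ := (h'.and (Filter.eventually_ge_atTop d)).exists
  refine ⟨N, _, hd, fun e he => (hN e (by simp; omega)).trans ?_, ?_⟩
  · rw [Nat.Partition.coeff_genFun, PD]
    push_cast
    refine sum_congr rfl fun p _ => ?_
    simp [Finsupp.prod]
  · rw [← prod_pow, ← prod_pow, ← prod_mul_distrib]
    exact prod_congr rfl fun i _ => g_factor i

open PowerSeries in
lemma g_cong (N : ℕ) (G : (ZMod 3)⟦X⟧)
    (hG : G * (∏ k ∈ range N, (1 - X ^ (k + 1))) ^ 2 = (∏ k ∈ range N, (1 + X ^ (k + 1))) ^ 2)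
    (S : (ZMod 3)⟦X⟧)
    (hS : S = 1 + ∑ s ∈ range N, 2 * (-1) ^ (s + 1) * X ^ ((s + 1) ^ 2)) :
    X ^ (N + 1) ∣ G * S ^ 3 - S := by
  have hr : ∀ k, (1 + X ^ k : (ZMod 3)⟦X⟧)⁻¹ * (1 + X ^ k) = 1 := by
    intro k
    apply PowerSeries.inv_mul_cancel
    rcases k with _ | k
    · simp; decide
    · simp
  have hm := g_main (X : (ZMod 3)⟦X⟧) (fun k => (1 + X ^ k)⁻¹) hr N
  rw [← hS, sum_range_succ'] at hm
  set p := gP (X : (ZMod 3)⟦X⟧) (fun k => (1 + X ^ k)⁻¹) N 0 with hp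
  have h0 : gT (X : (ZMod 3)⟦X⟧) (fun k => (1 + X ^ k)⁻¹) N 0 = p := by
    have := hr 0
    simp only [gT, zero_mul, pow_zero, mul_one] at *
    linear_combination p * this
  have h1 : X ^ (N + 1) ∣ S - p := by
    rw [← hm, h0, add_sub_cancel_right]
    refine dvd_sum fun s _ => ?_
    unfold gT
    refine Dvd.dvd.mul_right (Dvd.dvd.mul_left (pow_dvd_pow _ ?_) _) _
    nlinarith
  have h2 : G * p ^ 2 = 1 := by
    have e : p * ∏ k ∈ range N, (1 + X ^ (k + 1)) = ∏ k ∈ range N, (1 - X ^ (k + 1)) := by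
      rw [hp, gP, Nat.Ico_zero_eq_range, ← prod_mul_distrib]
      exact prod_congr rfl fun i _ => by linear_combination (1 - X ^ (i + 1)) * hr (i + 1)
    have hne : (∏ k ∈ range N, (1 + X ^ (k + 1)) : (ZMod 3)⟦X⟧) ≠ 0 := by
      refine prod_ne_zero_iff.2 fun i _ h => ?_
      have := hr (i + 1)
      rw [h] at this; simp at this
    rw [← e] at hG
    apply mul_right_cancel₀ (pow_ne_zero 2 hne)
    linear_combination hG
  have : G * S ^ 3 - S = (S - p) * (G * S * (S + p)) := by linear_combination S * h2
  rw [this]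
  exact h1.mul_right _

open PowerSeries in
lemma g_S2 (N m : ℕ) (hm : m % 3 = 2) :
    coeff m (1 + ∑ s ∈ range N, 2 * (-1) ^ (s + 1) * X ^ ((s + 1) ^ 2) : (ZMod 3)⟦X⟧) = 0 := by
  rw [map_add, map_sum, coeff_one, if_neg (by rintro rfl; simp at hm), zero_add]
  refine sum_eq_zero fun s _ => ?_
  have : (2 * (-1) ^ (s + 1) : (ZMod 3)⟦X⟧) = C (2 * (-1) ^ (s + 1)) := by
    simp only [map_mul, map_pow, map_neg, map_one, map_ofNat]
  rw [this, coeff_C_mul_X_pow, if_neg]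
  rintro rfl
  have h3 : (s + 1) % 3 = 0 ∨ (s + 1) % 3 = 1 ∨ (s + 1) % 3 = 2 := by omega
  rw [Nat.pow_mod] at hm
  rcases h3 with h | h | h <;> simp [h] at hm

open PowerSeries in
lemma g_S3 (N m : ℕ) (hm : ¬ 3 ∣ m) :
    coeff m ((1 + ∑ s ∈ range N, 2 * (-1) ^ (s + 1) * X ^ ((s + 1) ^ 2) : (ZMod 3)⟦X⟧) ^ 3) = 0 := by
  haveI : Fact (Nat.Prime 3) := ⟨Nat.prime_three⟩
  haveI := g_charP
  haveI : ExpChar (ZMod 3)⟦X⟧ 3 := ExpChar.prime Nat.prime_three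
  rw [add_pow_char, sum_pow_char, one_pow, map_add, map_sum, coeff_one,
    if_neg (by rintro rfl; simp at hm), zero_add]
  refine sum_eq_zero fun s _ => ?_
  have : ((2 * (-1) ^ (s + 1) * X ^ ((s + 1) ^ 2)) ^ 3 : (ZMod 3)⟦X⟧)
      = C ((2 * (-1) ^ (s + 1)) ^ 3) * X ^ (3 * (s + 1) ^ 2) := by
    simp only [map_mul, map_pow, map_neg, map_one, map_ofNat]; ring
  rw [this, coeff_C_mul_X_pow, if_neg]
  rintro rfl
  simp at hm

open PowerSeries in
theorem PD_three_n_add_two_congruence (n : ℕ) : 3 ∣ PD (3 * n + 2) := by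
  induction n using Nat.strong_induction_on with
  | _ n ih =>
  obtain ⟨N, G, hN, hc, hG⟩ := g_prod (3 * n + 2)
  have h := g_cong N G hG _ rfl
  rw [X_pow_dvd_iff] at h
  have h := h (3 * n + 2) (by omega)
  rw [map_sub, g_S2 N _ (by omega), sub_zero, coeff_mul,
    Finset.sum_eq_single (3 * n + 2, 0)] at h
  · rw [hc _ le_rfl] at h
    simp at h
    exact (ZMod.natCast_eq_zero_iff _ _).1 h
  · rintro ⟨a, b⟩ hab hne
    rw [HasAntidiagonal.mem_antidiagonal] at hab
    simp only at hab ⊢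
    by_cases hb : 3 ∣ b
    · obtain ⟨c, rfl⟩ := hb
      have hc0 : c ≠ 0 := by
        rintro rfl
        apply hne; simp at hab; simp [hab]
      obtain rfl : a = 3 * (n - c) + 2 := by omega
      rw [hc _ (by omega), (ZMod.natCast_eq_zero_iff _ _).2 (ih (n - c) (by omega)), zero_mul]
    · rw [g_S3 N b hb, mul_zero]
  · intro h; simp at h
end

section
/- For every complex number q with |q| < 1, ∑_{n=0}^∞ PD(3n + 2) q^n = 3 (q^3; q^6)_∞^3 (q^6; q^6)_∞^6 / ((q; q^2)_∞^5 (q^2; q^2)_∞^8). -/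
open Finset

/-- The q-shifted factorial `(a; q)_∞ = ∏_{n=0}^∞ (1 - a qⁿ)`. -/
noncomputable def qPoch (a q : ℂ) : ℂ := ∏' n : ℕ, (1 - a * q ^ n)

open Filter Topology

namespace PDproof

/-- The finite product `(q;q)_n`. -/
noncomputable def pf (q : ℂ) (n : ℕ) : ℂ := ∏ i ∈ range n, (1 - q * q ^ i)

lemma one_sub_ne (q : ℂ) (hq : ‖q‖ < 1) (i : ℕ) : 1 - q * q ^ i ≠ 0 := by
  intro h
  have h1 : q ^ (i + 1) = 1 := by rw [pow_succ']; linear_combination -h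
  have h2 : ‖q‖ ^ (i + 1) = 1 := by rw [← norm_pow, h1, norm_one]
  have h3 := pow_lt_one₀ (norm_nonneg q) hq (Nat.succ_ne_zero i)
  simp only [Nat.succ_eq_add_one] at h3
  linarith

lemma pf_ne (q : ℂ) (hq : ‖q‖ < 1) (n : ℕ) : pf q n ≠ 0 :=
  Finset.prod_ne_zero_iff.2 fun i _ => one_sub_ne q hq i

lemma pf_succ (q : ℂ) (n : ℕ) : pf q (n + 1) = pf q n * (1 - q * q ^ n) :=
  Finset.prod_range_succ _ _

lemma summable_aux (a q : ℂ) (hq : ‖q‖ < 1) : Summable (fun n : ℕ => ‖-(a * q ^ n)‖) := by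
  simp only [norm_neg, norm_mul, norm_pow]
  exact (summable_geometric_of_lt_one (norm_nonneg q) hq).mul_left _

lemma mult (a q : ℂ) (hq : ‖q‖ < 1) : Multipliable (fun n : ℕ => 1 - a * q ^ n) := by
  simpa [sub_eq_add_neg] using multipliable_one_add_of_summable (summable_aux a q hq)

lemma qPoch_ne (q : ℂ) (hq : ‖q‖ < 1) : qPoch q q ≠ 0 := by
  have := tprod_one_add_ne_zero_of_summable (f := fun n : ℕ => -(q * q ^ n))
    (fun i => by rw [← sub_eq_add_neg]; exact one_sub_ne q hq i) (summable_aux q q hq)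
  simpa [qPoch, sub_eq_add_neg] using this

lemma tendsto_qPoch (a q : ℂ) (hq : ‖q‖ < 1) :
    Tendsto (fun n => ∏ i ∈ range n, (1 - a * q ^ i)) atTop (𝓝 (qPoch a q)) :=
  (mult a q hq).hasProd.tendsto_prod_nat

/-- Gaussian binomials. -/
noncomputable def qb (q : ℂ) : ℕ → ℕ → ℂ
  | _, 0 => 1
  | 0, _ + 1 => 0
  | n + 1, j + 1 => qb q n j + q ^ (j + 1) * qb q n (j + 1)

lemma qb_zero (q : ℂ) (n : ℕ) : qb q n 0 = 1 := by cases n <;> rfl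

lemma qb_lt (q : ℂ) (n : ℕ) : ∀ j, n < j → qb q n j = 0 := by
  induction n with
  | zero => intro j hj; obtain ⟨k, rfl⟩ := Nat.exists_eq_add_one_of_ne_zero hj.ne'; rfl
  | succ n ih =>
    intro j hj
    obtain ⟨k, rfl⟩ := Nat.exists_eq_add_one_of_ne_zero (by omega : j ≠ 0)
    simp only [qb]
    rw [ih k (by omega), ih (k + 1) (by omega)]; ring

lemma qb_mul (q : ℂ) (N : ℕ) : ∀ a b, a + b = N → qb q N a * pf q a * pf q b = pf q N := by
  induction N with
  | zero =>
    intro a b h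
    obtain ⟨rfl, rfl⟩ : a = 0 ∧ b = 0 := by omega
    simp [qb, pf]
  | succ N ih =>
    intro a b h
    rcases a with _ | a
    · obtain rfl : b = N + 1 := by omega
      simp [qb, pf]
    · have h1 := ih a b (by omega)
      simp only [qb]
      rcases b with _ | b
      · obtain rfl : a = N := by omega
        rw [qb_lt q a (a + 1) (by omega), pf_succ]
        linear_combination (1 - q * q ^ a) * h1
      · have h2 := ih (a + 1) b (by omega)
        obtain rfl : N = a + b + 1 := by omega
        rw [pf_succ q (a + b + 1)]
        have e1 := pf_succ q a
        have e2 := pf_succ q b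
        rw [e2] at h1 ⊢
        rw [e1] at h2 ⊢
        linear_combination (1 - q * q ^ a) * h1 + q ^ (a + 1) * (1 - q * q ^ b) * h2

lemma qbinom (q : ℂ) (N : ℕ) : ∀ x : ℂ, ∏ k ∈ range N, (1 + x * q ^ k) =
    ∑ j ∈ range (N + 1), q ^ (j.choose 2) * x ^ j * qb q N j := by
  induction N with
  | zero => intro x; simp [qb]
  | succ N ih =>
    intro x
    rw [Finset.prod_range_succ']
    have : ∏ k ∈ range N, (1 + x * q ^ (k + 1)) = ∏ k ∈ range N, (1 + (x * q) * q ^ k) := by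
      refine Finset.prod_congr rfl fun k _ => ?_
      ring
    rw [this, ih]
    rw [Finset.sum_range_succ' _ (N + 1)]
    have e : ∀ j ∈ range (N + 1), q ^ ((j + 1).choose 2) * x ^ (j + 1) * qb q (N + 1) (j + 1)
        = x * (q ^ (j.choose 2) * (x * q) ^ j * qb q N j)
          + q ^ ((j + 1).choose 2) * (x * q) ^ (j + 1) * qb q N (j + 1) := by
      intro j _
      simp only [qb]
      have : (j + 1).choose 2 = j.choose 2 + j := by
        rw [Nat.choose_succ_succ' j 1]; simp [add_comm]
      rw [this]; ring
    rw [Finset.sum_congr rfl e, Finset.sum_add_distrib, ← Finset.mul_sum]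
    have e2 := Finset.sum_range_succ' (fun j => q ^ (j.choose 2) * (x * q) ^ j * qb q N j) (N + 1)
    rw [Finset.sum_range_succ, qb_lt q N (N + 1) (by omega)] at e2
    simp only [qb_zero] at e2 ⊢
    simp at e2 ⊢
    linear_combination e2

lemma summable_nat_aux (w r : ℝ) (hw : 0 < w) (hr : 0 < r) (hr1 : r < 1) :
    Summable (fun n : ℕ => w ^ n * r ^ (n.choose 2)) := by
  refine summable_of_ratio_test_tendsto_lt_one (l := 0) one_pos ?_ ?_
  · exact Eventually.of_forall fun n => by positivity
  · have : ∀ n : ℕ, ‖w ^ (n + 1) * r ^ ((n + 1).choose 2)‖ / ‖w ^ n * r ^ (n.choose 2)‖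
        = w * r ^ n := by
      intro n
      have h : (n + 1).choose 2 = n.choose 2 + n := by
        rw [Nat.choose_succ_succ' n 1]; simp [add_comm]
      rw [Real.norm_of_nonneg (by positivity), Real.norm_of_nonneg (by positivity), h]
      field_simp
      ring
    simp only [this]
    simpa using (tendsto_pow_atTop_nhds_zero_of_lt_one hr.le hr1).const_mul w

lemma tri_nat (n : ℕ) : (n : ℤ) * ((n : ℤ) - 1) / 2 = (n.choose 2 : ℕ) := by
  induction n with
  | zero => simp
  | succ n ih =>
    have h : (n + 1).choose 2 = n.choose 2 + n := by
      rw [Nat.choose_succ_succ' n 1]; simp [add_comm]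
    rw [h]; push_cast
    rw [← ih]
    rw [show ((n : ℤ) + 1) * (n + 1 - 1) = n * (n - 1) + n * 2 by ring]
    omega

lemma tri_two (m : ℤ) : m * (m - 1) / 2 * 2 = m * (m - 1) :=
  Int.ediv_mul_cancel (by simpa [mul_comm] using (Int.even_mul_pred_self m).two_dvd)

/-- the theta term -/
noncomputable def tt (z q : ℂ) (m : ℤ) : ℂ := (-z) ^ m * q ^ (m * (m - 1) / 2)

lemma summable_tt (z q : ℂ) (hz : z ≠ 0) (hq0 : q ≠ 0) (hq : ‖q‖ < 1) :
    Summable (fun m => ‖tt z q m‖) := by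
  have hz' : 0 < ‖z‖ := norm_pos_iff.2 hz
  have hq' : 0 < ‖q‖ := norm_pos_iff.2 hq0
  refine Summable.of_nat_of_neg ?_ ?_
  · refine (summable_nat_aux ‖z‖ ‖q‖ hz' hq' hq).congr fun n => ?_
    simp only [tt, tri_nat, norm_mul, norm_pow, norm_neg, zpow_natCast]
  · refine (summable_nat_aux (‖q‖ / ‖z‖) ‖q‖ (by positivity) hq' hq).congr fun n => ?_
    have : (-(n : ℤ)) * (-n - 1) / 2 = (n.choose 2 : ℕ) + n := by
      have h1 := tri_two n
      have h2 := tri_two (-(n : ℤ))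
      rw [tri_nat] at h1
      have : (n : ℤ) * (n - 1) + 2 * n = -(n : ℤ) * (-n - 1) := by ring
      omega
    simp only [tt, this, norm_mul, norm_zpow, norm_neg]
    rw [zpow_add₀ hq'.ne', zpow_neg, zpow_natCast, zpow_natCast, zpow_natCast, div_pow]
    field_simp

/-- coefficients -/
noncomputable def cc (q : ℂ) (n : ℕ) (m : ℤ) : ℂ :=
  if m ∈ Finset.Icc (-(n : ℤ)) n then qb q (2 * n) (n + m).toNat else 0

lemma sum_succ_choose (n : ℕ) : ∑ k ∈ range n, (k + 1) = (n + 1).choose 2 := by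
  induction n with
  | zero => rfl
  | succ n ih =>
    rw [Finset.sum_range_succ, ih, Nat.choose_succ_succ' (n + 1) 1]; simp [add_comm]

lemma finite_jtp (z q : ℂ) (hz : z ≠ 0) (hq0 : q ≠ 0) (n : ℕ) :
    (∏ k ∈ range n, (1 - z * q ^ k)) * (∏ k ∈ range n, (1 - q / z * q ^ k)) =
      ∑' m : ℤ, cc q n m * tt z q m := by
  have h1 := qbinom q (2 * n) (-z * (q ^ n)⁻¹)
  rw [two_mul, Finset.prod_range_add] at h1
  have h2 : ∏ k ∈ range n, (1 + -z * (q ^ n)⁻¹ * q ^ (n + k)) = ∏ k ∈ range n, (1 - z * q ^ k) := by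
    refine Finset.prod_congr rfl fun k _ => ?_
    rw [pow_add]; field_simp; ring
  have h3 : ∏ k ∈ range n, (1 + -z * (q ^ n)⁻¹ * q ^ k) =
      (-z) ^ n * (q ^ ((n + 1).choose 2))⁻¹ * ∏ k ∈ range n, (1 - q / z * q ^ k) := by
    rw [← Finset.prod_range_reflect]
    have : ∀ k ∈ range n, (1 + -z * (q ^ n)⁻¹ * q ^ (n - 1 - k)) =
        -z * (q ^ (k + 1))⁻¹ * (1 - q / z * q ^ k) := by
      intro k hk
      have hk : k < n := Finset.mem_range.1 hk
      have : q ^ n = q ^ (n - 1 - k) * q ^ (k + 1) := by rw [← pow_add]; congr 1; omega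
      rw [this]; field_simp; ring
    rw [Finset.prod_congr rfl this, Finset.prod_mul_distrib, Finset.prod_mul_distrib,
      Finset.prod_const, Finset.card_range, Finset.prod_inv_distrib, Finset.prod_pow_eq_pow_sum]
    have e : ∑ k ∈ range n, (k + 1) = (n + 1).choose 2 := by
      rw [sum_succ_choose]
    rw [e]
  rw [h2, h3] at h1
  rw [tsum_eq_sum (s := Finset.Icc (-(n : ℤ)) n) (fun m hm => by rw [cc, if_neg hm, zero_mul])]
  have h4 : ∑ m ∈ Finset.Icc (-(n : ℤ)) n, cc q n m * tt z q m =
    ∑ j ∈ range (n + n + 1), (-z) ^ (-(n : ℤ)) * q ^ ((n + 1).choose 2) *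
      (q ^ (j.choose 2) * (-z * (q ^ n)⁻¹) ^ j * qb q (n + n) j) := by
    refine Finset.sum_nbij' (fun m => (n + m).toNat) (fun j => (j : ℤ) - n) ?_ ?_ ?_ ?_ ?_
    · intro m hm; simp at hm ⊢; omega
    · intro m hm; simp at hm ⊢; omega
    · intro m hm; simp at hm ⊢; omega
    · intro m hm; simp at hm ⊢
    · intro m hm
      rw [cc, if_pos hm, two_mul]
      simp at hm
      obtain ⟨j, hj⟩ : ∃ j : ℕ, (n : ℤ) + m = j := ⟨(n + m).toNat, by omega⟩
      obtain rfl : m = j - n := by omega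
      rw [hj, Int.toNat_natCast, tt]
      have e : ((j : ℤ) - n) * (j - n - 1) / 2 = (n + 1).choose 2 + j.choose 2 - n * j := by
        have h1 := tri_two ((j : ℤ) - n)
        have h2 := tri_two j
        have h3 := tri_two (n + 1 : ℕ)
        rw [tri_nat] at h2 h3
        push_cast at h3
        have : ((j : ℤ) - n) * (j - n - 1) = (n + 1) * (n + 1 - 1) + j * (j - 1) - n * j * 2 := by
          ring
        omega
      rw [e, zpow_sub₀ hq0, zpow_add₀ hq0, zpow_sub₀ (neg_ne_zero.2 hz), mul_pow, inv_pow,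
        zpow_neg, ← pow_mul]
      simp only [zpow_natCast]
      norm_cast
      ring
  rw [h4, ← Finset.mul_sum, ← h1, zpow_neg, zpow_natCast]
  have : (-z) ≠ 0 := neg_ne_zero.2 hz
  field_simp

lemma cc_eq (q : ℂ) (hq : ‖q‖ < 1) (n : ℕ) (m : ℤ) (hm : m ∈ Finset.Icc (-(n : ℤ)) n) :
    cc q n m = pf q (2 * n) * (pf q (n + m).toNat)⁻¹ * (pf q (n - m).toNat)⁻¹ := by
  rw [cc, if_pos hm]
  simp at hm
  rw [← qb_mul q (2 * n) (n + m).toNat (n - m).toNat (by omega)]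
  have := pf_ne q hq (n + m).toNat
  have := pf_ne q hq (n - m).toNat
  field_simp

lemma cc_bound (q : ℂ) (hq : ‖q‖ < 1) : ∃ C : ℝ, ∀ n m, ‖cc q n m‖ ≤ C := by
  have h1 : Tendsto (pf q) atTop (𝓝 (qPoch q q)) := tendsto_qPoch q q hq
  have h2 := h1.inv₀ (qPoch_ne q hq)
  obtain ⟨A, hA⟩ := (Metric.isBounded_range_of_tendsto _ h1).exists_norm_le
  obtain ⟨B, hB⟩ := (Metric.isBounded_range_of_tendsto _ h2).exists_norm_le
  have hA' : ∀ n, ‖pf q n‖ ≤ A := fun n => hA _ ⟨n, rfl⟩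
  have hB' : ∀ n, ‖(pf q n)⁻¹‖ ≤ B := fun n => hB _ ⟨n, rfl⟩
  have A0 : 0 ≤ A := (norm_nonneg _).trans (hA' 0)
  have B0 : 0 ≤ B := (norm_nonneg _).trans (hB' 0)
  refine ⟨A * B * B, fun n m => ?_⟩
  by_cases hm : m ∈ Finset.Icc (-(n : ℤ)) n
  · rw [cc_eq q hq n m hm, norm_mul, norm_mul]
    gcongr
    · exact hA' _
    · exact hB' _
    · exact hB' _
  · rw [cc, if_neg hm, norm_zero]; positivity

lemma cc_tendsto (q : ℂ) (hq : ‖q‖ < 1) (m : ℤ) :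
    Tendsto (fun n => cc q n m) atTop (𝓝 (qPoch q q)⁻¹) := by
  have h1 : Tendsto (pf q) atTop (𝓝 (qPoch q q)) := tendsto_qPoch q q hq
  have h2 := h1.inv₀ (qPoch_ne q hq)
  have t1 : Tendsto (fun n : ℕ => 2 * n) atTop atTop :=
    tendsto_atTop_mono (fun n => by simp only [id]; omega) tendsto_id
  have t2 : ∀ m : ℤ, Tendsto (fun n : ℕ => ((n : ℤ) + m).toNat) atTop atTop := by
    intro m
    refine tendsto_atTop.2 fun b => ?_
    filter_upwards [eventually_ge_atTop (b + m.natAbs)] with n hn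
    omega
  have h3 := ((h1.comp t1).mul (h2.comp (t2 m))).mul (h2.comp (t2 (-m)))
  have e : qPoch q q * (qPoch q q)⁻¹ * (qPoch q q)⁻¹ = (qPoch q q)⁻¹ := by
    rw [mul_inv_cancel₀ (qPoch_ne q hq), one_mul]
  rw [e] at h3
  refine h3.congr' ?_
  filter_upwards [eventually_ge_atTop m.natAbs] with n hn
  rw [cc_eq q hq n m (by simp; omega)]
  simp [sub_eq_add_neg]

/-- Jacobi triple product -/
theorem jtp (z q : ℂ) (hz : z ≠ 0) (hq0 : q ≠ 0) (hq : ‖q‖ < 1) :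
    HasSum (tt z q) (qPoch z q * qPoch (q / z) q * qPoch q q) := by
  obtain ⟨C, hC⟩ := cc_bound q hq
  have hs := summable_tt z q hz hq0 hq
  have h1 := tendsto_tsum_of_dominated_convergence (f := fun n m => cc q n m * tt z q m)
    (g := fun m => (qPoch q q)⁻¹ * tt z q m) (𝓕 := atTop) (hs.mul_left C)
    (fun m => (cc_tendsto q hq m).mul_const _)
    (Eventually.of_forall fun n m => by
      rw [norm_mul]; exact mul_le_mul_of_nonneg_right (hC n m) (norm_nonneg _))
  simp only [← finite_jtp z q hz hq0] at h1
  have h2 := tendsto_nhds_unique h1 ((tendsto_qPoch z q hq).mul (tendsto_qPoch (q / z) q hq))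
  rw [tsum_mul_left] at h2
  have h3 : qPoch z q * qPoch (q / z) q * qPoch q q = ∑' m, tt z q m := by
    rw [← h2]; have := qPoch_ne q hq; field_simp
  rw [h3]
  exact hs.of_norm.hasSum

end PDproof
namespace PDproof

lemma norm_pow_lt (q : ℂ) (hq : ‖q‖ < 1) (k : ℕ) (hk : k ≠ 0) : ‖q ^ k‖ < 1 := by
  rw [norm_pow]; exact pow_lt_one₀ (norm_nonneg q) hq hk

lemma qPoch_split (a q : ℂ) (hq : ‖q‖ < 1) (k : ℕ) [NeZero k] :
    qPoch a q = ∏ r ∈ range k, qPoch (a * q ^ r) (q ^ k) := by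
  have hk : k ≠ 0 := NeZero.ne k
  have h1 := mult a q hq
  have h2 := (Nat.divModEquiv k).symm.multipliable_iff.2 h1
  rw [qPoch, ← (Nat.divModEquiv k).symm.tprod_eq]
  refine (h2.tprod_prod' (fun b => (hasProd_fintype _).multipliable)).trans ?_
  simp only [Function.comp, tprod_fintype]
  have h3 : ∀ b : ℕ, ∏ r : Fin k, (1 - a * q ^ ((Nat.divModEquiv k).symm (b, r))) =
      ∏ r ∈ range k, (1 - a * q ^ r * (q ^ k) ^ b) := by
    intro b
    rw [← Fin.prod_univ_eq_prod_range (fun r => 1 - a * q ^ r * (q ^ k) ^ b)]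
    refine Finset.prod_congr rfl fun r _ => ?_
    simp only [Nat.divModEquiv_symm_apply]
    ring
  simp only [h3]
  rw [Multipliable.tprod_finsetProd]
  · rfl
  · intro r _
    exact mult _ _ (norm_pow_lt q hq k hk)

lemma qPoch_neg (a q : ℂ) (hq : ‖q‖ < 1) :
    qPoch a q * qPoch (-a) q = qPoch (a ^ 2) (q ^ 2) := by
  rw [qPoch, qPoch, ← (mult a q hq).tprod_mul (mult (-a) q hq), qPoch]
  refine tprod_congr fun n => ?_
  ring

lemma qPoch_three (w a q : ℂ) (hw : w ^ 2 + w + 1 = 0) (hq : ‖q‖ < 1) :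
    qPoch a q * qPoch (w * a) q * qPoch (w ^ 2 * a) q = qPoch (a ^ 3) (q ^ 3) := by
  rw [qPoch, qPoch, ← (mult a q hq).tprod_mul (mult _ q hq), qPoch,
    ← ((mult a q hq).mul (mult _ q hq)).tprod_mul (mult _ q hq), qPoch]
  refine tprod_congr fun n => ?_
  have hw3 : w ^ 3 = 1 := by linear_combination (w - 1) * hw
  rw [show (q ^ 3) ^ n = (q ^ n) ^ 3 by ring]
  generalize q ^ n = x
  linear_combination (-a * x + a ^ 2 * x ^ 2 * w) * hw - a ^ 3 * x ^ 3 * hw3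

/-- Euler product -/
noncomputable def ee (q : ℂ) : ℂ := qPoch q q

lemma ee_ne (q : ℂ) (hq : ‖q‖ < 1) : ee q ≠ 0 := qPoch_ne q hq

lemma ee_two (q : ℂ) (hq : ‖q‖ < 1) : qPoch q (q ^ 2) * ee (q ^ 2) = ee q := by
  rw [ee, ee, qPoch_split q q hq 2]
  simp [Finset.prod_range_succ, pow_two]

lemma ee_three (q : ℂ) (hq : ‖q‖ < 1) :
    qPoch q (q ^ 3) * qPoch (q ^ 2) (q ^ 3) * ee (q ^ 3) = ee q := by
  rw [ee, ee, qPoch_split q q hq 3]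
  simp [Finset.prod_range_succ, ← pow_succ']

lemma ee_six (q : ℂ) (hq : ‖q‖ < 1) :
    qPoch q (q ^ 6) * qPoch (q ^ 2) (q ^ 6) * qPoch (q ^ 3) (q ^ 6) * qPoch (q ^ 4) (q ^ 6) *
      qPoch (q ^ 5) (q ^ 6) * ee (q ^ 6) = ee q := by
  rw [ee, ee, qPoch_split q q hq 6]
  simp [Finset.prod_range_succ, ← pow_succ']

lemma ee_neg (q : ℂ) (hq : ‖q‖ < 1) : ee q * qPoch (-q) q = ee (q ^ 2) := qPoch_neg q q hq

lemma ee_prod (w u : ℂ) (hw : w ^ 2 + w + 1 = 0) (hu : ‖u‖ < 1) :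
    ee u * ee (w * u) * ee (w ^ 2 * u) * ee (u ^ 9) = ee (u ^ 3) ^ 4 := by
  have hw3 : w ^ 3 = 1 := by linear_combination (w - 1) * hw
  have hwn : ‖w‖ = 1 := by
    have : ‖w‖ ^ 3 = 1 := by rw [← norm_pow, hw3, norm_one]
    exact (pow_eq_one_iff_of_nonneg (norm_nonneg w) (by norm_num)).1 this
  have h1 := ee_three u hu
  have h2 := ee_three (w * u) (by rw [norm_mul, hwn, one_mul]; exact hu)
  have h3 := ee_three (w ^ 2 * u) (by rw [norm_mul, norm_pow, hwn]; simpa using hu)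
  have hu3 := norm_pow_lt u hu 3 (by norm_num)
  have h4 := ee_three (u ^ 3) hu3
  have e1 : (w * u) ^ 3 = u ^ 3 := by rw [mul_pow, hw3, one_mul]
  have e2 : (w ^ 2 * u) ^ 3 = u ^ 3 := by
    rw [mul_pow, ← pow_mul, mul_comm 2 3, pow_mul, hw3]; simp
  have e3 : (w ^ 2 * u) ^ 2 = w * u ^ 2 := by linear_combination (w * u ^ 2) * hw3
  rw [e1, mul_pow] at h2
  rw [e2, e3] at h3
  have h5 := qPoch_three w u (u ^ 3) hw hu3
  have h6 := qPoch_three w (u ^ 2) (u ^ 3) hw hu3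
  rw [show (u ^ 2) ^ 3 = (u ^ 3) ^ 2 by ring] at h6
  rw [← h5, ← h6] at h4
  rw [show (u ^ 3) ^ 3 = u ^ 9 by ring] at h4
  rw [← h1, ← h2, ← h3]
  linear_combination (ee (u ^ 3)) ^ 3 * h4

/-- phi(-q) -/
noncomputable def ph (q : ℂ) : ℂ := ∑' m, tt q (q ^ 2) m
/-- Omega -/
noncomputable def om (q : ℂ) : ℂ := ∑' m, tt q (q ^ 6) m
/-- twice psi -/
noncomputable def ps (q : ℂ) : ℂ := ∑' m, tt (-q) q m
/-- X -/
noncomputable def xx (q : ℂ) : ℂ := ∑' m, tt (-q) (q ^ 3) m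

lemma ph_eq (q : ℂ) (h0 : q ≠ 0) (hq : ‖q‖ < 1) : ph q * ee (q ^ 2) = ee q ^ 2 := by
  rw [ph, (jtp q (q ^ 2) h0 (pow_ne_zero _ h0) (norm_pow_lt q hq 2 (by norm_num))).tsum_eq,
    ← ee_two q hq, show q ^ 2 / q = q by field_simp, ee]
  ring

lemma om_eq (q : ℂ) (h0 : q ≠ 0) (hq : ‖q‖ < 1) :
    om q * ee (q ^ 2) * ee (q ^ 3) = ee q * ee (q ^ 6) ^ 2 := by
  rw [om, (jtp q (q ^ 6) h0 (pow_ne_zero _ h0) (norm_pow_lt q hq 6 (by norm_num))).tsum_eq,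
    ← ee_six q hq, show q ^ 6 / q = q ^ 5 by field_simp,
    ← ee_three (q ^ 2) (norm_pow_lt q hq 2 (by norm_num)),
    ← ee_two (q ^ 3) (norm_pow_lt q hq 3 (by norm_num))]
  simp only [← pow_mul]
  norm_num
  simp only [ee]
  ring

lemma qPoch_neg_one (q : ℂ) (hq : ‖q‖ < 1) : qPoch (-1) q = 2 * qPoch (-q) q := by
  rw [qPoch, tprod_eq_zero_mul', qPoch]
  · norm_num
    refine tprod_congr fun n => ?_
    ring
  · refine (mult (-q) q hq).congr fun n => ?_
    ring

lemma ps_eq (q : ℂ) (h0 : q ≠ 0) (hq : ‖q‖ < 1) : ps q * ee q = 2 * ee (q ^ 2) ^ 2 := by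
  rw [ps, (jtp (-q) q (neg_ne_zero.2 h0) h0 hq).tsum_eq, ← ee_neg q hq,
    show q / -q = -1 by field_simp, qPoch_neg_one q hq, ee]
  ring

lemma xx_eq (q : ℂ) (h0 : q ≠ 0) (hq : ‖q‖ < 1) :
    xx q * ee q * ee (q ^ 6) = ee (q ^ 2) * ee (q ^ 3) ^ 2 := by
  have h3 := norm_pow_lt q hq 3 (by norm_num)
  have e1 := qPoch_neg q (q ^ 3) h3
  have e2 := qPoch_neg (q ^ 2) (q ^ 3) h3
  have e3 := ee_three (q ^ 2) (norm_pow_lt q hq 2 (by norm_num))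
  rw [show (q ^ 2) ^ 3 = (q ^ 3) ^ 2 by ring, ← e1, ← e2, show (q ^ 3) ^ 2 = q ^ 6 by ring] at e3
  rw [xx, (jtp (-q) (q ^ 3) (neg_ne_zero.2 h0) (pow_ne_zero _ h0) h3).tsum_eq, ← ee_three q hq,
    show q ^ 3 / -q = - q ^ 2 by field_simp, ← e3]
  simp only [ee]
  ring

lemma tsum_three (f : ℤ → ℂ) (hf : Summable f) :
    ∑' m, f m = ∑' m, f (3 * m) + ∑' m, f (3 * m + 1) + ∑' m, f (3 * m - 1) := by
  have h2 := (Int.divModEquiv 3).symm.summable_iff.2 hf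
  have h4 : ∀ r : ℤ, Summable (fun m => f (3 * m + r)) := fun r =>
    hf.comp_injective (i := fun m : ℤ => 3 * m + r) (fun a b h => by simpa using h)
  rw [← (Int.divModEquiv 3).symm.tsum_eq]
  refine (h2.tsum_prod).trans ?_
  simp only [Function.comp, tsum_fintype, Int.divModEquiv_symm_apply, Fin.sum_univ_three]
  have h3 : ∀ b : ℤ, f (b * (3 : ℕ) + ((0 : Fin 3) : ℕ)) + f (b * (3 : ℕ) + ((1 : Fin 3) : ℕ)) +
      f (b * (3 : ℕ) + ((2 : Fin 3) : ℕ)) = f (3 * b + 0) + f (3 * b + 1) + f (3 * b + 2) := by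
    intro b
    simp [mul_comm]
  have h5 : ∑' m, f (3 * m - 1) = ∑' m, f (3 * m + 2) := by
    rw [← (Equiv.addRight (1 : ℤ)).tsum_eq]
    refine tsum_congr fun m => ?_
    congr 1
    simp only [Equiv.coe_addRight]; ring
  rw [h5]
  refine (tsum_congr fun b => ?_).trans ((((h4 0).add (h4 1)).tsum_add (h4 2)).trans ?_)
  · convert h3 b using 3
  · rw [(h4 0).tsum_add (h4 1)]
    simp

lemma tt_pow (c q : ℂ) (h0 : q ≠ 0) (a b : ℕ) (m : ℤ) :
    tt (c * q ^ a) (q ^ b) m = (-c) ^ m * q ^ (a * m + b * (m * (m - 1) / 2)) := by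
  rw [tt, ← neg_mul, mul_zpow, zpow_add₀ h0, zpow_mul, zpow_mul, zpow_natCast, zpow_natCast]
  ring

lemma negone_three (m : ℤ) : (-1 : ℂ) ^ (3 * m) = (-1) ^ m := by
  rw [zpow_mul]; norm_num

lemma negone_neg (m : ℤ) : (-1 : ℂ) ^ (-m) = (-1) ^ m := by
  rw [zpow_neg, ← inv_zpow]; norm_num

lemma tsum_neg_int (f : ℤ → ℂ) : ∑' m, f (-m) = ∑' m, f m := (Equiv.neg ℤ).tsum_eq f

lemma ph_dis (u : ℂ) (h0 : u ≠ 0) (hu : ‖u‖ < 1) :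
    ph u = ph ((u ^ 3) ^ 3) - 2 * u * om (u ^ 3) := by
  have h := jtp u (u ^ 2) h0 (pow_ne_zero _ h0) (norm_pow_lt u hu 2 (by norm_num))
  rw [ph, tsum_three _ h.summable]
  have k1 : ∀ m, tt u (u ^ 2) (3 * m) = tt ((u ^ 3) ^ 3) (((u ^ 3) ^ 3) ^ 2) m := by
    intro m
    have := tt_pow 1 u h0 1 2 (3 * m)
    rw [one_mul, pow_one] at this
    rw [this]
    have := tt_pow 1 u h0 9 18 m
    rw [one_mul] at this
    rw [← pow_mul, ← pow_mul, this, negone_three]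
    congr 2
    have := tri_two m
    have := tri_two (3 * m)
    push_cast
    linarith
  have k2 : ∀ m, tt u (u ^ 2) (3 * m - 1) = -u * tt (u ^ 3) ((u ^ 3) ^ 6) m := by
    intro m
    have := tt_pow 1 u h0 1 2 (3 * m - 1)
    rw [one_mul, pow_one] at this
    rw [this]
    have := tt_pow 1 u h0 3 18 m
    rw [one_mul] at this
    rw [← pow_mul, this, zpow_sub₀ (by norm_num), negone_three]
    have e : ((1 : ℕ) : ℤ) * (3 * m - 1) + (2 : ℕ) * ((3 * m - 1) * (3 * m - 1 - 1) / 2) =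
        1 + ((3 : ℕ) * m + (18 : ℕ) * (m * (m - 1) / 2)) := by
      have := tri_two m
      have := tri_two (3 * m - 1)
      push_cast
      linarith
    rw [e, zpow_add₀ h0, zpow_one]
    norm_num
    ring
  have k3 : ∀ m, tt u (u ^ 2) (3 * m + 1) = -u * tt (u ^ 3) ((u ^ 3) ^ 6) (-m) := by
    intro m
    have := tt_pow 1 u h0 1 2 (3 * m + 1)
    rw [one_mul, pow_one] at this
    rw [this]
    have := tt_pow 1 u h0 3 18 (-m)
    rw [one_mul] at this
    rw [← pow_mul, this, zpow_add₀ (by norm_num), negone_three, negone_neg]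
    have e : ((1 : ℕ) : ℤ) * (3 * m + 1) + (2 : ℕ) * ((3 * m + 1) * (3 * m + 1 - 1) / 2) =
        1 + ((3 : ℕ) * -m + (18 : ℕ) * (-m * (-m - 1) / 2)) := by
      have := tri_two (-m)
      have := tri_two (3 * m + 1)
      push_cast
      linarith
    rw [e, zpow_add₀ h0, zpow_one]
    norm_num
    ring
  simp only [k1, k2, k3]
  rw [tsum_mul_left, tsum_mul_left, tsum_neg_int (fun m => tt (u ^ 3) ((u ^ 3) ^ 6) m)]
  rw [ph, om]
  ring

lemma ps_dis (u : ℂ) (h0 : u ≠ 0) (hu : ‖u‖ < 1) :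
    ps u = 2 * xx (u ^ 3) + u * ps ((u ^ 3) ^ 3) := by
  have h := jtp (-u) u (neg_ne_zero.2 h0) h0 hu
  rw [ps, tsum_three _ h.summable]
  have k0 : ∀ m, tt (-u) u m = u ^ (m + (m * (m - 1) / 2)) := by
    intro m
    have := tt_pow (-1) u h0 1 1 m
    simpa using this
  have k1 : ∀ m, tt (-u) u (3 * m + 1) = u * tt (-(u ^ 3) ^ 3) ((u ^ 3) ^ 3) m := by
    intro m
    have := tt_pow (-1) u h0 9 9 m
    rw [neg_one_mul] at this
    rw [← pow_mul, this, k0]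
    norm_num
    rw [← zpow_one_add₀ h0]
    congr 1
    have := tri_two m
    have := tri_two (3 * m + 1)
    rw [show 3 * m + 1 - 1 = 3 * m by ring] at this
    linarith
  have k2 : ∀ m, tt (-u) u (3 * m - 1) = tt (-u ^ 3) ((u ^ 3) ^ 3) m := by
    intro m
    have := tt_pow (-1) u h0 3 9 m
    rw [neg_one_mul] at this
    rw [← pow_mul, this, k0]
    norm_num
    congr 1
    have := tri_two m
    have := tri_two (3 * m - 1)
    linarith
  have k3 : ∀ m, tt (-u) u (3 * m) = tt (-u ^ 3) ((u ^ 3) ^ 3) (-m) := by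
    intro m
    have := tt_pow (-1) u h0 3 9 (-m)
    rw [neg_one_mul] at this
    rw [← pow_mul, this, k0, neg_neg, one_zpow, one_mul]
    congr 1
    have := tri_two (-m)
    have := tri_two (3 * m)
    push_cast
    linarith
  simp only [k1, k2, k3]
  rw [tsum_mul_left, tsum_neg_int (fun m => tt (-u ^ 3) ((u ^ 3) ^ 3) m)]
  rw [ps, xx]
  ring

lemma main_dis (t : ℂ) (h0 : t ≠ 0) (ht : ‖t‖ < 1) : ∃ A C : ℂ,
    A * C = -2 * (ee (t ^ 3) * ee (t ^ 6)) ^ 2 ∧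
    ∀ u : ℂ, ‖u‖ < 1 → u ^ 3 = t →
      ee u * ee (u ^ 2) = A - u * (ee (t ^ 3) * ee (t ^ 6)) + u ^ 2 * C := by
  have n2 := ee_ne _ (norm_pow_lt t ht 2 (by norm_num))
  have n3 := ee_ne _ (norm_pow_lt t ht 3 (by norm_num))
  have n6 := ee_ne _ (norm_pow_lt t ht 6 (by norm_num))
  have n1 := ee_ne _ ht
  have e1 := ph_eq (t ^ 3) (pow_ne_zero _ h0) (norm_pow_lt t ht 3 (by norm_num))
  have e2 := ps_eq (t ^ 3) (pow_ne_zero _ h0) (norm_pow_lt t ht 3 (by norm_num))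
  have e3 := om_eq t h0 ht
  have e4 := xx_eq t h0 ht
  rw [← pow_mul] at e1 e2
  norm_num at e1 e2
  have f1 : ph (t ^ 3) * ps (t ^ 3) = 2 * (ee (t ^ 3) * ee (t ^ 6)) := by
    apply mul_right_cancel₀ (mul_ne_zero n3 n6)
    linear_combination ps (t ^ 3) * ee (t ^ 3) * e1 + ee (t ^ 3) ^ 2 * e2
  have f2 : om t * xx t = ee (t ^ 3) * ee (t ^ 6) := by
    apply mul_right_cancel₀ (mul_ne_zero (mul_ne_zero n2 n3) (mul_ne_zero n1 n6))
    linear_combination xx t * ee t * ee (t ^ 6) * e3 + ee t * ee (t ^ 6) ^ 2 * e4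
  refine ⟨ph (t ^ 3) * xx t, - om t * ps (t ^ 3), ?_, ?_⟩
  · linear_combination -om t * xx t * f1 - 2 * (ee (t ^ 3) * ee (t ^ 6)) * f2
  · rintro u hu rfl
    have hu0 : u ≠ 0 := by rintro rfl; simp at h0
    have g1 := ph_eq u hu0 hu
    have g2 := ps_eq u hu0 hu
    have m1 := ee_ne _ hu
    have m2 := ee_ne _ (norm_pow_lt u hu 2 (by norm_num))
    have g3 : ph u * ps u = 2 * (ee u * ee (u ^ 2)) := by
      apply mul_right_cancel₀ (mul_ne_zero m1 m2)
      linear_combination ps u * ee u * g1 + ee u ^ 2 * g2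
    rw [ph_dis u hu0 hu, ps_dis u hu0 hu] at g3
    linear_combination - g3 / 2 + u / 2 * f1 - 2 * u * f2

end PDproof
namespace PDproof
open PowerSeries
open scoped PowerSeries.WithPiTopology

/-- factor of the generating function -/
noncomputable def fac (i : ℕ) : ℕ⟦X⟧ :=
  1 + ∑' j, (j + 1) • (X : ℕ⟦X⟧) ^ ((i + 1) * (j + 1))

/-- partial products -/
noncomputable def pp (N : ℕ) : ℕ⟦X⟧ := ∏ i ∈ range N, fac i

lemma coeff_tendsto (n : ℕ) : ∀ᶠ N in atTop, (pp N).coeff n = PD n := by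
  have h := Nat.Partition.hasProd_genFun (R := ℕ) (fun _ c => c)
  have h1 := (WithPiTopology.tendsto_iff_coeff_tendsto (R := ℕ) _ _ _).1 h.tendsto_prod_nat n
  rw [nhds_discrete, tendsto_pure] at h1
  filter_upwards [h1] with N hN
  have : (Nat.Partition.genFun (R := ℕ) (fun _ c => c)).coeff n = PD n := by
    rw [Nat.Partition.coeff_genFun, PD]
    refine Finset.sum_congr rfl fun p _ => ?_
    simp [Finsupp.prod]
  rw [← this, ← hN]
  rfl

lemma coeff_mono (n N : ℕ) : (pp N).coeff n ≤ (pp (N + 1)).coeff n := by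
  rw [pp, pp, Finset.prod_range_succ, fac, mul_add, mul_one, map_add]
  exact Nat.le_add_right _ _

lemma coeff_le (n N : ℕ) : (pp N).coeff n ≤ PD n := by
  obtain ⟨M, hM⟩ := (coeff_tendsto n).exists_forall_of_atTop
  have hm : Monotone (fun N => (pp N).coeff n) := monotone_nat_of_le_succ (coeff_mono n)
  calc (pp N).coeff n ≤ (pp (max N M)).coeff n := hm (le_max_left _ _)
    _ = PD n := hM _ (le_max_right _ _)

lemma coeff_fac (i n : ℕ) : (fac i).coeff n =
    (if n = 0 then 1 else 0) + (if (i + 1) ∣ n then n / (i + 1) else 0) := by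
  have hs := Nat.Partition.summable_genFun_term (R := ℕ) (fun _ c => c) i
  rw [fac, map_add, coeff_one]
  congr 1
  refine (hs.map_tsum _ (WithPiTopology.continuous_coeff ℕ n)).trans ?_
  simp only [map_smul, coeff_X_pow, smul_eq_mul, mul_ite, mul_one, mul_zero]
  split_ifs with h
  · obtain ⟨k, rfl⟩ := h
    rw [Nat.mul_div_cancel_left _ (Nat.succ_pos i)]
    rcases k with _ | k
    · simp
    · rw [tsum_eq_single k]
      · simp
      · intro b hb
        rw [if_neg]
        intro h
        have := Nat.eq_of_mul_eq_mul_left (Nat.succ_pos i) h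
        omega
  · refine (tsum_congr fun j => ?_).trans tsum_zero
    rw [if_neg]
    rintro rfl
    exact h ⟨_, rfl⟩

/-- evaluation predicate -/
def Ev (f : ℕ⟦X⟧) (q v : ℂ) : Prop :=
  Summable (fun n => ‖(f.coeff n : ℂ) * q ^ n‖) ∧ HasSum (fun n => (f.coeff n : ℂ) * q ^ n) v

lemma Ev.mul {f g : ℕ⟦X⟧} {q v w : ℂ} (hf : Ev f q v) (hg : Ev g q w) : Ev (f * g) q (v * w) := by
  have e : ∀ n, (((f * g).coeff n : ℕ) : ℂ) * q ^ n = ∑ kl ∈ Finset.HasAntidiagonal.antidiagonal n,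
      ((f.coeff kl.1 : ℂ) * q ^ kl.1) * ((g.coeff kl.2 : ℂ) * q ^ kl.2) := by
    intro n
    rw [PowerSeries.coeff_mul, Nat.cast_sum, Finset.sum_mul]
    refine Finset.sum_congr rfl fun kl hkl => ?_
    rw [← Finset.HasAntidiagonal.mem_antidiagonal.1 hkl]
    push_cast
    ring
  have h1 := summable_norm_sum_mul_antidiagonal_of_summable_norm hf.1 hg.1
  have h2 := tsum_mul_tsum_eq_tsum_sum_antidiagonal_of_summable_norm hf.1 hg.1
  simp only [← e] at h1 h2
  refine ⟨h1, ?_⟩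
  rw [← hf.2.tsum_eq, ← hg.2.tsum_eq, h2]
  exact h1.of_norm.hasSum

lemma Ev.one (q : ℂ) : Ev 1 q 1 := by
  have : HasSum (fun n => ((coeff n (1 : ℕ⟦X⟧) : ℕ) : ℂ) * q ^ n) 1 := by
    have := hasSum_single (f := fun n => ((coeff n (1 : ℕ⟦X⟧) : ℕ) : ℂ) * q ^ n) 0
      (fun n hn => by simp [coeff_one, hn])
    simpa using this
  exact ⟨this.summable.norm, this⟩

lemma fac_ev (i : ℕ) (q : ℂ) (hq : ‖q‖ < 1) :
    Ev (fac i) q (1 + q ^ (i + 1) / (1 - q ^ (i + 1)) ^ 2) := by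
  have hx := norm_pow_lt q hq (i + 1) (Nat.succ_ne_zero i)
  have h1 := hasSum_coe_mul_geometric_of_norm_lt_one hx
  have h2 : HasSum (fun n : ℕ => (if (i + 1) ∣ n then ((n / (i + 1) : ℕ) : ℂ) else 0) * q ^ n)
      (q ^ (i + 1) / (1 - q ^ (i + 1)) ^ 2) := by
    have hinj : Function.Injective (fun k : ℕ => (i + 1) * k) :=
      fun a b h => Nat.eq_of_mul_eq_mul_left (Nat.succ_pos i) h
    rw [← hinj.hasSum_iff]
    · refine h1.congr_fun fun k => ?_
      simp only [Function.comp]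
      rw [if_pos ⟨k, rfl⟩, Nat.mul_div_cancel_left _ (Nat.succ_pos i), pow_mul]
    · intro n hn
      rw [if_neg, zero_mul]
      rintro ⟨k, rfl⟩
      exact hn ⟨k, rfl⟩
  have h3 := (Ev.one q).2.add h2
  have h4 : HasSum (fun n => ((fac i).coeff n : ℂ) * q ^ n)
    (1 + q ^ (i + 1) / (1 - q ^ (i + 1)) ^ 2) := by
    refine h3.congr_fun fun n => ?_
    rw [coeff_fac, coeff_one]
    push_cast
    ring
  exact ⟨h4.summable.norm, h4⟩

lemma pp_ev (N : ℕ) (q : ℂ) (hq : ‖q‖ < 1) :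
    Ev (pp N) q (∏ i ∈ range N, (1 + q ^ (i + 1) / (1 - q ^ (i + 1)) ^ 2)) := by
  induction N with
  | zero => simpa [pp] using Ev.one q
  | succ N ih =>
    rw [pp, Finset.prod_range_succ, Finset.prod_range_succ]
    exact ih.mul (fac_ev N q hq)

lemma fac_value (q : ℂ) (hq : ‖q‖ < 1) (i : ℕ) :
    1 + q ^ (i + 1) / (1 - q ^ (i + 1)) ^ 2 = (1 - q ^ 6 * (q ^ 6) ^ i) *
      ((1 - q * q ^ i) * (1 - q ^ 2 * (q ^ 2) ^ i) * (1 - q ^ 3 * (q ^ 3) ^ i))⁻¹ := by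
  have n1 := one_sub_ne q hq i
  have n2 := one_sub_ne _ (norm_pow_lt q hq 2 (by norm_num)) i
  have n3 := one_sub_ne _ (norm_pow_lt q hq 3 (by norm_num)) i
  simp only [← pow_succ'] at n1 n2 n3 ⊢
  have p2 : (q ^ 2) ^ (i + 1) = (q ^ (i + 1)) ^ 2 := by ring
  have p3 : (q ^ 3) ^ (i + 1) = (q ^ (i + 1)) ^ 3 := by ring
  have p6 : (q ^ 6) ^ (i + 1) = (q ^ (i + 1)) ^ 6 := by ring
  rw [p2] at n2
  rw [p3] at n3
  rw [p2, p3, p6]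
  generalize q ^ (i + 1) = x at *
  field_simp
  ring

lemma prod_tendsto (q : ℂ) (hq : ‖q‖ < 1) :
    Tendsto (fun N => ∏ i ∈ range N, (1 + q ^ (i + 1) / (1 - q ^ (i + 1)) ^ 2)) atTop
      (𝓝 (ee (q ^ 6) * (ee q * ee (q ^ 2) * ee (q ^ 3))⁻¹)) := by
  have m2 := norm_pow_lt q hq 2 (by norm_num)
  have m3 := norm_pow_lt q hq 3 (by norm_num)
  have m6 := norm_pow_lt q hq 6 (by norm_num)
  simp only [fac_value q hq, Finset.prod_mul_distrib, Finset.prod_inv_distrib]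
  refine (tendsto_qPoch _ _ m6).mul (Tendsto.inv₀ (((tendsto_qPoch _ _ hq).mul
    (tendsto_qPoch _ _ m2)).mul (tendsto_qPoch _ _ m3)) ?_)
  exact mul_ne_zero (mul_ne_zero (ee_ne _ hq) (ee_ne _ m2)) (ee_ne _ m3)

lemma summable_PD (r : ℝ) (h0 : 0 ≤ r) (hr : r < 1) : Summable (fun n => (PD n : ℝ) * r ^ n) := by
  have hq : ‖(r : ℂ)‖ < 1 := by simpa [abs_of_nonneg h0] using hr
  obtain ⟨C, hC⟩ := (Metric.isBounded_range_of_tendsto _ (prod_tendsto r hq)).exists_norm_le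
  refine summable_of_sum_range_le (c := C) (fun n => by positivity) fun n => ?_
  have hev : ∀ᶠ N in atTop, ∀ k ∈ range n, (pp N).coeff k = PD k :=
    (Finset.eventually_all _).2 fun k _ => coeff_tendsto k
  obtain ⟨N, hN⟩ := hev.exists
  have h1 := (pp_ev N r hq)
  have h2 := hC _ ⟨N, rfl⟩
  simp only at h2
  have e : ∀ k, ((pp N).coeff k : ℂ) * (r : ℂ) ^ k = (((pp N).coeff k * r ^ k : ℝ) : ℂ) := by
    intro k; push_cast; rfl
  have h3 := h1.1
  have h4 := h1.2.tsum_eq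
  simp only [e] at h3 h4
  rw [← h4, ← Complex.ofReal_tsum, Complex.norm_real] at h2
  have h5 : Summable (fun k => ((pp N).coeff k : ℝ) * r ^ k) := by
    simp only [Complex.norm_real] at h3
    exact h3.of_norm
  calc ∑ k ∈ range n, (PD k : ℝ) * r ^ k = ∑ k ∈ range n, ((pp N).coeff k : ℝ) * r ^ k :=
        Finset.sum_congr rfl fun k hk => by rw [hN k hk]
    _ ≤ ∑' k, ((pp N).coeff k : ℝ) * r ^ k := h5.sum_le_tsum _ fun k _ => by positivity
    _ ≤ C := (le_abs_self _).trans h2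

lemma PD_gen (q : ℂ) (hq : ‖q‖ < 1) : HasSum (fun n => (PD n : ℂ) * q ^ n)
    (ee (q ^ 6) * (ee q * ee (q ^ 2) * ee (q ^ 3))⁻¹) := by
  have hs := summable_PD ‖q‖ (norm_nonneg q) hq
  have h1 := tendsto_tsum_of_dominated_convergence
    (f := fun N n => ((pp N).coeff n : ℂ) * q ^ n)
    (g := fun n => (PD n : ℂ) * q ^ n) (𝓕 := atTop) hs
    (fun n => tendsto_const_nhds.congr' (by
      filter_upwards [coeff_tendsto n] with N hN
      rw [hN]))
    (Eventually.of_forall fun N n => by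
      rw [norm_mul, norm_pow, Complex.norm_natCast]
      gcongr
      exact coeff_le n N)
  simp only [(pp_ev _ q hq).2.tsum_eq] at h1
  rw [tendsto_nhds_unique (prod_tendsto q hq) h1]
  refine Summable.hasSum (Summable.of_norm ?_)
  simpa using hs

/-- the partition 1 + 1 -/
def oneone : Nat.Partition 2 := ⟨{1, 1}, by decide, by decide⟩

/-- the partition 2 -/
def justtwo : Nat.Partition 2 := ⟨{2}, by decide, by decide⟩

lemma PD_two : PD 2 = 3 := by
  have hu : (Finset.univ : Finset (Nat.Partition 2)) = {oneone, justtwo} := by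
    symm
    rw [Finset.eq_univ_iff_forall]
    intro p
    rw [Finset.mem_insert, Finset.mem_singleton]
    by_cases h : 2 ∈ p.parts
    · right
      obtain ⟨t, ht⟩ := Multiset.exists_cons_of_mem h
      have hs := p.parts_sum
      rw [ht, Multiset.sum_cons] at hs
      have ht0 : t = 0 := by
        rw [Multiset.eq_zero_iff_forall_notMem]
        intro a ha
        have h1 := Multiset.le_sum_of_mem ha
        have h2 : 0 < a := p.parts_pos (by rw [ht]; exact Multiset.mem_cons_of_mem ha)
        omega
      apply Nat.Partition.ext
      rw [ht, ht0]
      rfl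
    · left
      have h1 : ∀ a ∈ p.parts, a = 1 := by
        intro a ha
        have h1 := Multiset.le_sum_of_mem ha
        rw [p.parts_sum] at h1
        have h2 : 0 < a := p.parts_pos ha
        have h3 : a ≠ 2 := by rintro rfl; exact h ha
        omega
      have h2 := Multiset.eq_replicate_card.2 h1
      have hs := p.parts_sum
      rw [h2, Multiset.sum_replicate] at hs
      simp at hs
      apply Nat.Partition.ext
      rw [h2, hs]
      rfl
  have hne : oneone ≠ justtwo := by
    intro h
    have := congrArg (fun p => Multiset.card p.parts) h
    simp [oneone, justtwo] at this
  rw [PD, hu, Finset.sum_pair hne]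
  simp [oneone, justtwo]

lemma case_zero : ∑' n : ℕ, (PD (3 * n + 2) : ℂ) * 0 ^ n = 3 := by
  rw [tsum_eq_single 0 (fun n hn => by simp [hn])]
  simp [PD_two]

lemma weights (w : ℂ) (hw : w ^ 2 + w + 1 = 0) (n : ℕ) :
    1 + w ^ (n + 1) + w ^ (2 * n + 2) = if n % 3 = 2 then 3 else 0 := by
  have hw3 : w ^ 3 = 1 := by linear_combination (w - 1) * hw
  obtain ⟨k, r, hr, rfl⟩ : ∃ k r, r < 3 ∧ n = 3 * k + r :=
    ⟨n / 3, n % 3, Nat.mod_lt _ (by norm_num), by omega⟩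
  have e1 : w ^ (3 * k + r + 1) = w ^ (r + 1) := by
    rw [show 3 * k + r + 1 = 3 * k + (r + 1) by ring, pow_add, pow_mul, hw3, one_pow, one_mul]
  have e2 : w ^ (2 * (3 * k + r) + 2) = w ^ (2 * r + 2) := by
    rw [show 2 * (3 * k + r) + 2 = 3 * (2 * k) + (2 * r + 2) by ring, pow_add, pow_mul, hw3,
      one_pow, one_mul]
  rw [e1, e2, Nat.mul_add_mod]
  interval_cases r
  · norm_num; linear_combination hw
  · norm_num; linear_combination hw + w * hw3
  · norm_num; linear_combination (2 + w ^ 3) * hw3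

lemma extract (w u : ℂ) (hw : w ^ 2 + w + 1 = 0) (F : ℂ → ℂ)
    (h1 : HasSum (fun n => (PD n : ℂ) * u ^ n) (F u))
    (h2 : HasSum (fun n => (PD n : ℂ) * (w * u) ^ n) (F (w * u)))
    (h3 : HasSum (fun n => (PD n : ℂ) * (w ^ 2 * u) ^ n) (F (w ^ 2 * u))) :
    3 * u ^ 2 * ∑' n : ℕ, (PD (3 * n + 2) : ℂ) * (u ^ 3) ^ n =
      F u + w * F (w * u) + w ^ 2 * F (w ^ 2 * u) := by
  have h := (h1.add (h2.mul_left w)).add (h3.mul_left (w ^ 2))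
  have h' : HasSum (fun n => (PD n : ℂ) * u ^ n * (if n % 3 = 2 then 3 else 0))
      (F u + w * F (w * u) + w ^ 2 * F (w ^ 2 * u)) := by
    refine h.congr_fun fun n => ?_
    rw [← weights w hw n]
    ring
  have hinj : Function.Injective (fun k : ℕ => 3 * k + 2) := fun a b h => by
    simp only at h; omega
  rw [← hinj.hasSum_iff] at h'
  · rw [← h'.tsum_eq, ← tsum_mul_left]
    refine tsum_congr fun k => ?_
    simp only [Function.comp]
    rw [if_pos (by omega)]
    ring
  · intro n hn
    rw [if_neg, mul_zero]
    intro h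
    exact hn ⟨n / 3, by simp only; omega⟩

end PDproof

open PDproof in
theorem generating_function_PD_three_n_add_two (q : ℂ) (hq : ‖q‖ < 1) :
    ∑' n : ℕ, (PD (3 * n + 2) : ℂ) * q ^ n =
      3 * (qPoch (q ^ 3) (q ^ 6) ^ 3 * qPoch (q ^ 6) (q ^ 6) ^ 6) /
        (qPoch q (q ^ 2) ^ 5 * qPoch (q ^ 2) (q ^ 2) ^ 8) := by
  rcases eq_or_ne q 0 with rfl | h0
  · rw [case_zero]
    simp [qPoch]
  have n1 := ee_ne q hq
  have n2 := ee_ne _ (norm_pow_lt q hq 2 (by norm_num))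
  have n3 := ee_ne _ (norm_pow_lt q hq 3 (by norm_num))
  have n6 := ee_ne _ (norm_pow_lt q hq 6 (by norm_num))
  have r1 : qPoch q (q ^ 2) = ee q / ee (q ^ 2) := by rw [← ee_two q hq]; field_simp
  have r2 : qPoch (q ^ 3) (q ^ 6) = ee (q ^ 3) / ee (q ^ 6) := by
    rw [← ee_two (q ^ 3) (norm_pow_lt q hq 3 (by norm_num)), ← pow_mul]; norm_num; field_simp
  rw [r1, r2, show qPoch (q ^ 6) (q ^ 6) = ee (q ^ 6) from rfl,
    show qPoch (q ^ 2) (q ^ 2) = ee (q ^ 2) from rfl]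
  obtain ⟨A, C, hAC, hG⟩ := main_dis q h0 hq
  obtain ⟨u, hu⟩ := IsAlgClosed.exists_pow_nat_eq q (n := 3) (by norm_num)
  obtain ⟨s, hs⟩ := IsAlgClosed.exists_pow_nat_eq (-3 : ℂ) (n := 2) (by norm_num)
  obtain ⟨w, hw⟩ : ∃ w : ℂ, w ^ 2 + w + 1 = 0 := ⟨(-1 + s) / 2, by linear_combination hs / 4⟩
  have hw3 : w ^ 3 = 1 := by linear_combination (w - 1) * hw
  have hwn : ‖w‖ = 1 := by
    have : ‖w‖ ^ 3 = 1 := by rw [← norm_pow, hw3, norm_one]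
    exact (pow_eq_one_iff_of_nonneg (norm_nonneg w) (by norm_num)).1 this
  have u1 : ‖u‖ < 1 := by
    rw [← hu, norm_pow] at hq
    exact (pow_lt_one_iff_of_nonneg (norm_nonneg u) (by norm_num)).1 hq
  have u2 : ‖w * u‖ < 1 := by rw [norm_mul, hwn, one_mul]; exact u1
  have u3 : ‖w ^ 2 * u‖ < 1 := by rw [norm_mul, norm_pow, hwn]; simpa using u1
  have hu0 : u ≠ 0 := by rintro rfl; simp at hu; exact h0 hu.symm
  have c2 : (w * u) ^ 3 = q := by rw [mul_pow, hw3, one_mul, hu]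
  have c3 : (w ^ 2 * u) ^ 3 = q := by
    rw [mul_pow, ← pow_mul, mul_comm 2 3, pow_mul, hw3, hu]; simp
  have hF : ∀ v : ℂ, ‖v‖ < 1 → v ^ 3 = q → HasSum (fun n => (PD n : ℂ) * v ^ n)
      ((fun v => ee (q ^ 2) / ee q * (ee v * ee (v ^ 2))⁻¹) v) := by
    intro v hv hvq
    have := PD_gen v hv
    rw [show v ^ 6 = (v ^ 3) ^ 2 by ring, hvq] at this
    convert this using 1
    simp only [mul_inv]
    ring
  have key := extract w u hw
    (fun v => ee (q ^ 2) / ee q * (ee v * ee (v ^ 2))⁻¹) (hF u u1 hu) (hF _ u2 c2) (hF _ u3 c3)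
  rw [hu] at key
  have g1 := hG u u1 hu
  have g2 := hG _ u2 c2
  have g3 := hG _ u3 c3
  have p1 := ee_prod w u hw u1
  have p2 := ee_prod (w ^ 2) (u ^ 2) (by linear_combination hw + w * hw3)
    (norm_pow_lt u u1 2 (by norm_num))
  rw [hu, show u ^ 9 = (u ^ 3) ^ 3 by ring, hu] at p1
  rw [show (u ^ 2) ^ 3 = (u ^ 3) ^ 2 by ring, show (u ^ 2) ^ 9 = (u ^ 3) ^ 6 by ring, hu,
    ← mul_pow, ← mul_pow] at p2
  have m1 := mul_ne_zero (ee_ne _ u1) (ee_ne _ (norm_pow_lt u u1 2 (by norm_num)))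
  have m2 := mul_ne_zero (ee_ne _ u2) (ee_ne _ (norm_pow_lt _ u2 2 (by norm_num)))
  have m3 := mul_ne_zero (ee_ne _ u3) (ee_ne _ (norm_pow_lt _ u3 2 (by norm_num)))
  have pr : (ee u * ee (u ^ 2)) * (ee (w * u) * ee ((w * u) ^ 2)) *
      (ee (w ^ 2 * u) * ee ((w ^ 2 * u) ^ 2)) * (ee (q ^ 3) * ee (q ^ 6)) =
      ee q ^ 4 * ee (q ^ 2) ^ 4 := by
    rw [← p1, ← p2]; ring
  generalize (ee u * ee (u ^ 2)) = G1 at *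
  generalize (ee (w * u) * ee ((w * u) ^ 2)) = G2 at *
  generalize (ee (w ^ 2 * u) * ee ((w ^ 2 * u) ^ 2)) = G3 at *
  generalize (∑' n : ℕ, (PD (3 * n + 2) : ℂ) * q ^ n) = S at *
  have num : G2 * G3 + w * (G1 * G3) + w ^ 2 * (G1 * G2) =
      9 * u ^ 2 * (ee (q ^ 3) * ee (q ^ 6)) ^ 2 := by
    have : G2 * G3 + w * (G1 * G3) + w ^ 2 * (G1 * G2) =
      3 * u ^ 2 * ((ee (q ^ 3) * ee (q ^ 6)) ^ 2 - A * C) := by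
      rw [g1, g2, g3]
      generalize ee (q ^ 3) * ee (q ^ 6) = B
      clear * - hw
      grind
    rw [this, hAC]; ring
  have key2 : S * (G1 * G2 * G3) = 3 * (ee (q ^ 2) / ee q) * (ee (q ^ 3) * ee (q ^ 6)) ^ 2 := by
    apply mul_left_cancel₀ (mul_ne_zero three_ne_zero (pow_ne_zero 2 hu0))
    rw [← mul_assoc, key]
    have : ee (q ^ 2) / ee q * G1⁻¹ + w * (ee (q ^ 2) / ee q * G2⁻¹) +
        w ^ 2 * (ee (q ^ 2) / ee q * G3⁻¹) = ee (q ^ 2) / ee q *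
        (G2 * G3 + w * (G1 * G3) + w ^ 2 * (G1 * G2)) * (G1 * G2 * G3)⁻¹ := by
      field_simp
    rw [this, num, mul_assoc, inv_mul_cancel₀ (mul_ne_zero (mul_ne_zero m1 m2) m3)]
    ring
  have key3 : S * (ee q ^ 4 * ee (q ^ 2) ^ 4) =
      3 * (ee (q ^ 2) / ee q) * (ee (q ^ 3) * ee (q ^ 6)) ^ 3 := by
    rw [← pr]
    linear_combination (ee (q ^ 3) * ee (q ^ 6)) * key2
  have key4 : S = 3 * (ee (q ^ 2) / ee q) * (ee (q ^ 3) * ee (q ^ 6)) ^ 3 /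
      (ee q ^ 4 * ee (q ^ 2) ^ 4) := by
    rw [← key3]; field_simp
  rw [key4]
  field_simp
end

section
/- For every complex number q with |q| < 1, ∑_{n=0}^∞ PD(3n) q^n = 1/((q; q^6)_∞^5 (q^3; q^6)_∞^2 (q^5; q^6)_∞^5) · ( (q^4; q^4)_∞^6 (q^6; q^6)_∞^4 / ((q^2; q^2)_∞^{10} (q^{12}; q^{12})_∞^2) + 3 q^2 (q^{12}; q^{12})_∞^6 / ((q^2; q^2)_∞^6 (q^4; q^4)_∞^2) ). -/
open Finset

open Filter Topology

/-! ### Basic facts on `qPoch` -/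

lemma summable_qPoch (a : ℂ) {q : ℂ} (hq : ‖q‖ < 1) : Summable fun n : ℕ => ‖-(a * q ^ n)‖ := by
  simp only [norm_neg, norm_mul, norm_pow]
  exact (summable_geometric_of_lt_one (norm_nonneg _) hq).mul_left _

lemma multipliable_qPoch (a : ℂ) {q : ℂ} (hq : ‖q‖ < 1) :
    Multipliable fun n : ℕ => (1 - a * q ^ n) := by
  simpa [sub_eq_add_neg] using multipliable_one_add_of_summable (summable_qPoch a hq)

lemma hasProd_qPoch (a : ℂ) {q : ℂ} (hq : ‖q‖ < 1) :
    HasProd (fun n : ℕ => (1 - a * q ^ n)) (qPoch a q) := (multipliable_qPoch a hq).hasProd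

lemma tendsto_qPoch (a : ℂ) {q : ℂ} (hq : ‖q‖ < 1) :
    Tendsto (fun N : ℕ => ∏ n ∈ range N, (1 - a * q ^ n)) atTop (𝓝 (qPoch a q)) :=
  (hasProd_qPoch a hq).tendsto_prod_nat

lemma one_sub_ne_zero {x : ℂ} (h : ‖x‖ < 1) : 1 - x ≠ 0 := by
  intro h0
  have : x = 1 := by linear_combination -h0
  rw [this] at h
  simp at h

lemma qPoch_ne_zero {a q : ℂ} (ha : ‖a‖ < 1) (hq : ‖q‖ < 1) : qPoch a q ≠ 0 := by
  have := tprod_one_add_ne_zero_of_summable (f := fun n : ℕ => -(a * q ^ n)) ?_ (summable_qPoch a hq)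
  · simpa [qPoch, sub_eq_add_neg] using this
  · intro i
    rw [← sub_eq_add_neg]
    apply one_sub_ne_zero
    rw [norm_mul, norm_pow]
    calc ‖a‖ * ‖q‖ ^ i ≤ ‖a‖ * 1 := by
          gcongr
          exact pow_le_one₀ (norm_nonneg _) hq.le
      _ < 1 := by simpa using ha

lemma norm_pow_lt {q : ℂ} (hq : ‖q‖ < 1) {m : ℕ} (hm : m ≠ 0) : ‖q ^ m‖ < 1 := by
  rw [norm_pow]; exact pow_lt_one₀ (norm_nonneg _) hq hm

lemma qPoch_split (a : ℂ) {q : ℂ} (hq : ‖q‖ < 1) (m : ℕ) (hm : m ≠ 0) :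
    qPoch a q = ∏ r ∈ range m, qPoch (a * q ^ r) (q ^ m) := by
  have h1 : Tendsto (fun N : ℕ => ∏ n ∈ range (m * N), (1 - a * q ^ n)) atTop (𝓝 (qPoch a q)) :=
    (tendsto_qPoch a hq).comp (tendsto_id.const_mul_atTop' (Nat.pos_of_ne_zero hm))
  have h2 : Tendsto (fun N : ℕ => ∏ r ∈ range m, ∏ n ∈ range N, (1 - (a * q ^ r) * (q ^ m) ^ n))
      atTop (𝓝 (∏ r ∈ range m, qPoch (a * q ^ r) (q ^ m))) :=
    tendsto_finsetProd _ fun r _ => tendsto_qPoch _ (norm_pow_lt hq hm)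
  refine tendsto_nhds_unique h1 (h2.congr fun N => ?_)
  rw [Finset.prod_comm]
  induction N with
  | zero => simp
  | succ N ih =>
    rw [Finset.prod_range_succ, ih, Nat.mul_succ, Finset.prod_range_add]
    congr 1
    refine Finset.prod_congr rfl fun r _ => ?_
    rw [← pow_mul, pow_add]; ring

lemma qPoch_split2 (a : ℂ) {q : ℂ} (hq : ‖q‖ < 1) :
    qPoch a q = qPoch a (q ^ 2) * qPoch (a * q) (q ^ 2) := by
  rw [qPoch_split a hq 2 two_ne_zero]; simp [Finset.prod_range_succ]

lemma qPoch_split3 (a : ℂ) {q : ℂ} (hq : ‖q‖ < 1) :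
    qPoch a q = qPoch a (q ^ 3) * qPoch (a * q) (q ^ 3) * qPoch (a * q ^ 2) (q ^ 3) := by
  rw [qPoch_split a hq 3 three_ne_zero]; simp [Finset.prod_range_succ]

lemma qPoch_pair (a : ℂ) {q : ℂ} (hq : ‖q‖ < 1) :
    qPoch a q * qPoch (-a) q = qPoch (a ^ 2) (q ^ 2) := by
  refine ((hasProd_qPoch a hq).mul (hasProd_qPoch (-a) hq)).unique
    ((hasProd_qPoch (a ^ 2) (norm_pow_lt hq two_ne_zero)).congr_fun ?_)
  intro n
  ring

lemma qPoch_cube (w a : ℂ) {q : ℂ} (hw : 1 + w + w ^ 2 = 0) (hq : ‖q‖ < 1) :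
    qPoch a q * qPoch (w * a) q * qPoch (w ^ 2 * a) q = qPoch (a ^ 3) (q ^ 3) := by
  refine (((hasProd_qPoch a hq).mul (hasProd_qPoch (w * a) hq)).mul
    (hasProd_qPoch (w ^ 2 * a) hq)).unique
    ((hasProd_qPoch (a ^ 3) (norm_pow_lt hq three_ne_zero)).congr_fun ?_)
  intro n
  have h3 : w ^ 3 = 1 := by linear_combination (w - 1) * hw
  have e : (1 - a * q ^ n) * (1 - w * a * q ^ n) * (1 - w ^ 2 * a * q ^ n) =
    1 - (1 + w + w ^ 2) * (a * q ^ n) + w * (1 + w + w ^ 2) * (a * q ^ n) ^ 2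
      - w ^ 3 * (a * q ^ n) ^ 3 := by ring
  rw [e, hw, h3]; ring

lemma qPoch_step (a : ℂ) {q : ℂ} (hq : ‖q‖ < 1) :
    qPoch a q = (1 - a) * qPoch (a * q) q := by
  refine tendsto_nhds_unique ((tendsto_qPoch a hq).comp (tendsto_add_atTop_nat 1))
    (((tendsto_qPoch (a * q) hq).const_mul (1 - a)).congr fun N => ?_)
  simp only [Function.comp]
  rw [Finset.prod_range_succ']
  simp only [pow_zero, mul_one]
  rw [mul_comm]
  congr 1
  refine Finset.prod_congr rfl fun r _ => ?_
  ring

/-! ### The Jacobi triple product -/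

/-- triangular numbers -/
def tri (n : ℤ) : ℤ := n * (n - 1) / 2

lemma two_tri (n : ℤ) : 2 * tri n = n * (n - 1) := by
  unfold tri
  apply Int.mul_ediv_cancel'
  exact (Int.even_mul_pred_self n).two_dvd

/-- General term of the theta series. -/
noncomputable def Jt (z q : ℂ) (n : ℤ) : ℂ := (-z) ^ n * q ^ tri n

/-- Theta series. -/
noncomputable def J (z q : ℂ) : ℂ := ∑' n : ℤ, Jt z q n

lemma summable_half (w : ℂ) {q : ℂ} (hw : w ≠ 0) (hq0 : q ≠ 0) (hq : ‖q‖ < 1) :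
    Summable fun n : ℕ => Jt w q n := by
  have hne : ∀ n : ℤ, Jt w q n ≠ 0 := fun n =>
    mul_ne_zero (zpow_ne_zero _ (neg_ne_zero.2 hw)) (zpow_ne_zero _ hq0)
  refine summable_of_ratio_test_tendsto_lt_one (l := 0) zero_lt_one
    (Eventually.of_forall fun n => hne n) ?_
  have h : Tendsto (fun n : ℕ => ‖w‖ * ‖q‖ ^ n) atTop (𝓝 (‖w‖ * 0)) :=
    (tendsto_pow_atTop_nhds_zero_of_lt_one (norm_nonneg _) hq).const_mul _
  rw [mul_zero] at h
  refine h.congr fun n => ?_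
  have e : Jt w q ((n + 1 : ℕ) : ℤ) = (-w * q ^ n) * Jt w q n := by
    have ht : tri ((n + 1 : ℕ) : ℤ) = tri n + n := by
      have h1 := two_tri ((n + 1 : ℕ) : ℤ)
      have h2 := two_tri n
      push_cast at *
      nlinarith
    unfold Jt
    rw [ht, zpow_add₀ hq0]
    push_cast
    rw [zpow_add_one₀ (neg_ne_zero.2 hw)]
    simp only [zpow_natCast]
    ring
  rw [e, norm_mul, mul_div_assoc, div_self (norm_ne_zero_iff.2 (hne _))]
  simp

lemma Jt_symm (z q : ℂ) (hq0 : q ≠ 0) (n : ℤ) : Jt z q (-n) = Jt (q / z) q n := by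
  unfold Jt
  have ht : tri (-n) = tri n + n := by
    have h1 := two_tri (-n)
    have h2 := two_tri n
    linarith
  rw [ht, zpow_add₀ hq0, show -(q / z) = q * (-z)⁻¹ by rw [inv_neg]; ring, mul_zpow, inv_zpow,
    zpow_neg]
  ring

lemma summable_Jt (z : ℂ) {q : ℂ} (hz : z ≠ 0) (hq0 : q ≠ 0) (hq : ‖q‖ < 1) :
    Summable fun n : ℤ => Jt z q n := by
  refine Summable.of_nat_of_neg (summable_half z hz hq0 hq) ?_
  simp only [Jt_symm z q hq0]
  exact summable_half _ (div_ne_zero hq0 hz) hq0 hq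

/-- finite product -/
noncomputable def PP (q : ℂ) (n : ℕ) : ℂ := ∏ i ∈ range n, (1 - q * q ^ i)

lemma PP_ne_zero {q : ℂ} (hq : ‖q‖ < 1) (n : ℕ) : PP q n ≠ 0 := by
  refine Finset.prod_ne_zero_iff.2 fun i _ => ?_
  rw [← pow_succ']
  exact one_sub_ne_zero (norm_pow_lt hq (Nat.succ_ne_zero _))

lemma PP_succ (q : ℂ) (n : ℕ) : PP q (n + 1) = PP q n * (1 - q ^ (n + 1)) := by
  rw [PP, Finset.prod_range_succ, ← pow_succ']; rfl

/-- Gaussian binomial -/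
noncomputable def gb (q : ℂ) (M j : ℕ) : ℂ := if j ≤ M then PP q M / (PP q j * PP q (M - j)) else 0

lemma gb_zero {q : ℂ} (hq : ‖q‖ < 1) (M : ℕ) : gb q M 0 = 1 := by
  have := PP_ne_zero hq M
  have h0 : PP q 0 = 1 := by simp [PP]
  rw [gb, if_pos (Nat.zero_le _), h0, one_mul, Nat.sub_zero, div_self this]

lemma gb_pascal {q : ℂ} (hq : ‖q‖ < 1) (M j : ℕ) (hj : j ≤ M) :
    gb q (M + 1) (j + 1) = gb q M (j + 1) + q ^ (M - j) * gb q M j := by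
  obtain ⟨d, rfl⟩ := Nat.exists_eq_add_of_le hj
  unfold gb
  have h0 := PP_ne_zero hq
  have h1 : ∀ n : ℕ, 1 - q ^ (n + 1) ≠ 0 := fun n =>
    one_sub_ne_zero (norm_pow_lt hq (Nat.succ_ne_zero _))
  have hjj := h0 j
  have hd := h0 d
  have hj1 := h1 j
  rw [if_pos (show j + 1 ≤ j + d + 1 by omega), if_pos (show j ≤ j + d by omega)]
  rw [show j + d + 1 - (j + 1) = d by omega, show j + d - j = d by omega, PP_succ, PP_succ]
  rcases d with _ | d
  · rw [if_neg (show ¬ (j + 1 ≤ j + 0) by omega)]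
    simp only [add_zero, pow_zero]
    field_simp
    simp
  · rw [if_pos (show j + 1 ≤ j + (d + 1) by omega), show j + (d + 1) - (j + 1) = d by omega, PP_succ q d]
    have hd1 := h1 d
    have hd2 := h0 d
    field_simp
    ring

lemma qbinom {q : ℂ} (hq : ‖q‖ < 1) (x : ℂ) (M : ℕ) :
    ∏ k ∈ range M, (1 + x * q ^ k) =
      ∑ j ∈ range (M + 1), q ^ (j.choose 2) * gb q M j * x ^ j := by
  induction M with
  | zero => simp [gb_zero hq]
  | succ M ih =>
    rw [Finset.prod_range_succ, ih, Finset.sum_range_succ' _ (M + 1)]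
    have h1 : ∀ j ∈ range (M + 1), q ^ ((j + 1).choose 2) * gb q (M + 1) (j + 1) * x ^ (j + 1) =
        q ^ ((j + 1).choose 2) * gb q M (j + 1) * x ^ (j + 1) +
          (q ^ (j.choose 2) * gb q M j * x ^ j) * (x * q ^ M) := by
      intro j hj
      have hj' : j ≤ M := by simpa [Nat.lt_succ_iff] using hj
      rw [gb_pascal hq M j hj', Nat.choose_succ_succ' j 1, Nat.choose_one_right]
      have : q ^ M = q ^ j * q ^ (M - j) := by rw [← pow_add]; congr 1; omega
      rw [this]; ring
    rw [Finset.sum_congr rfl h1, Finset.sum_add_distrib, ← Finset.sum_mul]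
    have h2 : ∑ j ∈ range (M + 1), q ^ (j.choose 2) * gb q M j * x ^ j =
      ∑ j ∈ range (M + 1), q ^ ((j + 1).choose 2) * gb q M (j + 1) * x ^ (j + 1) + 1 := by
      have : ∑ j ∈ range (M + 1 + 1), q ^ (j.choose 2) * gb q M j * x ^ j =
          ∑ j ∈ range (M + 1), q ^ (j.choose 2) * gb q M j * x ^ j := by
        rw [Finset.sum_range_succ]
        simp [gb]
      rw [← this, Finset.sum_range_succ']
      simp [gb_zero hq]
    rw [gb_zero hq, mul_add, mul_one]
    nth_rewrite 1 [h2]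
    simp
    ring

lemma finite_left (z : ℂ) {q : ℂ} (hz : z ≠ 0) (hq0 : q ≠ 0) (N : ℕ) :
    ∏ k ∈ range N, (1 + -z / q ^ N * q ^ k) =
      (-z) ^ N * q ^ (-tri (N + 1)) * ∏ k ∈ range N, (1 - q / z * q ^ k) := by
  rw [← Finset.prod_range_reflect]
  have h : ∀ j ∈ range N, 1 + -z / q ^ N * q ^ (N - 1 - j) =
      (-z) * (q ^ (j + 1))⁻¹ * (1 - q / z * q ^ j) := by
    intro j hj
    have hj' : j < N := by simpa using hj
    have : q ^ N = q ^ (N - 1 - j) * q ^ (j + 1) := by rw [← pow_add]; congr 1; omega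
    rw [this]
    have : q ^ (N - 1 - j) ≠ 0 := pow_ne_zero _ hq0
    field_simp
    ring
  rw [Finset.prod_congr rfl h, Finset.prod_mul_distrib]
  congr 1
  induction N with
  | zero => simp [tri]
  | succ N ih =>
    rw [Finset.prod_range_succ]
    have ih' : ∏ x ∈ range N, -z * (q ^ (x + 1))⁻¹ = (-z) ^ N * q ^ (-tri (↑N + 1)) := by
      clear ih h
      induction N with
      | zero => simp [tri]
      | succ N ih =>
        rw [Finset.prod_range_succ, ih]
        have ht : -tri ((N + 1 : ℕ) + 1) = -tri (N + 1) + -((N + 1 : ℕ) : ℤ) := by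
          have h1 := two_tri ((N + 1 : ℕ) + 1)
          have h2 := two_tri (N + 1)
          push_cast at *
          nlinarith
        rw [ht, zpow_add₀ hq0, zpow_neg q ((N + 1 : ℕ) : ℤ), zpow_natCast]
        ring
    rw [ih']
    have ht : -tri ((N + 1 : ℕ) + 1) = -tri (N + 1) + -((N + 1 : ℕ) : ℤ) := by
      have h1 := two_tri ((N + 1 : ℕ) + 1)
      have h2 := two_tri (N + 1)
      push_cast at *
      nlinarith
    rw [ht, zpow_add₀ hq0, zpow_neg q ((N + 1 : ℕ) : ℤ), zpow_natCast]
    ring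

/-- Coefficient in the finite triple product. -/
noncomputable def gc (q : ℂ) (N : ℕ) (n : ℤ) : ℂ :=
  if -(N : ℤ) ≤ n then gb q (N + N) (n + N).toNat else 0

lemma finite_jtp (z : ℂ) {q : ℂ} (hz : z ≠ 0) (hq0 : q ≠ 0) (hq : ‖q‖ < 1) (N : ℕ) :
    (∏ k ∈ range N, (1 - z * q ^ k)) * ∏ k ∈ range N, (1 - q / z * q ^ k) =
      ∑' n : ℤ, gc q N n * Jt z q n := by
  have h := qbinom hq (-z / q ^ N) (N + N)
  rw [Finset.prod_range_add, finite_left z hz hq0] at h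
  have h1 : ∏ x ∈ range N, (1 + -z / q ^ N * q ^ (N + x)) = ∏ k ∈ range N, (1 - z * q ^ k) := by
    refine Finset.prod_congr rfl fun k _ => ?_
    rw [pow_add]
    field_simp
    ring
  rw [h1] at h
  have hne : (-z) ^ N * q ^ (-tri (N + 1)) ≠ 0 :=
    mul_ne_zero (pow_ne_zero _ (neg_ne_zero.2 hz)) (zpow_ne_zero _ hq0)
  apply mul_left_cancel₀ hne
  rw [tsum_eq_sum (s := (range (N + N + 1)).map
    ⟨fun j : ℕ => (j : ℤ) - N, fun a b hab => by simpa using hab⟩)]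
  · rw [Finset.sum_map, Finset.mul_sum]
    calc _ = ∑ j ∈ range (N + N + 1), q ^ j.choose 2 * gb q (N + N) j * (-z / q ^ N) ^ j := by
          rw [← h]; ring
      _ = _ := by
        refine Finset.sum_congr rfl fun j hj => ?_
        change _ = _ * (gc q N ((j : ℤ) - N) * Jt z q ((j : ℤ) - N))
        have e1 : gc q N ((j : ℤ) - N) = gb q (N + N) j := by
          unfold gc; rw [if_pos (by omega)]; simp
        rw [e1]
        unfold Jt
        have e2 : tri ((j : ℤ) - N) = (j.choose 2 : ℕ) + (-(N * j : ℕ) : ℤ) + tri (N + 1) := by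
          have a1 := two_tri ((j : ℤ) - N)
          have a2 := two_tri ((N : ℤ) + 1)
          have a3 : 2 * ((j.choose 2 : ℕ) : ℤ) = j * (j - 1) := by
            rw [← two_tri, tri]
            rcases j with _ | j
            · simp
            · rw [Nat.choose_two_right]; push_cast; simp
          push_cast at *
          nlinarith
        rw [e2, zpow_add₀ hq0, zpow_add₀ hq0, zpow_neg, zpow_neg, zpow_sub₀ (neg_ne_zero.2 hz)]
        simp only [zpow_natCast]
        rw [div_pow, ← pow_mul]
        have := zpow_ne_zero (tri (N + 1)) hq0
        have h3 : (-z) ^ N ≠ 0 := pow_ne_zero _ (neg_ne_zero.2 hz)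
        field_simp
  · intro n hn
    have : gc q N n = 0 := by
      unfold gc
      split_ifs with h0
      · unfold gb
        rw [if_neg]
        intro h4
        apply hn
        rw [Finset.mem_map]
        refine ⟨(n + N).toNat, Finset.mem_range.2 (by omega), ?_⟩
        change (((n + N).toNat : ℕ) : ℤ) - N = n
        omega
      · rfl
    rw [this, zero_mul]

lemma PP_tendsto {q : ℂ} (hq : ‖q‖ < 1) : Tendsto (PP q) atTop (𝓝 (qPoch q q)) :=
  tendsto_qPoch q hq

theorem jtp (z : ℂ) {q : ℂ} (hz : z ≠ 0) (hq0 : q ≠ 0) (hq : ‖q‖ < 1) :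
    J z q = qPoch z q * qPoch (q / z) q * qPoch q q := by
  have hE := qPoch_ne_zero hq hq
  have hP := PP_tendsto hq
  have hPi := hP.inv₀ hE
  obtain ⟨C, hC⟩ := (Metric.isBounded_range_of_tendsto _ hP).exists_norm_le
  obtain ⟨D, hD⟩ := (Metric.isBounded_range_of_tendsto _ hPi).exists_norm_le
  have hC' : ∀ n, ‖PP q n‖ ≤ C := fun n => hC _ ⟨n, rfl⟩
  have hD' : ∀ n, ‖(PP q n)⁻¹‖ ≤ D := fun n => hD _ ⟨n, rfl⟩
  have hC0 : 0 ≤ C := (norm_nonneg _).trans (hC' 0)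
  have hD0 : 0 ≤ D := (norm_nonneg _).trans (hD' 0)
  have hbd : ∀ M j, ‖gb q M j‖ ≤ C * (D * D) := by
    intro M j
    unfold gb
    split_ifs
    · rw [div_eq_mul_inv, mul_inv, norm_mul, norm_mul]
      gcongr
      · exact hC' _
      · exact hD' _
      · exact hD' _
    · simp; positivity
  have lim : Tendsto (fun N => ∑' n : ℤ, gc q N n * Jt z q n) atTop
      (𝓝 (∑' n : ℤ, (qPoch q q)⁻¹ * Jt z q n)) := by
    refine tendsto_tsum_of_dominated_convergence
      (bound := fun n => C * (D * D) * ‖Jt z q n‖) ?_ ?_ ?_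
    · exact (summable_Jt z hz hq0 hq).norm.mul_left _
    · intro n
      refine Tendsto.mul_const _ ?_
      have a1 : Tendsto (fun N : ℕ => PP q (N + N)) atTop (𝓝 (qPoch q q)) :=
        hP.comp (tendsto_atTop_mono (fun N => Nat.le_add_left N N) tendsto_id)
      have a2 : Tendsto (fun N : ℕ => PP q (n + N).toNat) atTop (𝓝 (qPoch q q)) := by
        refine hP.comp (tendsto_atTop.2 fun b => ?_)
        filter_upwards [eventually_ge_atTop (b + n.natAbs)] with N hN
        omega
      have a3 : Tendsto (fun N : ℕ => PP q (N + N - (n + N).toNat)) atTop (𝓝 (qPoch q q)) := by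
        refine hP.comp (tendsto_atTop.2 fun b => ?_)
        filter_upwards [eventually_ge_atTop (b + n.natAbs)] with N hN
        omega
      have a4 := a1.div (a2.mul a3) (mul_ne_zero hE hE)
      rw [show qPoch q q / (qPoch q q * qPoch q q) = (qPoch q q)⁻¹ by field_simp] at a4
      refine a4.congr' ?_
      filter_upwards [eventually_ge_atTop n.natAbs] with N hN
      unfold gc gb
      rw [if_pos (by omega), if_pos (by omega)]
      rfl
    · refine Eventually.of_forall fun N n => ?_
      rw [norm_mul]
      gcongr
      unfold gc
      split_ifs
      · exact hbd _ _
      · simp; positivity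
  have lim2 := ((tendsto_qPoch z hq).mul (tendsto_qPoch (q / z) hq))
  have := tendsto_nhds_unique (lim2.congr (finite_jtp z hz hq0 hq)) lim
  rw [tsum_mul_left] at this
  rw [this, J]
  field_simp

/-! ### Dissections of theta series -/

lemma J_symm (z : ℂ) {q : ℂ} (hq0 : q ≠ 0) : J z q = J (q / z) q := by
  unfold J
  rw [← (Equiv.neg ℤ).tsum_eq]
  exact tsum_congr fun n => Jt_symm z q hq0 n

lemma J_shift (z : ℂ) {q : ℂ} (hz : z ≠ 0) (hq0 : q ≠ 0) : J z q = -z * J (z * q) q := by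
  unfold J
  rw [← tsum_mul_left, ← (Equiv.addRight (1 : ℤ)).tsum_eq]
  refine tsum_congr fun n => ?_
  simp only [Equiv.coe_addRight]
  unfold Jt
  have ht : tri (n + 1) = tri n + n := by
    have h1 := two_tri (n + 1)
    have h2 := two_tri n
    linarith
  rw [ht, zpow_add₀ hq0, zpow_add_one₀ (neg_ne_zero.2 hz), ← neg_mul, mul_zpow]
  ring

lemma Jt_three (z : ℂ) {q : ℂ} (hz : z ≠ 0) (hq0 : q ≠ 0) (m : ℤ) (r : ℕ) :
    Jt z q (r + 3 * m) = (-z) ^ r * q ^ tri r * Jt (z ^ 3 * q ^ (3 + 3 * r)) (q ^ 9) m := by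
  have hz' : -z ≠ 0 := neg_ne_zero.2 hz
  unfold Jt
  have ht : tri (r + 3 * m) = tri r + (9 * tri m + ((3 + 3 * r : ℕ) : ℤ) * m) := by
    have h1 := two_tri (r + 3 * m)
    have h2 := two_tri m
    have h3 := two_tri r
    push_cast
    nlinarith
  rw [ht, zpow_add₀ hq0, zpow_add₀ hq0, zpow_add₀ hz', zpow_mul, zpow_mul, zpow_mul,
    show -(z ^ 3 * q ^ (3 + 3 * r)) = (-z) ^ 3 * q ^ (3 + 3 * r) by ring, mul_zpow]
  simp only [zpow_natCast, zpow_ofNat]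
  ring

lemma J_three (z : ℂ) {q : ℂ} (hz : z ≠ 0) (hq0 : q ≠ 0) (hq : ‖q‖ < 1) :
    J z q = J (z ^ 3 * q ^ 3) (q ^ 9) + -z * J (z ^ 3 * q ^ 6) (q ^ 9)
      + z ^ 2 * q * J (z ^ 3 * q ^ 9) (q ^ 9) := by
  unfold J
  have hs := summable_Jt z hz hq0 hq
  rw [← (Int.divModEquiv 3).symm.tsum_eq, ← (Equiv.prodComm _ _).tsum_eq]
  rw [Summable.tsum_prod, tsum_fintype, Fin.sum_univ_three]
  · simp only [Equiv.prodComm_apply, Prod.swap_prod_mk, Int.divModEquiv_symm_apply]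
    rw [← tsum_mul_left, ← tsum_mul_left]
    congr 1
    · congr 1
      · refine tsum_congr fun m => ?_
        have := Jt_three z hz hq0 m 0
        simpa [tri, add_comm, mul_comm] using this
      · refine tsum_congr fun m => ?_
        have := Jt_three z hz hq0 m 1
        simpa [tri, add_comm, mul_comm] using this
    · refine tsum_congr fun m => ?_
      have := Jt_three z hz hq0 m 2
      simpa [tri, add_comm, mul_comm] using this
  · exact (Equiv.summable_iff (Equiv.prodComm _ _)).2
      ((Equiv.summable_iff (Int.divModEquiv 3).symm).2 hs)

/-- Splitting a pair of integers according to the parity of its sum. -/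
def pairEquiv : (ℤ × ℤ) ⊕ (ℤ × ℤ) ≃ ℤ × ℤ where
  toFun x := match x with
    | .inl p => (p.1 + p.2, p.1 - p.2)
    | .inr p => (p.1 + p.2 + 1, p.1 - p.2)
  invFun x := if (x.1 + x.2) % 2 = 0 then .inl ((x.1 + x.2) / 2, (x.1 - x.2) / 2)
    else .inr ((x.1 + x.2 - 1) / 2, (x.1 - x.2 - 1) / 2)
  left_inv x := by
    rcases x with ⟨a, b⟩ | ⟨a, b⟩
    · have : (a + b + (a - b)) % 2 = 0 := by omega
      simp only [this, if_true]
      congr 2 <;> omega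
    · have : ¬ ((a + b + 1 + (a - b)) % 2 = 0) := by omega
      simp only [this, if_false]
      congr 2 <;> omega
  right_inv x := by
    rcases x with ⟨a, b⟩
    by_cases h : (a + b) % 2 = 0
    · simp only [h, if_true]
      ext <;> simp <;> omega
    · simp only [h, if_false]
      ext <;> simp <;> omega

lemma J_mul (z w : ℂ) {q : ℂ} (hz : z ≠ 0) (hw : w ≠ 0) (hq0 : q ≠ 0) (hq : ‖q‖ < 1) :
    J z q * J w q = J (-(z * w)) (q ^ 2) * J (-(z * q / w)) (q ^ 2)
      + -z * (J (-(z * w * q)) (q ^ 2) * J (-(z * q ^ 2 / w)) (q ^ 2)) := by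
  have hz' : -z ≠ 0 := neg_ne_zero.2 hz
  have hw' : -w ≠ 0 := neg_ne_zero.2 hw
  have hq2 : q ^ 2 ≠ 0 := pow_ne_zero _ hq0
  have hqn := norm_pow_lt hq two_ne_zero
  have S : ∀ z' w' : ℂ, z' ≠ 0 → w' ≠ 0 → ∀ q' : ℂ, q' ≠ 0 → ‖q'‖ < 1 →
      HasSum (fun x : ℤ × ℤ => Jt z' q' x.1 * Jt w' q' x.2) (J z' q' * J w' q') := by
    intro z' w' h1 h2 q' h3 h4
    have a := summable_Jt z' h1 h3 h4
    have b := summable_Jt w' h2 h3 h4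
    have c := summable_mul_of_summable_norm a.norm b.norm
    exact a.hasSum.mul b.hasSum c
  have h1 := S z w hz hw q hq0 hq
  have h2 := S (-(z * w)) (-(z * q / w)) (by simp [hz, hw]) (by simp [hz, hw, hq0]) _ hq2 hqn
  have h3 := (S (-(z * w * q)) (-(z * q ^ 2 / w)) (by simp [hz, hw, hq0]) (by simp [hz, hw, hq0])
    _ hq2 hqn).mul_left (-z)
  rw [← Equiv.hasSum_iff pairEquiv] at h1
  refine h1.unique ?_
  refine HasSum.sum ?_ ?_
  · refine h2.congr_fun ?_
    rintro ⟨r, s⟩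
    simp only [Function.comp, pairEquiv, Equiv.coe_fn_mk]
    unfold Jt
    have e : tri (r + s) + tri (r - s) = 2 * tri r + (2 * tri s + s) := by
      have a1 := two_tri (r + s)
      have a2 := two_tri (r - s)
      have a3 := two_tri r
      have a4 := two_tri s
      nlinarith
    calc _ = (-z) ^ (r + s) * (-w) ^ (r - s) * (q ^ (tri (r + s)) * q ^ (tri (r - s))) := by ring
      _ = _ := by
        rw [← zpow_add₀ hq0, e, zpow_add₀ hz', zpow_sub₀ hw', zpow_add₀ hq0, zpow_add₀ hq0,
          zpow_mul, zpow_mul, neg_neg, neg_neg, show z * w = (-z) * (-w) by ring, mul_zpow,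
          show z * q / w = (-z) * q / (-w) by rw [neg_mul, neg_div_neg_eq], div_zpow, mul_zpow]
        simp only [zpow_ofNat]
        ring
  · refine h3.congr_fun ?_
    rintro ⟨r, s⟩
    simp only [Function.comp, pairEquiv, Equiv.coe_fn_mk]
    unfold Jt
    have e : tri (r + s + 1) + tri (r - s) = (2 * tri r + r) + (2 * tri s + 2 * s) := by
      have a1 := two_tri (r + s + 1)
      have a2 := two_tri (r - s)
      have a3 := two_tri r
      have a4 := two_tri s
      nlinarith
    calc _ = (-z) ^ (r + s + 1) * (-w) ^ (r - s) * (q ^ (tri (r + s + 1)) * q ^ (tri (r - s))) := by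
          ring
      _ = _ := by
        rw [← zpow_add₀ hq0, e, zpow_add₀ hz', zpow_add₀ hz', zpow_one, zpow_sub₀ hw',
          zpow_add₀ hq0, zpow_add₀ hq0, zpow_add₀ hq0,
          zpow_mul, zpow_mul, zpow_mul, neg_neg, neg_neg,
          show z * w * q = (-z) * (-w) * q by ring, mul_zpow, mul_zpow,
          show z * q ^ 2 / w = (-z) * q ^ 2 / (-w) by rw [neg_mul, neg_div_neg_eq], div_zpow,
          mul_zpow (-z) (q ^ 2)]
        simp only [zpow_ofNat]
        ring

/-! ### Product evaluations -/

/-- Euler function -/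
noncomputable def EE (x : ℂ) : ℂ := qPoch x x

lemma EE_ne_zero {x : ℂ} (hx : ‖x‖ < 1) : EE x ≠ 0 := qPoch_ne_zero hx hx

lemma EEp {x : ℂ} (hx : ‖x‖ < 1) (m : ℕ) (hm : m ≠ 0) : EE (x ^ m) ≠ 0 :=
  EE_ne_zero (norm_pow_lt hx hm)

/-- `(t;t²) = f1/f2` -/
lemma qp_odd {t : ℂ} (ht : ‖t‖ < 1) : qPoch t (t ^ 2) = EE t / EE (t ^ 2) := by
  have h := qPoch_split2 t ht
  rw [show t * t = t ^ 2 by ring] at h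
  rw [eq_div_iff (EEp ht 2 two_ne_zero)]
  exact h.symm

lemma qp_neg {t : ℂ} (ht : ‖t‖ < 1) : qPoch (-t) t = EE (t ^ 2) / EE t := by
  rw [eq_div_iff (EE_ne_zero ht), mul_comm]
  exact qPoch_pair t ht

/-- `(t;t⁶)(t⁵;t⁶)` -/
lemma qp_15 {t : ℂ} (ht : ‖t‖ < 1) : qPoch t (t ^ 6) * qPoch (t ^ 5) (t ^ 6) =
    EE t * EE (t ^ 6) / (EE (t ^ 2) * EE (t ^ 3)) := by
  have h := qPoch_split3 t (norm_pow_lt ht two_ne_zero)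
  rw [qp_odd ht] at h
  have h3 := qp_odd (norm_pow_lt ht three_ne_zero)
  simp only [← pow_mul] at h h3
  norm_num at h h3
  rw [show t * t ^ 2 = t ^ 3 by ring, show t * t ^ 4 = t ^ 5 by ring, h3] at h
  have := EEp ht 2 (by norm_num)
  have := EEp ht 3 (by norm_num)
  have := EEp ht 6 (by norm_num)
  field_simp at h ⊢
  linear_combination -h

lemma qp_neg12 {t : ℂ} (ht : ‖t‖ < 1) : qPoch (-t) (t ^ 3) * qPoch (-t ^ 2) (t ^ 3) =
    EE (t ^ 2) * EE (t ^ 3) / (EE t * EE (t ^ 6)) := by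
  have h := qPoch_split3 (-t) ht
  rw [qp_neg ht] at h
  have h3 := qp_neg (norm_pow_lt ht three_ne_zero)
  simp only [← pow_mul] at h h3
  norm_num at h h3
  rw [show t * t ^ 2 = t ^ 3 by ring, show t * t = t ^ 2 by ring, h3] at h
  have := EE_ne_zero ht
  have := EEp ht 2 (by norm_num)
  have := EEp ht 3 (by norm_num)
  have := EEp ht 6 (by norm_num)
  field_simp at h ⊢
  linear_combination -h

lemma qp_neg15 {t : ℂ} (ht : ‖t‖ < 1) : qPoch (-t) (t ^ 6) * qPoch (-t ^ 5) (t ^ 6) =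
    EE (t ^ 2) ^ 2 * EE (t ^ 3) * EE (t ^ 12) / (EE t * EE (t ^ 4) * EE (t ^ 6) ^ 2) := by
  have h1 := qp_15 ht
  have h2 := qp_15 (norm_pow_lt ht two_ne_zero)
  have h6 := norm_pow_lt ht (show 6 ≠ 0 by norm_num)
  have p1 := qPoch_pair t h6
  have p5 := qPoch_pair (t ^ 5) h6
  simp only [← pow_mul] at h2 p1 p5
  norm_num at h2 p1 p5
  rw [← p1, ← p5] at h2
  have := EE_ne_zero ht
  have := EEp ht 2 (by norm_num)
  have := EEp ht 3 (by norm_num)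
  have := EEp ht 4 (by norm_num)
  have := EEp ht 6 (by norm_num)
  have := EEp ht 12 (by norm_num)
  have e : qPoch t (t ^ 6) * qPoch (-t) (t ^ 6) * (qPoch (t ^ 5) (t ^ 6) * qPoch (-t ^ 5) (t ^ 6)) =
    (qPoch t (t ^ 6) * qPoch (t ^ 5) (t ^ 6)) * (qPoch (-t) (t ^ 6) * qPoch (-t ^ 5) (t ^ 6)) := by
    ring
  rw [e, h1] at h2
  generalize qPoch (-t) (t ^ 6) * qPoch (-t ^ 5) (t ^ 6) = X at *
  field_simp at h2 ⊢
  linear_combination h2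

lemma EE_neg {t : ℂ} (ht : ‖t‖ < 1) : EE (-t) = EE (t ^ 2) ^ 3 / (EE t * EE (t ^ 4)) := by
  have h := qPoch_split2 (-t) (q := -t) (by simpa using ht)
  have p := qPoch_pair t (norm_pow_lt ht two_ne_zero)
  have o1 := qp_odd ht
  have o2 := qp_odd (norm_pow_lt ht two_ne_zero)
  simp only [← pow_mul] at p o2
  norm_num at p o2
  rw [o1, o2] at p
  rw [show -t * -t = t ^ 2 by ring, show (-t) ^ 2 = t ^ 2 by ring] at h
  change EE (-t) = _ * EE (t ^ 2) at h
  rw [h]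
  have := EE_ne_zero ht
  have := EEp ht 2 (by norm_num)
  have := EEp ht 4 (by norm_num)
  field_simp at p ⊢
  linear_combination p

lemma J_phi {t : ℂ} (h0 : t ≠ 0) (ht : ‖t‖ < 1) : J t (t ^ 2) = EE t ^ 2 / EE (t ^ 2) := by
  rw [jtp t h0 (pow_ne_zero _ h0) (norm_pow_lt ht two_ne_zero),
    show t ^ 2 / t = t by field_simp, qp_odd ht]
  have := EEp ht 2 (by norm_num)
  change _ * EE (t ^ 2) = _
  field_simp

lemma J_psi {t : ℂ} (h0 : t ≠ 0) (ht : ‖t‖ < 1) : J (-1) t = 2 * (EE (t ^ 2) ^ 2 / EE t) := by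
  rw [jtp (-1) (by norm_num) h0 ht, qPoch_step (-1) ht,
    show t / -1 = -t by ring, neg_one_mul, qp_neg ht]
  have := EE_ne_zero ht
  change _ * EE t = _
  field_simp
  ring

lemma J_16 {t : ℂ} (h0 : t ≠ 0) (ht : ‖t‖ < 1) :
    J t (t ^ 6) = EE t * EE (t ^ 6) ^ 2 / (EE (t ^ 2) * EE (t ^ 3)) := by
  rw [jtp t h0 (pow_ne_zero _ h0) (norm_pow_lt ht (by norm_num)),
    show t ^ 6 / t = t ^ 5 by field_simp, qp_15 ht]
  change _ * EE (t ^ 6) = _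
  ring

lemma J_neg13 {t : ℂ} (h0 : t ≠ 0) (ht : ‖t‖ < 1) :
    J (-t) (t ^ 3) = EE (t ^ 2) * EE (t ^ 3) ^ 2 / (EE t * EE (t ^ 6)) := by
  rw [jtp (-t) (neg_ne_zero.2 h0) (pow_ne_zero _ h0) (norm_pow_lt ht (by norm_num)),
    show t ^ 3 / -t = -t ^ 2 by field_simp, qp_neg12 ht]
  change _ * EE (t ^ 3) = _
  ring

lemma J_neg16 {t : ℂ} (h0 : t ≠ 0) (ht : ‖t‖ < 1) : J (-t) (t ^ 6) =
    EE (t ^ 2) ^ 2 * EE (t ^ 3) * EE (t ^ 12) / (EE t * EE (t ^ 4) * EE (t ^ 6)) := by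
  rw [jtp (-t) (neg_ne_zero.2 h0) (pow_ne_zero _ h0) (norm_pow_lt ht (by norm_num)),
    show t ^ 6 / -t = -t ^ 5 by field_simp, qp_neg15 ht]
  have := EE_ne_zero ht
  have := EEp ht 4 (by norm_num)
  have := EEp ht 6 (by norm_num)
  change _ * EE (t ^ 6) = _
  field_simp

lemma J_13 {t : ℂ} (h0 : t ≠ 0) (ht : ‖t‖ < 1) : J t (t ^ 3) = EE t := by
  rw [jtp t h0 (pow_ne_zero _ h0) (norm_pow_lt ht (by norm_num)),
    show t ^ 3 / t = t ^ 2 by field_simp, EE, qPoch_split3 t ht,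
    show t * t = t ^ 2 by ring, show t * t ^ 2 = t ^ 3 by ring]

/-- 3-dissection of `φ(-q)`. -/
lemma phi_dissect {q : ℂ} (h0 : q ≠ 0) (hq : ‖q‖ < 1) :
    EE q ^ 2 / EE (q ^ 2) = EE (q ^ 9) ^ 2 / EE (q ^ 18)
      - 2 * q * (EE (q ^ 3) * EE (q ^ 18) ^ 2 / (EE (q ^ 6) * EE (q ^ 9))) := by
  have hq3 := norm_pow_lt hq three_ne_zero
  have hq9 := norm_pow_lt hq (show 9 ≠ 0 by norm_num)
  have h := J_three q h0 (pow_ne_zero 2 h0) (norm_pow_lt hq two_ne_zero)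
  have h9 := J_phi (pow_ne_zero 9 h0) hq9
  have h16 := J_16 (pow_ne_zero 3 h0) hq3
  have hs := J_symm (q ^ 15) (pow_ne_zero 18 h0)
  have hsh := J_shift (q ^ 3) (pow_ne_zero 3 h0) (pow_ne_zero 18 h0)
  rw [J_phi h0 hq] at h
  rw [show q ^ 18 / q ^ 15 = q ^ 3 by field_simp] at hs
  simp only [← pow_mul, ← pow_add] at h h9 h16 hsh
  norm_num at h h9 h16 hsh
  rw [h, h9, hs, ← h16]
  linear_combination q * hsh

/-- 3-dissection of `ψ(q)`. -/
lemma psi_dissect {q : ℂ} (h0 : q ≠ 0) (hq : ‖q‖ < 1) :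
    EE (q ^ 2) ^ 2 / EE q = EE (q ^ 6) * EE (q ^ 9) ^ 2 / (EE (q ^ 3) * EE (q ^ 18))
      + q * (EE (q ^ 18) ^ 2 / EE (q ^ 9)) := by
  have hq3 := norm_pow_lt hq three_ne_zero
  have hq9 := norm_pow_lt hq (show 9 ≠ 0 by norm_num)
  have h := J_three (-1) (by norm_num) h0 hq
  have h9 := J_psi (pow_ne_zero 9 h0) hq9
  have h13 := J_neg13 (pow_ne_zero 3 h0) hq3
  have hs := J_symm (-q ^ 6) (pow_ne_zero 9 h0)
  have hsh := J_shift (-1) (by norm_num) (pow_ne_zero 9 h0)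
  rw [J_psi h0 hq] at h
  rw [show q ^ 9 / -q ^ 6 = -q ^ 3 by field_simp] at hs
  simp only [← pow_mul, ← pow_add] at h h9 h13 hsh
  norm_num at h h9 h13 hsh
  rw [hs, h13, ← hsh, h9] at h
  linear_combination h / 2

/-- 2-dissection of `f₃³/f₁`. -/
lemma cubic_dissect {q : ℂ} (h0 : q ≠ 0) (hq : ‖q‖ < 1) :
    EE (q ^ 3) ^ 3 / EE q = EE (q ^ 4) ^ 3 * EE (q ^ 6) ^ 2 / (EE (q ^ 2) ^ 2 * EE (q ^ 12))
      + q * (EE (q ^ 12) ^ 3 / EE (q ^ 4)) := by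
  have hq2 := norm_pow_lt hq two_ne_zero
  have hq3 := norm_pow_lt hq three_ne_zero
  have hq4 := norm_pow_lt hq four_ne_zero
  have h := J_mul (q ^ 3) (-q) (pow_ne_zero 3 h0) (neg_ne_zero.2 h0) (pow_ne_zero 6 h0)
    (norm_pow_lt hq (by norm_num))
  have a1 := J_phi (pow_ne_zero 3 h0) hq3
  have a2 := J_neg16 h0 hq
  have a3 := J_13 (pow_ne_zero 4 h0) hq4
  have a4 := J_16 (pow_ne_zero 2 h0) hq2
  have s1 := J_symm (q ^ 8) (pow_ne_zero 12 h0)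
  have s2 := J_symm (q ^ 10) (pow_ne_zero 12 h0)
  have s3 := J_shift (q ^ 2) (pow_ne_zero 2 h0) (pow_ne_zero 12 h0)
  rw [show q ^ 12 / q ^ 8 = q ^ 4 by field_simp] at s1
  rw [show q ^ 12 / q ^ 10 = q ^ 2 by field_simp] at s2
  rw [show -(q ^ 3 * -q) = q ^ 4 by ring, show -(q ^ 3 * q ^ 6 / -q) = q ^ 8 by field_simp,
    show -(q ^ 3 * -q * q ^ 6) = q ^ 10 by ring,
    show -(q ^ 3 * (q ^ 6) ^ 2 / -q) = q ^ 14 by field_simp] at h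
  simp only [← pow_mul, ← pow_add] at h a1 a3 a4 s3
  norm_num at h a1 a3 a4 s3
  rw [s1, s2, a3, a1, a2] at h
  have h' : EE (q ^ 3) ^ 2 / EE (q ^ 6) *
      (EE (q ^ 2) ^ 2 * EE (q ^ 3) * EE (q ^ 12) / (EE q * EE (q ^ 4) * EE (q ^ 6))) =
      EE (q ^ 4) ^ 2 + q * J (q ^ 2) (q ^ 12) ^ 2 := by
    linear_combination h - q * J (q ^ 2) (q ^ 12) * s3
  rw [a4] at h'
  have := EE_ne_zero hq
  have := EEp hq 2 (by norm_num)
  have := EEp hq 4 (by norm_num)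
  have := EEp hq 6 (by norm_num)
  have := EEp hq 12 (by norm_num)
  have n4 : EE (q ^ 4) * EE (q ^ 6) ^ 2 / (EE (q ^ 2) ^ 2 * EE (q ^ 12)) ≠ 0 := by positivity
  calc _ = (EE (q ^ 4) * EE (q ^ 6) ^ 2 / (EE (q ^ 2) ^ 2 * EE (q ^ 12))) *
      (EE (q ^ 3) ^ 2 / EE (q ^ 6) *
      (EE (q ^ 2) ^ 2 * EE (q ^ 3) * EE (q ^ 12) / (EE q * EE (q ^ 4) * EE (q ^ 6)))) := by
        field_simp
    _ = _ := by
        rw [h']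
        field_simp

/-! ### The generating function of `PD` -/

/-- weights of one part size -/
def wt (i n : ℕ) : ℕ := if n = 0 then 1 else if (i + 1) ∣ n then n / (i + 1) else 0

/-- Coefficients of the partial products. -/
noncomputable def cN (N n : ℕ) : ℕ :=
  PowerSeries.coeff n (∏ i ∈ range N, PowerSeries.mk (wt i))

lemma cN_zero (n : ℕ) : cN 0 n = if n = 0 then 1 else 0 := by
  simp [cN, PowerSeries.coeff_one]

lemma cN_succ (N n : ℕ) : cN (N + 1) n = ∑ p ∈ antidiagonal n, cN N p.1 * wt N p.2 := by
  simp [cN, Finset.prod_range_succ, PowerSeries.coeff_mul]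

lemma cN_mono (n : ℕ) : Monotone fun N => cN N n := by
  refine monotone_nat_of_le_succ fun N => ?_
  simp only [cN_succ]
  calc cN N n = cN N n * wt N 0 := by simp [wt]
    _ ≤ _ := Finset.single_le_sum (f := fun p : ℕ × ℕ => cN N p.1 * wt N p.2)
        (fun _ _ => Nat.zero_le _) (show (n, 0) ∈ antidiagonal n by simp)

section
open PowerSeries PowerSeries.WithPiTopology

lemma factor_eq (i : ℕ) :
    (1 + ∑' j : ℕ, (j + 1) • (X : ℕ⟦X⟧) ^ ((i + 1) * (j + 1))) = PowerSeries.mk (wt i) := by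
  have h : HasSum (fun j : ℕ => (j + 1) • (X : ℕ⟦X⟧) ^ ((i + 1) * (j + 1)))
      (PowerSeries.mk fun n => if (i + 1) ∣ n then n / (i + 1) else 0) := by
    rw [hasSum_iff_hasSum_coeff]
    intro n
    simp only [map_nsmul, coeff_X_pow, coeff_mk, smul_eq_mul, mul_ite, mul_one, mul_zero]
    by_cases hd : (i + 1) ∣ n
    · obtain ⟨m, rfl⟩ := hd
      rw [if_pos (dvd_mul_right _ _), Nat.mul_div_cancel_left _ (Nat.succ_pos i)]
      rcases m with _ | m
      · simp
      · have := hasSum_single (f := fun j : ℕ =>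
          if (i + 1) * (m + 1) = (i + 1) * (j + 1) then j + 1 else 0) m ?_
        · simpa using this
        · intro j hj
          rw [if_neg]
          intro h
          have := Nat.eq_of_mul_eq_mul_left (Nat.succ_pos i) h
          omega
    · rw [if_neg hd]
      have : ∀ j : ℕ, (if n = (i + 1) * (j + 1) then j + 1 else 0) = 0 := by
        intro j
        rw [if_neg]
        rintro rfl
        exact hd (dvd_mul_right _ _)
      simp only [this]
      exact hasSum_zero
  rw [h.tsum_eq]
  ext n
  simp only [map_add, coeff_one, coeff_mk, wt]
  by_cases hn : n = 0 <;> simp [hn]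

lemma cN_eventually (n : ℕ) : ∀ᶠ N in atTop, cN N n = PD n := by
  have h := (Nat.Partition.hasProd_genFun (R := ℕ) fun _ c => c).tendsto_prod_nat
  rw [tendsto_iff_coeff_tendsto] at h
  have h2 := h n
  rw [nhds_discrete, tendsto_pure] at h2
  filter_upwards [h2] with N hN
  rw [Nat.Partition.coeff_genFun] at hN
  have hc : cN N n = ∑ p : n.Partition, (Multiset.toFinsupp p.parts).prod fun _ c => c := by
    refine Eq.trans ?_ hN
    unfold cN
    congr 1
    refine Finset.prod_congr rfl fun i _ => ?_
    rw [← factor_eq]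
    rfl
  rw [hc, PD]
  refine Finset.sum_congr rfl fun p _ => ?_
  simp [Finsupp.prod]

end

lemma cN_le (N n : ℕ) : cN N n ≤ PD n := by
  obtain ⟨M, hM⟩ := (cN_eventually n).exists_forall_of_atTop
  rw [← hM (max M N) (le_max_left _ _)]
  exact cN_mono n (le_max_right _ _)

lemma hasSum_wt {q : ℂ} (hq : ‖q‖ < 1) (i : ℕ) :
    HasSum (fun n : ℕ => (wt i n : ℂ) * q ^ n)
      (1 + q ^ (i + 1) / (1 - q ^ (i + 1)) ^ 2) := by
  have h1 := hasSum_coe_mul_geometric_of_norm_lt_one (norm_pow_lt hq (Nat.succ_ne_zero i))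
  have h2 := (hasSum_ite_eq (0 : ℕ) (1 : ℂ)).add h1
  have inj : Function.Injective fun m : ℕ => (i + 1) * m := fun a b hab =>
    Nat.eq_of_mul_eq_mul_left (Nat.succ_pos i) hab
  rw [← inj.hasSum_iff]
  · refine h2.congr_fun ?_
    intro m
    simp only [Function.comp, wt]
    rcases m with _ | m
    · simp
    · rw [if_neg (by positivity), if_pos (dvd_mul_right _ _),
        Nat.mul_div_cancel_left _ (Nat.succ_pos i), pow_mul]
      simp
  · intro n hn
    have : wt i n = 0 := by
      unfold wt
      rw [if_neg, if_neg]
      · rintro ⟨m, rfl⟩; exact hn ⟨m, rfl⟩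
      · rintro rfl; exact hn ⟨0, by simp⟩
    simp [this]

lemma hasSum_cN {q : ℂ} (hq : ‖q‖ < 1) (N : ℕ) :
    HasSum (fun n : ℕ => (cN N n : ℂ) * q ^ n)
      (∏ i ∈ range N, (1 + q ^ (i + 1) / (1 - q ^ (i + 1)) ^ 2)) := by
  induction N with
  | zero =>
    simp only [cN_zero, Finset.range_zero, Finset.prod_empty]
    refine (hasSum_ite_eq (0 : ℕ) (1 : ℂ)).congr_fun ?_
    intro n
    by_cases hn : n = 0 <;> simp [hn]
  | succ N ih =>
    rw [Finset.prod_range_succ]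
    have hw := hasSum_wt hq N
    have a := ih.summable.norm
    have b := hw.summable.norm
    have e : ∀ n, (cN (N + 1) n : ℂ) * q ^ n = ∑ p ∈ antidiagonal n,
        ((cN N p.1 : ℂ) * q ^ p.1) * ((wt N p.2 : ℂ) * q ^ p.2) := by
      intro n
      rw [cN_succ]
      push_cast
      rw [Finset.sum_mul]
      refine Finset.sum_congr rfl fun p hp => ?_
      rw [← mem_antidiagonal.1 hp, pow_add]
      ring
    simp only [e]
    rw [← ih.tsum_eq, ← hw.tsum_eq,
      tsum_mul_tsum_eq_tsum_sum_antidiagonal_of_summable_norm a b]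
    exact (summable_norm_sum_mul_antidiagonal_of_summable_norm a b).of_norm.hasSum

lemma tendsto_prod_PD {q : ℂ} (hq : ‖q‖ < 1) :
    Tendsto (fun N => ∏ i ∈ range N, (1 + q ^ (i + 1) / (1 - q ^ (i + 1)) ^ 2)) atTop
      (𝓝 (EE (q ^ 6) / (EE q * EE (q ^ 2) * EE (q ^ 3)))) := by
  have T : ∀ m : ℕ, m ≠ 0 → Tendsto (fun N => ∏ i ∈ range N, (1 - (q ^ (i + 1)) ^ m)) atTop
      (𝓝 (EE (q ^ m))) := by
    intro m hm
    refine (tendsto_qPoch (q ^ m) (norm_pow_lt hq hm)).congr fun N => ?_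
    refine Finset.prod_congr rfl fun i _ => ?_
    ring
  have h1 := T 1 one_ne_zero
  rw [pow_one] at h1
  have := (T 6 (by norm_num)).div ((h1.mul (T 2 two_ne_zero)).mul (T 3 three_ne_zero))
    (mul_ne_zero (mul_ne_zero (EE_ne_zero hq) (EEp hq 2 two_ne_zero)) (EEp hq 3 three_ne_zero))
  refine this.congr fun N => ?_
  simp only [Pi.div_apply]
  rw [← Finset.prod_mul_distrib, ← Finset.prod_mul_distrib, ← Finset.prod_div_distrib]
  refine Finset.prod_congr rfl fun i _ => ?_
  have hy := norm_pow_lt hq (Nat.succ_ne_zero i)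
  have y1 := one_sub_ne_zero hy
  have y2 := one_sub_ne_zero (norm_pow_lt hy two_ne_zero)
  have y3 := one_sub_ne_zero (norm_pow_lt hy three_ne_zero)
  change (1 - q ^ (i + 1) ≠ 0) at y1
  change (1 - (q ^ (i + 1)) ^ 2 ≠ 0) at y2
  change (1 - (q ^ (i + 1)) ^ 3 ≠ 0) at y3
  generalize q ^ (i + 1) = y at *
  rw [pow_one, div_eq_iff (mul_ne_zero (mul_ne_zero y1 y2) y3)]
  field_simp
  ring

lemma summable_PD {q : ℂ} (hq : ‖q‖ < 1) : Summable fun n : ℕ => (PD n : ℝ) * ‖q‖ ^ n := by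
  have hr : ‖((‖q‖ : ℝ) : ℂ)‖ < 1 := by simpa using hq
  obtain ⟨C, hC⟩ := (Metric.isBounded_range_of_tendsto _ (tendsto_prod_PD hr)).exists_norm_le
  refine summable_of_sum_range_le (c := C) (fun n => by positivity) fun M => ?_
  have hev : ∀ᶠ N in atTop, ∀ n ∈ range M, cN N n = PD n :=
    (Filter.eventually_all_finset _).2 fun n _ => cN_eventually n
  obtain ⟨N, hN⟩ := hev.exists
  have hs := hasSum_cN hr N
  have hs' : HasSum (fun n : ℕ => (((cN N n : ℝ) * ‖q‖ ^ n : ℝ) : ℂ))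
      (∏ i ∈ range N, (1 + ((‖q‖ : ℝ) : ℂ) ^ (i + 1) / (1 - ((‖q‖ : ℝ) : ℂ) ^ (i + 1)) ^ 2)) := by
    refine hs.congr_fun ?_
    intro n
    push_cast
    rfl
  have hsr : Summable (fun n : ℕ => (cN N n : ℝ) * ‖q‖ ^ n) := Complex.summable_ofReal.1 hs'.summable
  calc ∑ n ∈ range M, (PD n : ℝ) * ‖q‖ ^ n = ∑ n ∈ range M, (cN N n : ℝ) * ‖q‖ ^ n :=
        Finset.sum_congr rfl fun n hn => by rw [hN n hn]
    _ ≤ ∑' n, (cN N n : ℝ) * ‖q‖ ^ n := hsr.sum_le_tsum _ fun n _ => by positivity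
    _ ≤ ‖((∑' n, (cN N n : ℝ) * ‖q‖ ^ n : ℝ) : ℂ)‖ := by
        rw [Complex.norm_real]; exact le_abs_self _
    _ ≤ C := by
        rw [Complex.ofReal_tsum, hs'.tsum_eq]
        exact hC _ ⟨N, rfl⟩

lemma hasSum_PD {q : ℂ} (hq : ‖q‖ < 1) : HasSum (fun n : ℕ => (PD n : ℂ) * q ^ n)
    (EE (q ^ 6) / (EE q * EE (q ^ 2) * EE (q ^ 3))) := by
  have hs := summable_PD hq
  have hsc : Summable (fun n : ℕ => (PD n : ℂ) * q ^ n) := by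
    refine Summable.of_norm (hs.congr fun n => ?_)
    simp
  have lim : Tendsto (fun N => ∑' n : ℕ, (cN N n : ℂ) * q ^ n) atTop
      (𝓝 (∑' n : ℕ, (PD n : ℂ) * q ^ n)) := by
    refine tendsto_tsum_of_dominated_convergence hs ?_ (Eventually.of_forall fun N n => ?_)
    · intro n
      refine tendsto_nhds_of_eventually_eq ?_
      filter_upwards [cN_eventually n] with N hN
      rw [hN]
    · rw [norm_mul, norm_pow, Complex.norm_natCast]
      gcongr
      exact cN_le N n
  have := tendsto_nhds_unique (lim.congr fun N => (hasSum_cN hq N).tsum_eq) (tendsto_prod_PD hq)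
  rw [← this]
  exact hsc.hasSum

/-! ### Extraction of the residue class -/

lemma EE_cube (w : ℂ) {q : ℂ} (hw : 1 + w + w ^ 2 = 0) (hq : ‖q‖ < 1) :
    EE q * EE (w * q) * EE (w ^ 2 * q) = EE (q ^ 3) ^ 4 / EE (q ^ 9) := by
  have h3 : w ^ 3 = 1 := by linear_combination (w - 1) * hw
  have hn : ‖w‖ = 1 := by
    have : ‖w‖ ^ 3 = 1 := by rw [← norm_pow, h3, norm_one]
    exact (pow_eq_one_iff_of_nonneg (norm_nonneg _) three_ne_zero).1 this
  have n1 : ‖w * q‖ < 1 := by rw [norm_mul, hn, one_mul]; exact hq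
  have n2 : ‖w ^ 2 * q‖ < 1 := by rw [norm_mul, norm_pow, hn, one_pow, one_mul]; exact hq
  have hq3 := norm_pow_lt hq three_ne_zero
  have e0 := qPoch_split3 q hq
  have e1 := qPoch_split3 (w * q) n1
  have e2 := qPoch_split3 (w ^ 2 * q) n2
  have w6 : w ^ 6 = 1 := by rw [show w ^ 6 = (w ^ 3) ^ 2 by ring, h3, one_pow]
  have w4 : w ^ 4 = w := by rw [show w ^ 4 = w ^ 3 * w by ring, h3, one_mul]
  rw [show q * q = q ^ 2 by ring, show q * q ^ 2 = q ^ 3 by ring] at e0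
  rw [show w * q * (w * q) = w ^ 2 * q ^ 2 by ring,
    show w * q * (w * q) ^ 2 = w ^ 3 * q ^ 3 by ring,
    show (w * q) ^ 3 = w ^ 3 * q ^ 3 by ring, h3, one_mul] at e1
  rw [show w ^ 2 * q * (w ^ 2 * q) = w ^ 4 * q ^ 2 by ring,
    show w ^ 2 * q * (w ^ 2 * q) ^ 2 = w ^ 6 * q ^ 3 by ring,
    show (w ^ 2 * q) ^ 3 = w ^ 6 * q ^ 3 by ring, w6, w4, one_mul] at e2
  have c1 := qPoch_cube w q hw hq3
  have c2 := qPoch_cube w (q ^ 2) hw hq3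
  have s := qPoch_split3 (q ^ 3) hq3
  simp only [← pow_mul, ← pow_add] at c1 c2 s
  norm_num at c1 c2 s
  change EE (q ^ 3) = _ * EE (q ^ 9) at s
  change EE q = _ * EE (q ^ 3) at e0
  change EE (w * q) = _ * EE (q ^ 3) at e1
  change EE (w ^ 2 * q) = _ * EE (q ^ 3) at e2
  rw [eq_div_iff (EEp hq 9 (by norm_num)), e0, e1, e2]
  calc _ = (qPoch q (q ^ 3) * qPoch (w * q) (q ^ 3) * qPoch (w ^ 2 * q) (q ^ 3)) *
        (qPoch (q ^ 2) (q ^ 3) * qPoch (w * q ^ 2) (q ^ 3) * qPoch (w ^ 2 * q ^ 2) (q ^ 3)) *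
        EE (q ^ 9) * EE (q ^ 3) ^ 3 := by ring
    _ = _ := by
      rw [c1, c2, ← s]; ring

lemma root_alg (a b c q w : ℂ) (hw : 1 + w + w ^ 2 = 0) :
    (a + b * (w * q) + c * (w * q) ^ 2) * (a + b * (w ^ 2 * q) + c * (w ^ 2 * q) ^ 2) +
    (a + b * q + c * q ^ 2) * (a + b * (w ^ 2 * q) + c * (w ^ 2 * q) ^ 2) +
    (a + b * q + c * q ^ 2) * (a + b * (w * q) + c * (w * q) ^ 2) =
      3 * (a ^ 2 - b * c * q ^ 3) := by
  linear_combination (2 * a * b * q + 2 * a * c * (q ^ 2 * (1 + w + w ^ 2) - 2 * q ^ 2 * w)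
    + b ^ 2 * q ^ 2 * w + b * c * (q ^ 3 * w * (1 + w + w ^ 2) - 3 * q ^ 3 * (w - 1))
    + c ^ 2 * (q ^ 4 * w ^ 2 * (1 + w + w ^ 2) - 2 * q ^ 4 * w ^ 3)) * hw

/-- The generating function for `PD (3 * n)` in a first form. -/
lemma first_form {t : ℂ} (h0 : t ≠ 0) (ht : ‖t‖ < 1) :
    ∑' n : ℕ, (PD (3 * n) : ℂ) * t ^ n =
      EE (t ^ 3) ^ 9 / (EE t ^ 7 * EE (t ^ 2) * EE (t ^ 6) ^ 3)
        - 2 * t * (EE (t ^ 6) ^ 6 / (EE t ^ 4 * EE (t ^ 2) ^ 4)) := by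
  obtain ⟨q, hqt⟩ := IsAlgClosed.exists_pow_nat_eq t (n := 3) (by norm_num)
  obtain ⟨w, hw⟩ : ∃ w : ℂ, 1 + w + w ^ 2 = 0 := by
    obtain ⟨s, hs⟩ := IsAlgClosed.exists_pow_nat_eq (-3 : ℂ) (n := 2) (by norm_num)
    exact ⟨(-1 + s) / 2, by linear_combination hs / 4⟩
  have h3 : w ^ 3 = 1 := by linear_combination (w - 1) * hw
  have hn : ‖w‖ = 1 := by
    have : ‖w‖ ^ 3 = 1 := by rw [← norm_pow, h3, norm_one]
    exact (pow_eq_one_iff_of_nonneg (norm_nonneg _) three_ne_zero).1 this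
  have hw0 : w ≠ 0 := by rintro rfl; norm_num at h3
  have hq0 : q ≠ 0 := by rintro rfl; norm_num at hqt; exact h0 hqt.symm
  have hq : ‖q‖ < 1 := by
    by_contra hcon
    have h1 : 1 ≤ ‖q‖ ^ 3 := one_le_pow₀ (not_lt.1 hcon)
    rw [← norm_pow, hqt] at h1
    exact absurd ht (not_lt.2 h1)
  have w4 : w ^ 4 = w := by rw [show w ^ 4 = w ^ 3 * w by ring, h3, one_mul]
  have n1 : ‖w * q‖ < 1 := by rw [norm_mul, hn, one_mul]; exact hq
  have n2 : ‖w ^ 2 * q‖ < 1 := by rw [norm_mul, norm_pow, hn, one_pow, one_mul]; exact hq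
  have z1 : w * q ≠ 0 := mul_ne_zero hw0 hq0
  have z2 : w ^ 2 * q ≠ 0 := mul_ne_zero (pow_ne_zero 2 hw0) hq0
  -- the roots of unity filter
  have filt : 3 * ∑' n : ℕ, (PD (3 * n) : ℂ) * t ^ n =
      EE (q ^ 6) / (EE q * EE (q ^ 2) * EE (q ^ 3)) +
      EE ((w * q) ^ 6) / (EE (w * q) * EE ((w * q) ^ 2) * EE ((w * q) ^ 3)) +
      EE ((w ^ 2 * q) ^ 6) / (EE (w ^ 2 * q) * EE ((w ^ 2 * q) ^ 2) * EE ((w ^ 2 * q) ^ 3)) := by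
    have S := ((hasSum_PD hq).add (hasSum_PD n1)).add (hasSum_PD n2)
    rw [← S.tsum_eq, ← tsum_mul_left]
    have inj : Function.Injective fun m : ℕ => 3 * m := fun a b hab =>
      Nat.eq_of_mul_eq_mul_left (by norm_num) hab
    rw [← inj.tsum_eq (f := fun n : ℕ =>
      (PD n : ℂ) * q ^ n + (PD n : ℂ) * (w * q) ^ n + (PD n : ℂ) * (w ^ 2 * q) ^ n)]
    · refine tsum_congr fun m => ?_
      simp only [mul_pow, pow_mul, hqt, h3]
      rw [← pow_mul w 2 3, show w ^ (2 * 3) = (w ^ 3) ^ 2 by ring, h3]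
      simp
      ring
    · intro n hn'
      by_contra hr
      apply hn'
      have hmod : n % 3 = 1 ∨ n % 3 = 2 := by
        by_contra hc
        exact hr ⟨n / 3, by simp only; omega⟩
      have key : 1 + w ^ n + (w ^ 2) ^ n = 0 := by
        rw [← Nat.div_add_mod n 3]
        rcases hmod with h | h
        · rw [h, ← pow_mul, mul_comm 2, pow_mul, pow_add, pow_mul, h3, one_pow, one_mul, pow_one]
          exact hw
        · rw [h, ← pow_mul, mul_comm 2, pow_mul, pow_add, pow_mul, h3, one_pow, one_mul, ← pow_mul,
            w4]
          linear_combination hw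
      simp only [mul_pow]
      linear_combination ((PD n : ℂ) * q ^ n) * key
  -- normalisation of powers
  have p1 : ∀ k, (w * q) ^ (3 * k) = t ^ k := fun k => by
    rw [pow_mul, mul_pow, h3, one_mul, hqt]
  have p2 : ∀ k, (w ^ 2 * q) ^ (3 * k) = t ^ k := fun k => by
    rw [pow_mul, mul_pow, ← pow_mul, show w ^ (2 * 3) = (w ^ 3) ^ 2 by ring, h3, one_pow, one_mul,
      hqt]
  have p0 : ∀ k, q ^ (3 * k) = t ^ k := fun k => by rw [pow_mul, hqt]
  have f0 := phi_dissect hq0 hq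
  have f1 := phi_dissect z1 n1
  have f2 := phi_dissect z2 n2
  have g0 := psi_dissect hq0 hq
  have g1 := psi_dissect z1 n1
  have g2 := psi_dissect z2 n2
  have c1 := EE_cube w hw hq
  have c2 := EE_cube w hw (norm_pow_lt hq two_ne_zero)
  rw [← pow_mul, ← pow_mul, show 2 * 3 = 3 * 2 by norm_num, show 2 * 9 = 3 * 6 by norm_num,
    p0, p0] at c2
  rw [show 9 = 3 * 3 by norm_num, p0, hqt] at c1
  rw [show 6 = 3 * 2 by norm_num, show 9 = 3 * 3 by norm_num, show 18 = 3 * 6 by norm_num] at *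
  have p1' := p1 1
  have p2' := p2 1
  rw [mul_one, pow_one] at p1' p2'
  rw [p1', p1, p1, p1] at f1 g1
  rw [p2', p2, p2, p2] at f2 g2
  rw [hqt, p0, p0, p0] at f0 g0
  rw [hqt, p1', p2', p0, p1, p2] at filt
  have n11 := norm_pow_lt n1 two_ne_zero
  have n22 := norm_pow_lt n2 two_ne_zero
  have q1 : EE ((w * q) ^ 2) = EE (w ^ 2 * q ^ 2) := by rw [mul_pow]
  have q2 : EE ((w ^ 2 * q) ^ 2) = EE (w * q ^ 2) := by
    rw [mul_pow, ← pow_mul, w4]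
  have a0 := EE_ne_zero hq
  have a1 := EE_ne_zero n1
  have a2 := EE_ne_zero n2
  have b0 := EEp hq 2 two_ne_zero
  have b1 := EEp n1 2 two_ne_zero
  have b2 := EEp n2 2 two_ne_zero
  rw [q1] at f1 g1 filt b1
  rw [q2] at f2 g2 filt b2
  have d1 := EE_ne_zero ht
  have d2 := EEp ht 2 two_ne_zero
  have d3 := EEp ht 3 three_ne_zero
  have d6 := EEp ht (3 * 2) (by norm_num)
  clear n11 n22 q1 q2 p0 p1 p2 p1' p2' n1 n2 z1 z2
  generalize EE q = A0 at *
  generalize EE (w * q) = A1 at *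
  generalize EE (w ^ 2 * q) = A2 at *
  generalize EE (q ^ 2) = B0 at *
  generalize EE (w * q ^ 2) = B2 at *
  generalize EE (w ^ 2 * q ^ 2) = B1 at *
  generalize EE t = F1 at *
  generalize EE (t ^ 2) = F2 at *
  generalize EE (t ^ 3) = F3 at *
  generalize EE (t ^ (3 * 2)) = F6 at *
  have R := root_alg (F2 * F3 ^ 4 / (F1 * F6 ^ 2)) (-(F3 * F6))
    (-2 * (F1 * F6 ^ 4 / (F2 * F3 ^ 2))) q w hw
  have D : ∀ A B s : ℂ, A ≠ 0 → B ≠ 0 →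
      A ^ 2 / B = F3 ^ 2 / F6 - 2 * s * (F1 * F6 ^ 2 / (F2 * F3)) →
      B ^ 2 / A = F2 * F3 ^ 2 / (F1 * F6) + s * (F6 ^ 2 / F3) →
      F2 * F3 ^ 4 / (F1 * F6 ^ 2) + -(F3 * F6) * s + -2 * (F1 * F6 ^ 4 / (F2 * F3 ^ 2)) * s ^ 2
        = A * B := by
    intro A B s hA hB h1 h2
    have : A * B = (A ^ 2 / B) * (B ^ 2 / A) := by field_simp
    rw [this, h1, h2]
    field_simp
    ring
  rw [D A0 B0 q a0 b0 f0 g0, D A1 B1 _ a1 b1 f1 g1, D A2 B2 _ a2 b2 f2 g2, hqt] at R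
  generalize (∑' n : ℕ, (PD (3 * n) : ℂ) * t ^ n) = S at *
  have K : (A0 * B0) * (A1 * B1) * (A2 * B2) = F1 ^ 4 * F2 ^ 4 / (F3 * F6) := by
    calc _ = (A0 * A1 * A2) * (B0 * B2 * B1) := by ring
      _ = _ := by rw [c1, c2]; field_simp
  have S3 : 3 * S = F2 / F1 * ((A1 * B1) * (A2 * B2) + (A0 * B0) * (A2 * B2)
      + (A0 * B0) * (A1 * B1)) / ((A0 * B0) * (A1 * B1) * (A2 * B2)) := by
    rw [filt]
    field_simp
  rw [R, K] at S3
  have S4 : S = F2 / F1 * ((F2 * F3 ^ 4 / (F1 * F6 ^ 2)) ^ 2 - -(F3 * F6) *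
      (-2 * (F1 * F6 ^ 4 / (F2 * F3 ^ 2))) * t) / (F1 ^ 4 * F2 ^ 4 / (F3 * F6)) := by
    linear_combination S3 / 3
  rw [S4]
  field_simp
  ring

lemma PD_zero : PD 0 = 1 := by
  simp [PD]

theorem generating_function_PD_three_n (q : ℂ) (hq : ‖q‖ < 1) :
    ∑' n : ℕ, (PD (3 * n) : ℂ) * q ^ n =
      1 / (qPoch q (q ^ 6) ^ 5 * qPoch (q ^ 3) (q ^ 6) ^ 2 * qPoch (q ^ 5) (q ^ 6) ^ 5) *
        (qPoch (q ^ 4) (q ^ 4) ^ 6 * qPoch (q ^ 6) (q ^ 6) ^ 4 /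
            (qPoch (q ^ 2) (q ^ 2) ^ 10 * qPoch (q ^ 12) (q ^ 12) ^ 2) +
          3 * q ^ 2 * qPoch (q ^ 12) (q ^ 12) ^ 6 /
            (qPoch (q ^ 2) (q ^ 2) ^ 6 * qPoch (q ^ 4) (q ^ 4) ^ 2)) := by
  rcases eq_or_ne q 0 with rfl | h0
  · rw [tsum_eq_single 0]
    · simp [PD_zero, qPoch]
    · intro n hn
      simp [hn]
  rw [first_form h0 hq]
  have hneg : ‖-q‖ < 1 := by simpa using hq
  have u := cubic_dissect h0 hq
  have v := cubic_dissect (neg_ne_zero.2 h0) hneg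
  have e3 := EE_neg (norm_pow_lt hq three_ne_zero)
  rw [show (-q) ^ 3 = -q ^ 3 by ring, show (-q) ^ 4 = q ^ 4 by ring,
    show (-q) ^ 6 = q ^ 6 by ring, show (-q) ^ 2 = q ^ 2 by ring,
    show (-q) ^ 12 = q ^ 12 by ring, e3, EE_neg hq] at v
  simp only [← pow_mul] at v
  norm_num at v
  have o3 := qp_odd (norm_pow_lt hq three_ne_zero)
  rw [← pow_mul] at o3
  norm_num at o3
  have o15 := qp_15 hq
  have den : qPoch q (q ^ 6) ^ 5 * qPoch (q ^ 3) (q ^ 6) ^ 2 * qPoch (q ^ 5) (q ^ 6) ^ 5 =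
      (qPoch q (q ^ 6) * qPoch (q ^ 5) (q ^ 6)) ^ 5 * qPoch (q ^ 3) (q ^ 6) ^ 2 := by ring
  rw [den, o15, o3]
  change _ = 1 / _ * (EE (q ^ 4) ^ 6 * EE (q ^ 6) ^ 4 / (EE (q ^ 2) ^ 10 * EE (q ^ 12) ^ 2) +
    3 * q ^ 2 * EE (q ^ 12) ^ 6 / (EE (q ^ 2) ^ 6 * EE (q ^ 4) ^ 2))
  have d1 := EE_ne_zero hq
  have d2 := EEp hq 2 two_ne_zero
  have d3 := EEp hq 3 three_ne_zero
  have d4 := EEp hq 4 four_ne_zero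
  have d6 := EEp hq 6 (by norm_num)
  have d12 := EEp hq 12 (by norm_num)
  clear den o15 o3 e3
  generalize EE q = F1 at *
  generalize EE (q ^ 2) = F2 at *
  generalize EE (q ^ 3) = F3 at *
  generalize EE (q ^ 4) = F4 at *
  generalize EE (q ^ 6) = F6 at *
  generalize EE (q ^ 12) = F12 at *
  have v' : F6 ^ 9 * F1 * F4 / (F3 ^ 3 * F12 ^ 3 * F2 ^ 3) =
      F4 ^ 3 * F6 ^ 2 / (F2 ^ 2 * F12) - q * (F12 ^ 3 / F4) := by
    rw [sub_eq_add_neg, ← v]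
    field_simp
  have key : (F3 ^ 3 / F1) ^ 2 - 2 * q * ((F12 ^ 3 / F4) *
      (F6 ^ 9 * F1 * F4 / (F3 ^ 3 * F12 ^ 3 * F2 ^ 3))) =
      (F4 ^ 3 * F6 ^ 2 / (F2 ^ 2 * F12)) ^ 2 + 3 * q ^ 2 * (F12 ^ 3 / F4) ^ 2 := by
    rw [v', u]; ring
  calc _ = F3 ^ 3 / (F1 ^ 5 * F2 * F6 ^ 3) * ((F3 ^ 3 / F1) ^ 2 - 2 * q * ((F12 ^ 3 / F4) *
      (F6 ^ 9 * F1 * F4 / (F3 ^ 3 * F12 ^ 3 * F2 ^ 3)))) := by field_simp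
    _ = _ := by
      rw [key]
      field_simp
end

section
/- For every complex number q with |q| < 1, ∑_{n=0}^∞ PD(3n + 1) q^n = (q^3; q^6)_∞^3 (q^6; q^6)_∞^6 / ((q; q^2)_∞^5 (q^2; q^2)_∞^8) · ( 4 q (q; q^2)_∞^2 / (q^3; q^6)_∞^6 + (q^3; q^6)_∞^3 / (q; q^2)_∞ ). -/
open Finset

open Filter Topology

namespace PDProof

lemma norm_pow_lt {q : ℂ} (hq : ‖q‖ < 1) {k : ℕ} (hk : k ≠ 0) : ‖q ^ k‖ < 1 := by
  rw [norm_pow]; exact pow_lt_one₀ (norm_nonneg _) hq hk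

lemma summable_aux (a : ℂ) {q : ℂ} (hq : ‖q‖ < 1) : Summable fun n : ℕ => ‖-(a * q ^ n)‖ := by
  simp only [norm_neg, norm_mul, norm_pow]
  exact (summable_geometric_of_lt_one (norm_nonneg _) hq).mul_left _

lemma qPoch_lim (a : ℂ) {q : ℂ} (hq : ‖q‖ < 1) :
    Tendsto (fun N => ∏ k ∈ range N, (1 - a * q ^ k)) atTop (𝓝 (qPoch a q)) := by
  have := multipliable_one_add_of_summable (summable_aux a hq)
  simp only [← sub_eq_add_neg] at this
  exact this.hasProd.tendsto_prod_nat

lemma qPoch_ne_zero {a q : ℂ} (hq : ‖q‖ < 1) (ha : ‖a‖ < 1) : qPoch a q ≠ 0 := by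
  have := tprod_one_add_ne_zero_of_summable (f := fun n : ℕ => -(a * q ^ n)) (fun i h => ?_)
    (summable_aux a hq)
  · simpa only [← sub_eq_add_neg, qPoch] using this
  · have h1 : a * q ^ i = 1 := by linear_combination -h
    have h2 : ‖a * q ^ i‖ < 1 := by
      rw [norm_mul, norm_pow]
      exact mul_lt_one_of_nonneg_of_lt_one_left (norm_nonneg _) ha
        (pow_le_one₀ (norm_nonneg _) hq.le)
    rw [h1] at h2; simp at h2

lemma qPoch_split2 (a : ℂ) {q : ℂ} (hq : ‖q‖ < 1) :
    qPoch a q = qPoch a (q ^ 2) * qPoch (a * q) (q ^ 2) := by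
  have h2 : ‖q ^ 2‖ < 1 := norm_pow_lt hq (by norm_num)
  refine tendsto_nhds_unique ((qPoch_lim a hq).comp (tendsto_id.const_mul_atTop' (r := 2) (by norm_num)))
    (((qPoch_lim a h2).mul (qPoch_lim (a * q) h2)).congr fun N => ?_)
  simp only [Function.comp, id]
  induction N with
  | zero => simp
  | succ n ih =>
    rw [show 2 * (n + 1) = 2 * n + 1 + 1 by ring]
    simp only [prod_range_succ, ← ih]
    ring

lemma qPoch_split3 (a : ℂ) {q : ℂ} (hq : ‖q‖ < 1) :
    qPoch a q = qPoch a (q ^ 3) * qPoch (a * q) (q ^ 3) * qPoch (a * q ^ 2) (q ^ 3) := by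
  have h2 : ‖q ^ 3‖ < 1 := norm_pow_lt hq (by norm_num)
  refine tendsto_nhds_unique ((qPoch_lim a hq).comp (tendsto_id.const_mul_atTop' (r := 3) (by norm_num)))
    ((((qPoch_lim a h2).mul (qPoch_lim (a * q) h2)).mul (qPoch_lim (a * q ^ 2) h2)).congr fun N => ?_)
  simp only [Function.comp, id]
  induction N with
  | zero => simp
  | succ n ih =>
    rw [show 3 * (n + 1) = 3 * n + 1 + 1 + 1 by ring]
    simp only [prod_range_succ, ← ih]
    ring

lemma qPoch_neg (a : ℂ) {q : ℂ} (hq : ‖q‖ < 1) :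
    qPoch a q * qPoch (-a) q = qPoch (a ^ 2) (q ^ 2) := by
  refine tendsto_nhds_unique ((qPoch_lim a hq).mul (qPoch_lim (-a) hq))
    ((qPoch_lim (a ^ 2) (norm_pow_lt hq (by norm_num))).congr fun N => ?_)
  rw [← prod_mul_distrib]
  exact prod_congr rfl fun k _ => by ring

lemma qPoch_omega (a w : ℂ) (hw : 1 + w + w ^ 2 = 0) {q : ℂ} (hq : ‖q‖ < 1) :
    qPoch a q * qPoch (w * a) q * qPoch (w ^ 2 * a) q = qPoch (a ^ 3) (q ^ 3) := by
  refine tendsto_nhds_unique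
    (((qPoch_lim a hq).mul (qPoch_lim (w * a) hq)).mul (qPoch_lim (w ^ 2 * a) hq))
    ((qPoch_lim (a ^ 3) (norm_pow_lt hq (by norm_num))).congr fun N => ?_)
  rw [← prod_mul_distrib, ← prod_mul_distrib]
  refine prod_congr rfl fun k _ => ?_
  have hw3 : w ^ 3 = 1 := by linear_combination (w - 1) * hw
  rw [← pow_mul, mul_comm 3 k, pow_mul]
  generalize q ^ k = y
  linear_combination (a * y - w * a^2*y^2)*hw + (a^3*y^3 )*hw3

lemma qPoch_first (a : ℂ) {q : ℂ} (hq : ‖q‖ < 1) : qPoch a q = (1 - a) * qPoch (a * q) q := by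
  refine tendsto_nhds_unique ((qPoch_lim a hq).comp (tendsto_add_atTop_nat 1))
    (((qPoch_lim (a * q) hq).const_mul (1 - a)).congr fun N => ?_)
  simp only [Function.comp, prod_range_succ']
  rw [mul_comm]
  simp [pow_succ', mul_assoc]

/-- Euler product `(q;q)_∞`. -/
noncomputable def E (q : ℂ) : ℂ := qPoch q q

lemma E_ne {q : ℂ} (hq : ‖q‖ < 1) : E q ≠ 0 := qPoch_ne_zero hq hq

lemma odd_eq {q : ℂ} (hq : ‖q‖ < 1) : qPoch q (q ^ 2) * E (q ^ 2) = E q := by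
  have := qPoch_split2 q hq
  rw [← sq] at this
  exact this.symm

lemma neg_eq {q : ℂ} (hq : ‖q‖ < 1) : qPoch (-q) q * E q = E (q ^ 2) := by
  rw [mul_comm]; exact qPoch_neg q hq

/-- The finite Euler product. -/
noncomputable def Q (q : ℂ) (n : ℕ) : ℂ := ∏ k ∈ range n, (1 - q * q ^ k)

lemma Q_lim {q : ℂ} (hq : ‖q‖ < 1) : Tendsto (Q q) atTop (𝓝 (E q)) := qPoch_lim q hq

lemma Q_ne {q : ℂ} (hq : ‖q‖ < 1) (n : ℕ) : Q q n ≠ 0 := by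
  refine prod_ne_zero_iff.2 fun k _ h => ?_
  have h1 : q ^ (k + 1) = 1 := by rw [pow_succ']; linear_combination -h
  have := norm_pow_lt hq (k := k + 1) (by omega)
  rw [h1] at this; simp at this

/-- Gaussian binomial. -/
noncomputable def qb (q : ℂ) : ℕ → ℕ → ℂ
  | _, 0 => 1
  | 0, _ + 1 => 0
  | M + 1, j + 1 => q ^ (j + 1) * qb q M (j + 1) + qb q M j

lemma qb_zero (q : ℂ) (M : ℕ) : qb q M 0 = 1 := by cases M <;> simp [qb]

lemma qb_lt (q : ℂ) : ∀ (M j : ℕ), M < j → qb q M j = 0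
  | _, 0, h => by omega
  | 0, _ + 1, _ => by simp [qb]
  | M + 1, j + 1, h => by
    simp [qb, qb_lt q M (j + 1) (by omega), qb_lt q M j (by omega)]

lemma qb_self (q : ℂ) : ∀ M, qb q M M = 1
  | 0 => by simp [qb]
  | M + 1 => by simp [qb, qb_lt q M (M + 1) (by omega), qb_self q M]

lemma qb_mul (q : ℂ) : ∀ (a b : ℕ), qb q (a + b) a * (Q q a * Q q b) = Q q (a + b)
  | 0, b => by simp [qb_zero, Q]
  | a + 1, 0 => by simp [qb_self, Q]
  | a + 1, b + 1 => by
    have h1 := qb_mul q (a + 1) b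
    have h2 := qb_mul q a (b + 1)
    rw [show a + 1 + (b + 1) = (a + b + 1) + 1 by ring]
    rw [show a + 1 + b = a + b + 1 by ring] at h1
    rw [show a + (b + 1) = a + b + 1 by ring] at h2
    have e : ∀ n, Q q (n + 1) = Q q n * (1 - q * q ^ n) := fun n => by simp [Q, prod_range_succ]
    rw [qb, e (a + b + 1)]
    have h1' := congrArg (fun t => q ^ (a + 1) * (1 - q * q ^ b) * t) h1
    have h2' := congrArg (fun t => (1 - q * q ^ a) * t) h2
    rw [e b] at h2' ⊢
    rw [e a] at h1' ⊢
    linear_combination h1' + h2'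

lemma rothe (q : ℂ) (M : ℕ) : ∀ x : ℂ, ∏ k ∈ range M, (1 + x * q ^ k) =
    ∑ j ∈ range (M + 1), q ^ (j * (j - 1) / 2) * x ^ j * qb q M j := by
  induction M with
  | zero => intro x; simp [qb_zero]
  | succ M ih =>
    intro x
    rw [prod_range_succ']
    have : ∀ k ∈ range M, 1 + x * q ^ (k + 1) = 1 + (x * q) * q ^ k := fun k _ => by ring
    rw [prod_congr rfl this, ih, sum_range_succ' _ (M + 1)]
    have h0 : ∑ j ∈ range (M + 1), q ^ (j * (j - 1) / 2) * (x * q) ^ j * qb q M j =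
      ∑ j ∈ range (M + 1), q ^ ((j + 1) * (j + 1 - 1) / 2) * (x * q) ^ (j + 1) * qb q M (j + 1) + 1 := by
      rw [sum_range_succ', sum_range_succ _ M, qb_lt q M (M + 1) (by omega)]
      simp [qb_zero]
    have h1 : ∀ j : ℕ, (j + 1) * (j + 1 - 1) / 2 = j * (j - 1) / 2 + j := fun j => by
      rw [← Nat.add_mul_div_right _ _ (by norm_num : 0 < 2)]
      congr 1
      cases j <;> simp; ring
    rw [pow_zero, mul_one, mul_add, mul_one]
    nth_rewrite 1 [h0]
    rw [add_right_comm, sum_mul, ← sum_add_distrib]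
    simp only [h1, qb]
    simp only [pow_zero, mul_one]
    congr 1
    exact sum_congr rfl fun j _ => by ring

/-- Theta summand. -/
noncomputable def T (z q : ℂ) (n : ℤ) : ℂ := z ^ n * q ^ (n * (n - 1) / 2)

lemma tri_succ (n : ℤ) : (n + 1) * (n + 1 - 1) / 2 = n * (n - 1) / 2 + n := by
  rw [← Int.add_mul_ediv_right _ _ (by norm_num : (2 : ℤ) ≠ 0)]
  congr 1; ring

lemma T_succ {z q : ℂ} (hz : z ≠ 0) (h0 : q ≠ 0) (n : ℤ) :
    T z q (n + 1) = T z q n * (z * q ^ n) := by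
  rw [T, T, tri_succ, zpow_add₀ h0, zpow_add₀ hz, zpow_one]; ring

lemma T_zero (z q : ℂ) : T z q 0 = 1 := by simp [T]

lemma T_ne {z q : ℂ} (hz : z ≠ 0) (h0 : q ≠ 0) (n : ℤ) : T z q n ≠ 0 :=
  mul_ne_zero (zpow_ne_zero _ hz) (zpow_ne_zero _ h0)

lemma T_pred {z q : ℂ} (hz : z ≠ 0) (h0 : q ≠ 0) (n : ℕ) :
    T z q (-((n + 1 : ℕ) : ℤ)) = T z q (-(n : ℤ)) * (z⁻¹ * q ^ (n + 1)) := by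
  have := T_succ hz h0 (-((n + 1 : ℕ) : ℤ))
  rw [show (-((n + 1 : ℕ) : ℤ)) + 1 = -(n : ℤ) by push_cast; ring, zpow_neg, zpow_natCast] at this
  rw [this]
  field_simp

lemma T_summable {z q : ℂ} (hz : z ≠ 0) (h0 : q ≠ 0) (hq : ‖q‖ < 1) :
    Summable fun n => ‖T z q n‖ := by
  have hp : Tendsto (fun n : ℕ => ‖q‖ ^ n) atTop (𝓝 0) :=
    tendsto_pow_atTop_nhds_zero_of_lt_one (norm_nonneg _) hq
  refine Summable.of_nat_of_neg ?_ ?_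
  · refine summable_of_ratio_test_tendsto_lt_one zero_lt_one
      (Eventually.of_forall fun n => by simpa using T_ne hz h0 n) ?_
    have := hp.const_mul ‖z‖
    rw [mul_zero] at this
    refine this.congr fun n => ?_
    have h := T_succ hz h0 n
    have h' := T_ne hz h0 n
    push_cast
    rw [h, norm_norm, norm_norm, norm_mul, mul_div_cancel_left₀ _ (norm_ne_zero_iff.2 h')]
    simp
  · refine summable_of_ratio_test_tendsto_lt_one zero_lt_one
      (Eventually.of_forall fun n => by simpa using T_ne hz h0 (-n)) ?_
    have := (hp.comp (tendsto_add_atTop_nat 1)).const_mul ‖z⁻¹‖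
    rw [mul_zero] at this
    refine this.congr fun n => ?_
    have h := T_pred hz h0 n
    have h' := T_ne hz h0 (-n)
    rw [h, norm_norm, norm_norm, norm_mul, mul_div_cancel_left₀ _ (norm_ne_zero_iff.2 h')]
    simp

lemma T_shift {z q : ℂ} (hz : z ≠ 0) (h0 : q ≠ 0) (N j : ℕ) :
    T z q ((j : ℤ) - N) = T z q (-(N : ℤ)) * (q ^ (j * (j - 1) / 2) * (z * (q ^ N)⁻¹) ^ j) := by
  induction j with
  | zero => simp
  | succ j ih =>
    have h1 : (j + 1) * (j + 1 - 1) / 2 = j * (j - 1) / 2 + j := by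
      rw [← Nat.add_mul_div_right _ _ (by norm_num : 0 < 2)]
      congr 1
      cases j <;> simp; ring
    rw [show ((j + 1 : ℕ) : ℤ) - N = (j : ℤ) - N + 1 by push_cast; ring, T_succ hz h0, ih, h1,
      zpow_sub₀ h0, zpow_natCast, zpow_natCast]
    ring

lemma neg_prod {z q : ℂ} (hz : z ≠ 0) (h0 : q ≠ 0) (N : ℕ) :
    T z q (-(N : ℤ)) * ∏ k ∈ range N, (1 + z * (q ^ N)⁻¹ * q ^ k) =
      ∏ k ∈ range N, (1 + z⁻¹ * q * q ^ k) := by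
  induction N with
  | zero => simp [T_zero]
  | succ N ih =>
    rw [prod_range_succ (fun k => 1 + z⁻¹ * q * q ^ k), ← ih, prod_range_succ', T_pred hz h0]
    have : ∀ k ∈ range N, 1 + z * (q ^ (N + 1))⁻¹ * q ^ (k + 1) = 1 + z * (q ^ N)⁻¹ * q ^ k :=
      fun k _ => by field_simp; ring
    rw [prod_congr rfl this]
    field_simp
    ring

lemma jtp_finite {z q : ℂ} (hz : z ≠ 0) (h0 : q ≠ 0) (N : ℕ) :
    (∏ k ∈ range N, (1 + z * q ^ k)) * ∏ k ∈ range N, (1 + z⁻¹ * q * q ^ k) =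
      ∑ j ∈ range (N + N + 1), T z q ((j : ℤ) - N) * qb q (N + N) j := by
  rw [← neg_prod hz h0]
  have h := rothe q (N + N) (z * (q ^ N)⁻¹)
  rw [prod_range_add] at h
  have h2 : ∀ k ∈ range N, 1 + z * (q ^ N)⁻¹ * q ^ (N + k) = 1 + z * q ^ k :=
    fun k _ => by rw [pow_add]; field_simp
  rw [prod_congr rfl h2] at h
  calc _ = T z q (-(N : ℤ)) * ((∏ k ∈ range N, (1 + z * (q ^ N)⁻¹ * q ^ k)) *
      ∏ k ∈ range N, (1 + z * q ^ k)) := by ring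
    _ = _ := by
      rw [h, mul_sum]
      refine sum_congr rfl fun j _ => ?_
      rw [T_shift hz h0]; ring

/-- Coefficients in the finite triple product. -/
noncomputable def c (q : ℂ) (N : ℕ) (n : ℤ) : ℂ :=
  if -(N : ℤ) ≤ n then qb q (N + N) (n + N).toNat else 0

lemma jtp_finite_tsum {z q : ℂ} (hz : z ≠ 0) (h0 : q ≠ 0) (N : ℕ) :
    (∏ k ∈ range N, (1 + z * q ^ k)) * ∏ k ∈ range N, (1 + z⁻¹ * q * q ^ k) =
      ∑' n : ℤ, T z q n * c q N n := by
  rw [jtp_finite hz h0]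
  have hinj : Function.Injective fun j : ℕ => (j : ℤ) - N := fun a b h => by simpa using h
  rw [← hinj.tsum_eq (f := fun n => T z q n * c q N n)]
  · rw [tsum_eq_sum (s := range (N + N + 1))]
    · refine sum_congr rfl fun j _ => ?_
      simp [c]
    · intro j hj
      simp only [mem_range, not_lt] at hj
      simp [c, qb_lt q (N + N) j (by omega)]
  · intro n hn
    refine ⟨(n + N).toNat, ?_⟩
    have : -(N : ℤ) ≤ n := by
      by_contra h
      simp [c, h] at hn
    simp only
    omega

lemma c_bound {q : ℂ} (hq : ‖q‖ < 1) : ∃ C : ℝ, ∀ N n, ‖c q N n‖ ≤ C := by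
  obtain ⟨A, hA⟩ := (Q_lim hq).norm.bddAbove_range
  obtain ⟨B, hB⟩ := ((Q_lim hq).inv₀ (E_ne hq)).norm.bddAbove_range
  have hA' : ∀ n, ‖Q q n‖ ≤ A := fun n => hA ⟨n, rfl⟩
  have hB' : ∀ n, ‖(Q q n)⁻¹‖ ≤ B := fun n => hB ⟨n, rfl⟩
  have hA0 : 0 ≤ A := (norm_nonneg _).trans (hA' 0)
  have hB0 : 0 ≤ B := (norm_nonneg _).trans (hB' 0)
  refine ⟨A * (B * B), fun N n => ?_⟩
  have hpos : 0 ≤ A * (B * B) := by positivity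
  rw [c]
  split_ifs with h
  · by_cases h2 : (n + N).toNat ≤ N + N
    · obtain ⟨b, hb⟩ := Nat.exists_eq_add_of_le h2
      have := qb_mul q (n + N).toNat b
      rw [← hb] at this
      have e : qb q (N + N) (n + N).toNat =
          Q q (N + N) * ((Q q (n + N).toNat)⁻¹ * (Q q b)⁻¹) := by
        rw [← this]
        have := Q_ne hq (n + N).toNat
        have := Q_ne hq b
        field_simp
      rw [e, norm_mul, norm_mul]
      gcongr
      · exact hA' _
      · exact hB' _
      · exact hB' _
    · rw [qb_lt _ _ _ (by omega)]; simpa using hpos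
  · simpa using hpos

lemma c_lim {q : ℂ} (hq : ‖q‖ < 1) (n : ℤ) :
    Tendsto (fun N => c q N n) atTop (𝓝 (E q)⁻¹) := by
  have l1 : Tendsto (fun N : ℕ => N + N) atTop atTop := tendsto_id.atTop_add_atTop tendsto_id
  have l2 : Tendsto (fun N : ℕ => (n + N).toNat) atTop atTop :=
    tendsto_atTop.2 fun b => (eventually_ge_atTop (b + n.natAbs)).mono fun N h => by omega
  have l3 : Tendsto (fun N : ℕ => (N - n).toNat) atTop atTop :=
    tendsto_atTop.2 fun b => (eventually_ge_atTop (b + n.natAbs)).mono fun N h => by omega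
  have hE := E_ne hq
  have := ((Q_lim hq).comp l1).mul ((((Q_lim hq).comp l2).inv₀ hE).mul
    (((Q_lim hq).comp l3).inv₀ hE))
  rw [show E q * ((E q)⁻¹ * (E q)⁻¹) = (E q)⁻¹ by field_simp] at this
  refine this.congr' ((eventually_ge_atTop n.natAbs).mono fun N h => ?_)
  have hh : -(N : ℤ) ≤ n := by omega
  have e := qb_mul q (n + N).toNat (N - n).toNat
  rw [show (n + N).toNat + (N - n).toNat = N + N by omega] at e
  simp only [c, hh, if_true, Function.comp, ← e]
  have := Q_ne hq (n + N).toNat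
  have := Q_ne hq (N - n).toNat
  field_simp

/-- Jacobi triple product. -/
theorem jtp {z q : ℂ} (hz : z ≠ 0) (h0 : q ≠ 0) (hq : ‖q‖ < 1) :
    ∑' n : ℤ, T z q n = qPoch (-z) q * qPoch (-(z⁻¹ * q)) q * E q := by
  obtain ⟨C, hC⟩ := c_bound hq
  have h1 : Tendsto (fun N => ∑' n : ℤ, T z q n * c q N n) atTop
      (𝓝 (∑' n : ℤ, T z q n * (E q)⁻¹)) := by
    refine tendsto_tsum_of_dominated_convergence ((T_summable hz h0 hq).mul_right C)
      (fun n => (c_lim hq n).const_mul _) (Eventually.of_forall fun N n => ?_)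
    rw [norm_mul]
    gcongr
    exact hC _ _
  have h2 := (qPoch_lim (-z) hq).mul (qPoch_lim (-(z⁻¹ * q)) hq)
  have h3 := tendsto_nhds_unique h1 (h2.congr fun N => by
    rw [← jtp_finite_tsum hz h0]; simp only [neg_mul, sub_neg_eq_add])
  rw [tsum_mul_right] at h3
  rw [← h3]
  have := E_ne hq
  field_simp

lemma two_tri (n : ℤ) : 2 * (n * (n - 1) / 2) = n * (n - 1) :=
  Int.mul_ediv_cancel' (Int.even_mul_pred_self n).two_dvd

lemma T_eq {s q : ℂ} (h0 : q ≠ 0) (a b : ℕ) (n : ℤ) :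
    T (s * q ^ a) (q ^ b) n = s ^ n * q ^ ((a : ℤ) * n + b * (n * (n - 1) / 2)) := by
  rw [T, mul_zpow, zpow_add₀ h0, zpow_mul, zpow_mul, zpow_natCast, zpow_natCast]; ring

lemma tsum_split3 {f : ℤ → ℂ} (hf : Summable f) :
    ∑' n, f n = ∑' m, f (3 * m) + ∑' m, f (3 * m + 1) + ∑' m, f (3 * m + 2) := by
  have h1 : Summable fun m : ℤ => f (3 * m) :=
    hf.comp_injective (i := fun m : ℤ => 3 * m) fun a b h => by simpa using h
  have h2 : Summable fun m : ℤ => f (3 * m + 1) :=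
    hf.comp_injective (i := fun m : ℤ => 3 * m + 1) fun a b h => by simpa using h
  have h3 : Summable fun m : ℤ => f (3 * m + 2) :=
    hf.comp_injective (i := fun m : ℤ => 3 * m + 2) fun a b h => by simpa using h
  have hs : Summable fun p => f ((Int.divModEquiv 3).symm p) :=
    (Int.divModEquiv 3).symm.summable_iff.2 hf
  rw [← h1.tsum_add h2, ← (h1.add h2).tsum_add h3, ← (Int.divModEquiv 3).symm.tsum_eq f,
    hs.tsum_prod]
  refine tsum_congr fun m => ?_
  rw [tsum_fintype, Fin.sum_univ_three]
  simp [Int.divModEquiv, mul_comm]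

lemma theta1 {q : ℂ} (h0 : q ≠ 0) (hq : ‖q‖ < 1) :
    ∑' n, T (-1 * q ^ 1) (q ^ 2) n = E q ^ 2 / E (q ^ 2) := by
  have h2 : ‖q ^ 2‖ < 1 := norm_pow_lt hq (by norm_num)
  have e := E_ne h2
  rw [jtp (by simpa using h0) (by simpa using h0) h2, ← odd_eq hq]
  rw [show -(-1 * q ^ 1) = q by ring, show -((-1 * q ^ 1)⁻¹ * q ^ 2) = q by field_simp]
  field_simp

lemma theta2 {q : ℂ} (h0 : q ≠ 0) (hq : ‖q‖ < 1) :
    ∑' n, T (-1 * q ^ 1) (q ^ 6) n = E q * E (q ^ 6) ^ 2 / (E (q ^ 2) * E (q ^ 3)) := by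
  have h2 : ‖q ^ 2‖ < 1 := norm_pow_lt hq (by norm_num)
  have h3 : ‖q ^ 3‖ < 1 := norm_pow_lt hq (by norm_num)
  have h6 : ‖q ^ 6‖ < 1 := norm_pow_lt hq (by norm_num)
  have e2 := E_ne h2
  have e3 := E_ne h3
  have e6 := E_ne h6
  rw [jtp (by simpa using h0) (by simpa using h0) h6]
  rw [show -(-1 * q ^ 1) = q by ring, show -((-1 * q ^ 1)⁻¹ * q ^ 6) = q ^ 5 by field_simp]
  have a1 := odd_eq hq
  have a3 := odd_eq h3
  have s := qPoch_split3 q h2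
  rw [show (q ^ 2) ^ 3 = q ^ 6 by ring, show q * q ^ 2 = q ^ 3 by ring,
    show q * (q ^ 2) ^ 2 = q ^ 5 by ring] at s
  rw [show (q ^ 3) ^ 2 = q ^ 6 by ring] at a3
  rw [← a1, s, ← a3]
  have e4 : qPoch (q ^ 3) (q ^ 6) ≠ 0 := qPoch_ne_zero h6 h3
  field_simp

lemma theta3 {q : ℂ} (h0 : q ≠ 0) (hq : ‖q‖ < 1) :
    ∑' n, T (1 * q ^ 0) (q ^ 1) n = 2 * E (q ^ 2) ^ 2 / E q := by
  have e := E_ne hq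
  rw [pow_one, jtp (by simp) h0 hq, ← neg_eq hq]
  rw [show -((1 * q ^ 0)⁻¹ * q) = -q by simp, show -(1 * q ^ 0) = -1 by simp, qPoch_first _ hq]
  rw [neg_one_mul]
  field_simp
  ring

lemma theta4 {q : ℂ} (h0 : q ≠ 0) (hq : ‖q‖ < 1) :
    ∑' n, T (1 * q ^ 1) (q ^ 3) n = E (q ^ 2) * E (q ^ 3) ^ 2 / (E q * E (q ^ 6)) := by
  have h3 : ‖q ^ 3‖ < 1 := norm_pow_lt hq (by norm_num)
  have h6 : ‖q ^ 6‖ < 1 := norm_pow_lt hq (by norm_num)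
  have e1 := E_ne hq
  have e3 := E_ne h3
  have e6 := E_ne h6
  rw [jtp (by simpa using h0) (by simpa using h0) h3]
  rw [show -(1 * q ^ 1) = -q by ring, show -((1 * q ^ 1)⁻¹ * q ^ 3) = -q ^ 2 by field_simp]
  have a1 := neg_eq hq
  have a3 := neg_eq h3
  have s := qPoch_split3 (-q) hq
  rw [show -q * q = -q ^ 2 by ring, show -q * q ^ 2 = -q ^ 3 by ring] at s
  rw [show (q ^ 3) ^ 2 = q ^ 6 by ring] at a3
  rw [← a1, s, ← a3]
  have e4 : qPoch (-q ^ 3) (q ^ 3) ≠ 0 := qPoch_ne_zero h3 (by simpa using h3)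
  field_simp

lemma T_summable' {z q : ℂ} (hz : z ≠ 0) (h0 : q ≠ 0) (hq : ‖q‖ < 1) : Summable (T z q) :=
  (T_summable hz h0 hq).of_norm

lemma phi_dissect {q : ℂ} (h0 : q ≠ 0) (hq : ‖q‖ < 1) :
    E q ^ 2 / E (q ^ 2) = E (q ^ 9) ^ 2 / E (q ^ 18) -
      2 * q * (E (q ^ 3) * E (q ^ 18) ^ 2 / (E (q ^ 6) * E (q ^ 9))) := by
  have h2 : ‖q ^ 2‖ < 1 := norm_pow_lt hq (by norm_num)
  rw [← theta1 h0 hq, tsum_split3 (T_summable' (by simpa using h0) (by simpa using h0) h2)]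
  have t9 := theta1 (q := q ^ 9) (by simpa using h0) (norm_pow_lt hq (by norm_num))
  have t3 := theta2 (q := q ^ 3) (by simpa using h0) (norm_pow_lt hq (by norm_num))
  simp only [← pow_mul] at t9 t3
  norm_num only at t9 t3
  rw [← t9, ← t3]
  have m1 : (-1 : ℂ) ≠ 0 := by norm_num
  have s : ∀ m : ℤ, (-1 : ℂ) ^ (3 * m) = (-1) ^ m := fun m => by rw [zpow_mul]; norm_num
  have A : ∀ m, T (-1 * q ^ 1) (q ^ 2) (3 * m) = T (-1 * q ^ 9) (q ^ 18) m := fun m => by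
    rw [T_eq h0, T_eq h0, s]
    congr 2
    have := two_tri (3 * m); have := two_tri m
    push_cast; linarith
  have B : ∀ m, T (-1 * q ^ 1) (q ^ 2) (3 * m + 1) = -q * T (-1 * q ^ 3) (q ^ 18) (-m) := fun m => by
    rw [T_eq h0, T_eq h0, zpow_add₀ m1, s]
    have hs : (-1 : ℂ) ^ (-m) = (-1) ^ m := by rw [zpow_neg, ← inv_zpow]; norm_num
    have : ((1 : ℕ) : ℤ) * (3 * m + 1) + (2 : ℕ) * ((3 * m + 1) * (3 * m + 1 - 1) / 2)
      = 1 + ((3 : ℕ) * (-m) + (18 : ℕ) * ((-m) * (-m - 1) / 2)) := by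
      have := two_tri (3 * m + 1); have := two_tri (-m)
      push_cast; linarith
    rw [this, hs, zpow_add₀ h0, zpow_one, zpow_one]
    ring
  have C : ∀ m, T (-1 * q ^ 1) (q ^ 2) (3 * m + 2) = -q * T (-1 * q ^ 3) (q ^ 18) (m + 1) := fun m => by
    rw [T_eq h0, T_eq h0, zpow_add₀ m1, zpow_add₀ m1, s]
    have : ((1 : ℕ) : ℤ) * (3 * m + 2) + (2 : ℕ) * ((3 * m + 2) * (3 * m + 2 - 1) / 2)
      = 1 + ((3 : ℕ) * (m + 1) + (18 : ℕ) * ((m + 1) * (m + 1 - 1) / 2)) := by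
      have := two_tri (3 * m + 2); have := two_tri (m + 1)
      push_cast; linarith
    rw [this, zpow_add₀ h0, zpow_one, zpow_one, show (-1 : ℂ) ^ (2 : ℤ) = 1 by norm_num]
    ring
  simp only [A, B, C, tsum_mul_left]
  have r1 := (Equiv.neg ℤ).tsum_eq (T (-1 * q ^ 3) (q ^ 18))
  have r2 := (Equiv.addRight (1 : ℤ)).tsum_eq (T (-1 * q ^ 3) (q ^ 18))
  simp only [Equiv.neg_apply, Equiv.coe_addRight] at r1 r2
  rw [r1, r2]
  ring

lemma psi_dissect {q : ℂ} (h0 : q ≠ 0) (hq : ‖q‖ < 1) :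
    E (q ^ 2) ^ 2 / E q = E (q ^ 6) * E (q ^ 9) ^ 2 / (E (q ^ 3) * E (q ^ 18)) +
      q * (E (q ^ 18) ^ 2 / E (q ^ 9)) := by
  have t1 := theta3 h0 hq
  rw [tsum_split3 (T_summable' (by simp) (by simpa using h0) (by simpa using hq))] at t1
  have t9 := theta3 (q := q ^ 9) (by simpa using h0) (norm_pow_lt hq (by norm_num))
  have t3 := theta4 (q := q ^ 3) (by simpa using h0) (norm_pow_lt hq (by norm_num))
  simp only [← pow_mul] at t9 t3
  norm_num only at t9 t3
  have A : ∀ m, T (1 * q ^ 0) (q ^ 1) (3 * m) = T (1 * q ^ 3) (q ^ 9) m := fun m => by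
    rw [T_eq h0, T_eq h0]
    simp only [one_zpow, one_mul]
    congr 1
    have := two_tri (3 * m); have := two_tri m
    push_cast; linarith
  have B : ∀ m, T (1 * q ^ 0) (q ^ 1) (3 * m + 1) = T (1 * q ^ 3) (q ^ 9) (-m) := fun m => by
    rw [T_eq h0, T_eq h0]
    simp only [one_zpow, one_mul]
    congr 1
    have := two_tri (3 * m + 1); have := two_tri (-m)
    push_cast; linarith
  have C : ∀ m, T (1 * q ^ 0) (q ^ 1) (3 * m + 2) = q * T (1 * q ^ 0) (q ^ 9) (m + 1) := fun m => by
    rw [T_eq h0, T_eq h0]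
    simp only [one_zpow, one_mul]
    rw [← zpow_one_add₀ h0]
    congr 1
    have := two_tri (3 * m + 2); have := two_tri (m + 1)
    push_cast; linarith
  simp only [A, B, C, tsum_mul_left] at t1
  have r1 := (Equiv.neg ℤ).tsum_eq (T (1 * q ^ 3) (q ^ 9))
  have r2 := (Equiv.addRight (1 : ℤ)).tsum_eq (T (1 * q ^ 0) (q ^ 9))
  simp only [Equiv.neg_apply, Equiv.coe_addRight] at r1 r2
  simp only [pow_zero] at t9 r2 t1
  simp only [one_mul] at t9 r2 t1 t3 r1
  rw [r1, r2, t9, t3] at t1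
  linear_combination -t1 / 2

open PowerSeries in
/-- The factor of the generating function for the part `i + 1`. -/
noncomputable def fac (i : ℕ) : PowerSeries ℕ :=
  PowerSeries.mk fun n => if i + 1 ∣ n then (if n = 0 then 1 else n / (i + 1)) else 0

/-- `p` evaluates absolutely to `s` at `x`. -/
def Ev (p : PowerSeries ℕ) (x s : ℂ) : Prop :=
  Summable (fun n => ‖((PowerSeries.coeff n p : ℕ) : ℂ) * x ^ n‖) ∧
    HasSum (fun n => ((PowerSeries.coeff n p : ℕ) : ℂ) * x ^ n) s

lemma Ev_one (x : ℂ) : Ev 1 x 1 := by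
  have h : ∀ n ≠ 0, ((PowerSeries.coeff n (1 : PowerSeries ℕ) : ℕ) : ℂ) * x ^ n = 0 := fun n hn => by
    simp [PowerSeries.coeff_one, hn]
  have h2 := hasSum_single 0 h
  refine ⟨?_, by simpa using h2⟩
  exact h2.summable.norm

lemma Ev_mul {p r : PowerSeries ℕ} {x s t : ℂ} (hp : Ev p x s) (hr : Ev r x t) :
    Ev (p * r) x (s * t) := by
  have e : ∀ n, ((PowerSeries.coeff n (p * r) : ℕ) : ℂ) * x ^ n =
      ∑ kl ∈ antidiagonal n, (((PowerSeries.coeff kl.1 p : ℕ) : ℂ) * x ^ kl.1) *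
        (((PowerSeries.coeff kl.2 r : ℕ) : ℂ) * x ^ kl.2) := fun n => by
    rw [PowerSeries.coeff_mul]
    push_cast
    rw [sum_mul]
    refine sum_congr rfl fun kl hkl => ?_
    rw [← mem_antidiagonal.1 hkl, pow_add]; ring
  have h1 := summable_norm_sum_mul_antidiagonal_of_summable_norm hp.1 hr.1
  refine ⟨by simpa only [e] using h1, ?_⟩
  simp only [e]
  rw [← hp.2.tsum_eq, ← hr.2.tsum_eq,
    tsum_mul_tsum_eq_tsum_sum_antidiagonal_of_summable_norm hp.1 hr.1]
  exact h1.of_norm.hasSum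

/-- Value of a factor. -/
noncomputable def g (y : ℂ) : ℂ := y / (1 - y) ^ 2

lemma Ev_fac (i : ℕ) {x : ℂ} (hx : ‖x‖ < 1) : Ev (fac i) x (1 + g (x ^ (i + 1))) := by
  have hy : ‖x ^ (i + 1)‖ < 1 := norm_pow_lt hx (by omega)
  have h1 := hasSum_coe_mul_geometric_of_norm_lt_one hy
  have h2 : HasSum (fun j : ℕ => ((if j = 0 then 1 else j : ℕ) : ℂ) * (x ^ (i + 1)) ^ j)
      (1 + g (x ^ (i + 1))) := by
    have := (hasSum_ite_eq (0 : ℕ) (1 : ℂ)).add h1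
    refine this.congr_fun ?_
    intro j
    by_cases hj : j = 0 <;> simp [hj]
  have hinj : Function.Injective fun j : ℕ => (i + 1) * j := fun a b h => by simpa using h
  have h3 : HasSum (fun n => ((PowerSeries.coeff n (fac i) : ℕ) : ℂ) * x ^ n)
      (1 + g (x ^ (i + 1))) := by
    rw [← hinj.hasSum_iff]
    · refine h2.congr_fun ?_
      intro j
      simp [fac, pow_mul]
    · intro n hn
      have : ¬ (i + 1 ∣ n) := fun ⟨k, hk⟩ => hn ⟨k, hk.symm⟩
      simp [fac, this]
  exact ⟨h3.summable.norm, h3⟩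

/-- Partial products. -/
noncomputable def PP (N : ℕ) : PowerSeries ℕ := ∏ i ∈ range N, fac i

lemma Ev_PP (N : ℕ) {x : ℂ} (hx : ‖x‖ < 1) :
    Ev (PP N) x (∏ i ∈ range N, (1 + g (x ^ (i + 1)))) := by
  induction N with
  | zero => simpa [PP] using Ev_one x
  | succ N ih =>
    rw [PP, prod_range_succ, prod_range_succ]
    exact Ev_mul ih (Ev_fac N hx)

lemma PP_mono (n : ℕ) : Monotone fun N => PowerSeries.coeff n (PP N) := by
  refine monotone_nat_of_le_succ fun N => ?_
  simp only [PP]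
  rw [prod_range_succ, PowerSeries.coeff_mul]
  refine le_trans ?_ (single_le_sum (f := fun kl : ℕ × ℕ =>
    (PowerSeries.coeff kl.1) (∏ i ∈ range N, fac i) * (PowerSeries.coeff kl.2) (fac N))
    (fun _ _ => Nat.zero_le _) (a := (n, 0)) (by simp))
  simp [fac]

open scoped PowerSeries.WithPiTopology in
lemma fac_eq {R : Type*} [CommSemiring R] [TopologicalSpace R] [T2Space R] (f : ℕ → ℕ → R)
    (i m : ℕ) :
    PowerSeries.coeff m ((1 : PowerSeries R) +
      ∑' j : ℕ, f (i + 1) (j + 1) • (PowerSeries.X : PowerSeries R) ^ ((i + 1) * (j + 1))) =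
    if i + 1 ∣ m then (if m = 0 then 1 else f (i + 1) (m / (i + 1))) else 0 := by
  rw [map_add, (Nat.Partition.summable_genFun_term f i).map_tsum _
    (PowerSeries.WithPiTopology.continuous_coeff _ _)]
  simp only [map_smul, PowerSeries.coeff_X_pow, PowerSeries.coeff_one]
  by_cases hm : i + 1 ∣ m
  · obtain ⟨k, rfl⟩ := hm
    cases k with
    | zero => simp
    | succ k =>
      rw [tsum_eq_single k]
      · simp
      · intro b hb
        have : ¬ k = b := fun h => hb h.symm
        simp [this]
  · have h0 : m ≠ 0 := fun h => hm (h ▸ dvd_zero _)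
    have : ∀ j : ℕ, ¬ m = (i + 1) * (j + 1) := fun j h => hm ⟨_, h⟩
    simp [this, h0, hm]

open scoped PowerSeries.WithPiTopology in
lemma PP_eventually (n : ℕ) : ∀ᶠ N in atTop, PowerSeries.coeff n (PP N) = PD n := by
  have h := (Nat.Partition.hasProd_genFun (R := ℕ) fun _ c => c).tendsto_prod_nat
  rw [PowerSeries.WithPiTopology.tendsto_iff_coeff_tendsto] at h
  have h2 := h n
  rw [nhds_discrete, tendsto_pure] at h2
  refine h2.mono fun N hN => ?_
  refine Eq.trans ?_ (hN.trans ?_)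
  · refine congrArg _ (prod_congr rfl fun i _ => PowerSeries.ext fun m => ?_)
    rw [fac, PowerSeries.coeff_mk]
    exact (fac_eq (R := ℕ) (fun _ c => c) i m).symm
  · rw [Nat.Partition.coeff_genFun, PD]
    refine sum_congr rfl fun p _ => ?_
    simp [Finsupp.prod]

lemma PP_le (N n : ℕ) : PowerSeries.coeff n (PP N) ≤ PD n := by
  obtain ⟨M, hM, h⟩ := ((PP_eventually n).and (eventually_ge_atTop N)).exists
  rw [← hM]; exact PP_mono n h

lemma g_summable {x : ℂ} (hx : ‖x‖ < 1) : Summable fun i : ℕ => ‖g (x ^ (i + 1))‖ := by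
  have h := ((summable_geometric_of_lt_one (norm_nonneg _) hx).mul_left ‖x‖).mul_right
    ((1 - ‖x‖) ^ 2)⁻¹
  refine h.of_nonneg_of_le (fun _ => norm_nonneg _) fun i => ?_
  rw [g, norm_div, norm_pow, norm_pow, ← div_eq_mul_inv, ← pow_succ']
  have h1 : 0 < 1 - ‖x‖ := by linarith
  have h2 : 1 - ‖x‖ ≤ ‖1 - x ^ (i + 1)‖ := by
    have := norm_sub_norm_le (1 : ℂ) (x ^ (i + 1))
    rw [norm_one, norm_pow] at this
    have h3 : ‖x‖ ^ (i + 1) ≤ ‖x‖ := pow_le_of_le_one (norm_nonneg _) hx.le (by omega)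
    linarith
  gcongr

lemma g_lim {x : ℂ} (hx : ‖x‖ < 1) :
    Tendsto (fun N => ∏ i ∈ range N, (1 + g (x ^ (i + 1)))) atTop
      (𝓝 (∏' i : ℕ, (1 + g (x ^ (i + 1))))) :=
  (multipliable_one_add_of_summable (g_summable hx)).hasProd.tendsto_prod_nat

lemma PD_summable {x : ℂ} (hx : ‖x‖ < 1) : Summable fun n => ‖(PD n : ℂ) * x ^ n‖ := by
  have hr : ‖((‖x‖ : ℝ) : ℂ)‖ < 1 := by simpa using hx
  obtain ⟨A, hA⟩ := (g_lim hr).norm.bddAbove_range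
  have hA' : ∀ N, ‖∏ i ∈ range N, (1 + g (((‖x‖ : ℝ) : ℂ) ^ (i + 1)))‖ ≤ A := fun N => hA ⟨N, rfl⟩
  refine summable_of_sum_range_le (c := A) (fun _ => norm_nonneg _) fun M => ?_
  obtain ⟨N, hN⟩ := ((eventually_all_finset (range M)).2 fun n _ => PP_eventually n).exists
  have h1 : ∑ n ∈ range M, ‖(PD n : ℂ) * x ^ n‖ =
      ∑ n ∈ range M, ‖((PowerSeries.coeff n (PP N) : ℕ) : ℂ) * ((‖x‖ : ℝ) : ℂ) ^ n‖ :=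
    sum_congr rfl fun n hn => by rw [hN n hn]; simp
  rw [h1]
  have ev := Ev_PP N hr
  refine (ev.1.sum_le_tsum _ (fun _ _ => norm_nonneg _)).trans (le_trans (le_of_eq ?_) (hA' N))
  have h2 : ∀ n, ‖((PowerSeries.coeff n (PP N) : ℕ) : ℂ) * ((‖x‖ : ℝ) : ℂ) ^ n‖ =
      ((PowerSeries.coeff n (PP N) : ℕ) : ℝ) * ‖x‖ ^ n := fun n => by simp
  rw [← ev.2.tsum_eq]
  simp only [h2]
  have h3 : ∑' n, ((PowerSeries.coeff n (PP N) : ℕ) : ℂ) * ((‖x‖ : ℝ) : ℂ) ^ n =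
      ((∑' n, ((PowerSeries.coeff n (PP N) : ℕ) : ℝ) * ‖x‖ ^ n : ℝ) : ℂ) := by
    push_cast; rfl
  rw [h3, Complex.norm_real, Real.norm_of_nonneg]
  exact tsum_nonneg fun n => by positivity

lemma PD_tsum {x : ℂ} (hx : ‖x‖ < 1) :
    ∑' n, (PD n : ℂ) * x ^ n = ∏' i : ℕ, (1 + g (x ^ (i + 1))) := by
  refine tendsto_nhds_unique (f := fun N => ∑' n, ((PowerSeries.coeff n (PP N) : ℕ) : ℂ) * x ^ n)
    (l := atTop) ?_ ((g_lim hx).congr fun N => (Ev_PP N hx).2.tsum_eq.symm)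
  refine tendsto_tsum_of_dominated_convergence (PD_summable hx) (fun n => ?_)
    (Eventually.of_forall fun N n => ?_)
  · exact tendsto_const_nhds.congr' ((PP_eventually n).mono fun N h => by simp only [h])
  · rw [norm_mul, norm_mul, Complex.norm_natCast, Complex.norm_natCast]
    gcongr
    exact PP_le N n

lemma PD_gf {x : ℂ} (hx : ‖x‖ < 1) :
    ∑' n, (PD n : ℂ) * x ^ n = E (x ^ 6) / (E x * E (x ^ 2) * E (x ^ 3)) := by
  have h2 : ‖x ^ 2‖ < 1 := norm_pow_lt hx (by norm_num)
  have h3 : ‖x ^ 3‖ < 1 := norm_pow_lt hx (by norm_num)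
  have h6 : ‖x ^ 6‖ < 1 := norm_pow_lt hx (by norm_num)
  rw [PD_tsum hx]
  refine tendsto_nhds_unique (g_lim hx) (((Q_lim h6).div (((Q_lim hx).mul (Q_lim h2)).mul (Q_lim h3))
    (mul_ne_zero (mul_ne_zero (E_ne hx) (E_ne h2)) (E_ne h3))).congr fun N => ?_)
  simp only [Pi.div_apply, Q, ← prod_mul_distrib, ← prod_div_distrib]
  refine prod_congr rfl fun k _ => ?_
  have n1 : ∀ m : ℕ, m ≠ 0 → (1 - (x ^ (k + 1)) ^ m) ≠ 0 := fun m hm h => by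
    have h1 : (x ^ (k + 1)) ^ m = 1 := by linear_combination -h
    have := norm_pow_lt (norm_pow_lt hx (k := k + 1) (by omega)) hm
    rw [h1] at this; simp at this
  have e : ∀ m : ℕ, x ^ m * (x ^ m) ^ k = (x ^ (k + 1)) ^ m := fun m => by ring
  rw [e, e, e, ← pow_succ']
  generalize x ^ (k + 1) = y at *
  have a1 := n1 1 (by norm_num)
  have a2 := n1 2 (by norm_num)
  have a3 := n1 3 (by norm_num)
  rw [pow_one] at a1
  rw [g]
  field_simp
  ring

lemma EE {x : ℂ} (h0 : x ≠ 0) (hx : ‖x‖ < 1) :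
    E x * E (x ^ 2) = E (x ^ 6) * E (x ^ 9) ^ 4 / (E (x ^ 3) * E (x ^ 18) ^ 2) *
      ((1 - 2 * (x * (E (x ^ 3) * E (x ^ 18) ^ 3 / (E (x ^ 6) * E (x ^ 9) ^ 3)))) *
        (1 + x * (E (x ^ 3) * E (x ^ 18) ^ 3 / (E (x ^ 6) * E (x ^ 9) ^ 3)))) := by
  have e : ∀ k : ℕ, k ≠ 0 → E (x ^ k) ≠ 0 := fun k hk => E_ne (norm_pow_lt hx hk)
  have e1 := E_ne hx
  have e2 := e 2 (by norm_num)
  have e3 := e 3 (by norm_num)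
  have e6 := e 6 (by norm_num)
  have e9 := e 9 (by norm_num)
  have e18 := e 18 (by norm_num)
  have h : E x * E (x ^ 2) = (E x ^ 2 / E (x ^ 2)) * (E (x ^ 2) ^ 2 / E x) := by field_simp
  rw [h, phi_dissect h0 hx, psi_dissect h0 hx]
  field_simp

lemma E_omega {x w : ℂ} (hw : 1 + w + w ^ 2 = 0) (hx : ‖x‖ < 1) :
    E x * E (w * x) * E (w ^ 2 * x) = E (x ^ 3) ^ 4 / E (x ^ 9) := by
  have hw3 : w ^ 3 = 1 := by linear_combination (w - 1) * hw
  have hn : ‖w‖ = 1   := Complex.norm_eq_one_of_pow_eq_one hw3 (by norm_num)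
  have hx1 : ‖w * x‖ < 1 := by simpa [hn] using hx
  have hx2 : ‖w ^ 2 * x‖ < 1 := by simpa [hn] using hx
  have h3 : ‖x ^ 3‖ < 1 := norm_pow_lt hx (by norm_num)
  have h9 : ‖x ^ 9‖ < 1 := norm_pow_lt hx (by norm_num)
  have s0 := qPoch_split3 x hx
  have s1 := qPoch_split3 (w * x) hx1
  have s2 := qPoch_split3 (w ^ 2 * x) hx2
  have s3 := qPoch_split3 (x ^ 3) h3
  rw [show x * x = x ^ 2 by ring, show x * x ^ 2 = x ^ 3 by ring] at s0
  rw [show (w * x) ^ 3 = x ^ 3 by linear_combination x ^ 3 * hw3,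
    show w * x * (w * x) = w ^ 2 * x ^ 2 by ring,
    show w * x * (w * x) ^ 2 = x ^ 3 by linear_combination x ^ 3 * hw3] at s1
  rw [show (w ^ 2 * x) ^ 3 = x ^ 3 by linear_combination (w ^ 3 + 1) * x ^ 3 * hw3,
    show w ^ 2 * x * (w ^ 2 * x) = w * x ^ 2 by linear_combination w * x ^ 2 * hw3,
    show w ^ 2 * x * (w ^ 2 * x) ^ 2 = x ^ 3 by linear_combination (w ^ 3 + 1) * x ^ 3 * hw3] at s2
  have o1 := qPoch_omega x w hw h3
  have o2 := qPoch_omega (x ^ 2) w hw h3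
  rw [show (x ^ 3) ^ 3 = x ^ 9 by ring] at o1 o2 s3
  rw [show (x ^ 2) ^ 3 = x ^ 6 by ring] at o2
  rw [show x ^ 3 * x ^ 3 = x ^ 6 by ring, show x ^ 3 * (x ^ 3) ^ 2 = x ^ 9 by ring] at s3
  have e9 := E_ne h9
  rw [eq_div_iff e9]
  have s3' : E (x ^ 3) = qPoch (x ^ 3) (x ^ 9) * qPoch (x ^ 6) (x ^ 9) * E (x ^ 9) := s3
  have s0' : E x = qPoch x (x ^ 3) * qPoch (x ^ 2) (x ^ 3) * E (x ^ 3) := s0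
  have s1' : E (w * x) = qPoch (w * x) (x ^ 3) * qPoch (w ^ 2 * x ^ 2) (x ^ 3) * E (x ^ 3) := s1
  have s2' : E (w ^ 2 * x) = qPoch (w ^ 2 * x) (x ^ 3) * qPoch (w * x ^ 2) (x ^ 3) * E (x ^ 3) := s2
  rw [s0', s1', s2']
  calc _ = (qPoch x (x ^ 3) * qPoch (w * x) (x ^ 3) * qPoch (w ^ 2 * x) (x ^ 3)) *
        (qPoch (x ^ 2) (x ^ 3) * qPoch (w * x ^ 2) (x ^ 3) * qPoch (w ^ 2 * x ^ 2) (x ^ 3)) *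
        E (x ^ 9) * E (x ^ 3) ^ 3 := by ring
    _ = (qPoch (x ^ 3) (x ^ 9) * qPoch (x ^ 6) (x ^ 9) * E (x ^ 9)) * E (x ^ 3) ^ 3 := by
      rw [o1, o2]
    _ = E (x ^ 3) ^ 4 := by rw [← s3']; ring

lemma tsum_split3_nat {f : ℕ → ℂ} (hf : Summable f) :
    ∑' n, f n = ∑' m, f (3 * m) + ∑' m, f (3 * m + 1) + ∑' m, f (3 * m + 2) := by
  have h1 : Summable fun m : ℕ => f (3 * m) :=
    hf.comp_injective (i := fun m : ℕ => 3 * m) fun a b h => by simpa using h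
  have h2 : Summable fun m : ℕ => f (3 * m + 1) :=
    hf.comp_injective (i := fun m : ℕ => 3 * m + 1) fun a b h => by simpa using h
  have h3 : Summable fun m : ℕ => f (3 * m + 2) :=
    hf.comp_injective (i := fun m : ℕ => 3 * m + 2) fun a b h => by simpa using h
  have hs : Summable fun p => f ((Nat.divModEquiv 3).symm p) :=
    (Nat.divModEquiv 3).symm.summable_iff.2 hf
  rw [← h1.tsum_add h2, ← (h1.add h2).tsum_add h3, ← (Nat.divModEquiv 3).symm.tsum_eq f,
    hs.tsum_prod]
  refine tsum_congr fun m => ?_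
  rw [tsum_fintype, Fin.sum_univ_three]
  simp [Nat.divModEquiv, mul_comm]

lemma PD_split {x q : ℂ} (hxq : x ^ 3 = q) (hx : ‖x‖ < 1) :
    ∑' n, (PD n : ℂ) * x ^ n = ∑' n, (PD (3 * n) : ℂ) * q ^ n +
      x * ∑' n, (PD (3 * n + 1) : ℂ) * q ^ n + x ^ 2 * ∑' n, (PD (3 * n + 2) : ℂ) * q ^ n := by
  rw [tsum_split3_nat (PD_summable hx).of_norm, ← tsum_mul_left, ← tsum_mul_left, ← hxq]
  congr 1
  · congr 1
    · exact tsum_congr fun m => by rw [pow_mul]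
    · exact tsum_congr fun m => by rw [pow_succ, pow_mul]; ring
  · exact tsum_congr fun m => by rw [pow_add, pow_mul]; ring

lemma exists_omega : ∃ w : ℂ, 1 + w + w ^ 2 = 0 := by
  have h := Complex.isPrimitiveRoot_exp 3 (by norm_num)
  have := h.geom_sum_eq_zero (by norm_num)
  refine ⟨Complex.exp (2 * Real.pi * Complex.I / (3 : ℕ)), ?_⟩
  rw [sum_range_succ, sum_range_succ, sum_range_one, pow_zero, pow_one] at this
  exact this

lemma alg {w : ℂ} (hw : 1 + w + w ^ 2 = 0) (y : ℂ) :
    ((1 - 2 * (w * y)) * (1 + w * y)) * ((1 - 2 * (w ^ 2 * y)) * (1 + w ^ 2 * y)) +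
    w ^ 2 * (((1 - 2 * y) * (1 + y)) * ((1 - 2 * (w ^ 2 * y)) * (1 + w ^ 2 * y))) +
    w * (((1 - 2 * y) * (1 + y)) * ((1 - 2 * (w * y)) * (1 + w * y))) = 3 * (y + 4 * y ^ 4) := by
  have hw3 : w ^ 3 = 1 := by linear_combination (w - 1) * hw
  linear_combination (1 - 3 * y - 3 * y ^ 2 + 4 * y ^ 3) * hw +
    ((-y ^ 2 + 2 * y ^ 3 + 4 * y ^ 4) + w * (-y - y ^ 2 + 4 * y ^ 3) + w ^ 2 * (2 * y ^ 3) +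
      (w ^ 3 + 1) * (-2 * y ^ 2 + 2 * y ^ 3 + 8 * y ^ 4)) * hw3

lemma S1_eq {q : ℂ} (h0 : q ≠ 0) (hq : ‖q‖ < 1) :
    ∑' n : ℕ, (PD (3 * n + 1) : ℂ) * q ^ n =
      E (q ^ 3) ^ 6 / (E q ^ 6 * E (q ^ 2) ^ 2) +
      4 * q * E (q ^ 6) ^ 9 / (E q ^ 3 * E (q ^ 2) ^ 5 * E (q ^ 3) ^ 3) := by
  obtain ⟨w, hw⟩ := exists_omega
  obtain ⟨x, hxq⟩ := IsAlgClosed.exists_pow_nat_eq q (n := 3) (by norm_num)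
  have x0 : x ≠ 0 := by rintro rfl; exact h0 (by rw [← hxq]; norm_num)
  have hx : ‖x‖ < 1 := by
    by_contra h
    push Not at h
    have : 1 ≤ ‖x‖ ^ 3 := one_le_pow₀ h
    rw [← norm_pow, hxq] at this
    linarith
  have hw3 : w ^ 3 = 1 := by linear_combination (w - 1) * hw
  have w0 : w ≠ 0 := by rintro rfl; norm_num at hw
  have hn : ‖w‖ = 1   := Complex.norm_eq_one_of_pow_eq_one hw3 (by norm_num)
  have hx1 : ‖w * x‖ < 1 := by simpa [hn] using hx
  have hx2 : ‖w ^ 2 * x‖ < 1 := by simpa [hn] using hx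
  have hq1 : (w * x) ^ 3 = q := by rw [← hxq]; linear_combination x ^ 3 * hw3
  have hq2 : (w ^ 2 * x) ^ 3 = q := by rw [← hxq]; linear_combination (w ^ 3 + 1) * x ^ 3 * hw3
  have key : ∀ t : ℂ, t ^ 3 = q → t ≠ 0 → ‖t‖ < 1 →
      E t * E (t ^ 2) = E (q ^ 2) * E (q ^ 3) ^ 4 / (E q * E (q ^ 6) ^ 2) *
      ((1 - 2 * (t * (E q * E (q ^ 6) ^ 3 / (E (q ^ 2) * E (q ^ 3) ^ 3)))) *
        (1 + t * (E q * E (q ^ 6) ^ 3 / (E (q ^ 2) * E (q ^ 3) ^ 3)))) ∧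
      E t * E (t ^ 2) ≠ 0 ∧
      E (q ^ 2) / (E t * E (t ^ 2) * E q) = ∑' n, (PD (3 * n) : ℂ) * q ^ n +
      t * ∑' n, (PD (3 * n + 1) : ℂ) * q ^ n + t ^ 2 * ∑' n, (PD (3 * n + 2) : ℂ) * q ^ n := by
    intro t ht t0 hlt
    have p6 : t ^ 6 = q ^ 2 := by rw [← ht]; ring
    have p9 : t ^ 9 = q ^ 3 := by rw [← ht]; ring
    have p18 : t ^ 18 = q ^ 6 := by rw [← ht]; ring
    refine ⟨?_, mul_ne_zero (E_ne hlt) (E_ne (norm_pow_lt hlt (by norm_num))), ?_⟩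
    · have := EE t0 hlt
      rwa [p6, p9, p18, ht] at this
    · rw [← PD_split ht hlt, PD_gf hlt, p6, ht]
  obtain ⟨a0, n0, b0⟩ := key x hxq x0 hx
  obtain ⟨a1, n1, b1⟩ := key (w * x) hq1 (mul_ne_zero w0 x0) hx1
  obtain ⟨a2, n2, b2⟩ := key (w ^ 2 * x) hq2 (mul_ne_zero (pow_ne_zero _ w0) x0) hx2
  have o1 := E_omega hw hx
  have o2 := E_omega hw (norm_pow_lt hx (k := 2) (by norm_num))
  rw [hxq, show x ^ 9 = q ^ 3 by rw [← hxq]; ring] at o1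
  rw [show (x ^ 2) ^ 3 = q ^ 2 by rw [← hxq]; ring, show (x ^ 2) ^ 9 = q ^ 6 by rw [← hxq]; ring,
    show w * x ^ 2 = (w ^ 2 * x) ^ 2 by linear_combination -w * x ^ 2 * hw3,
    show w ^ 2 * x ^ 2 = (w * x) ^ 2 by ring] at o2
  have e : ∀ k : ℕ, k ≠ 0 → E (q ^ k) ≠ 0 := fun k hk => E_ne (norm_pow_lt hq hk)
  have e1 := E_ne hq
  have e2 := e 2 (by norm_num)
  have e3 := e 3 (by norm_num)
  have e6 := e 6 (by norm_num)
  have hK : (E x * E (x ^ 2)) * (E (w * x) * E ((w * x) ^ 2)) *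
      (E (w ^ 2 * x) * E ((w ^ 2 * x) ^ 2)) =
      E q ^ 4 / E (q ^ 3) * (E (q ^ 2) ^ 4 / E (q ^ 6)) := by
    rw [← o1, ← o2]; ring
  clear o1 o2 key
  generalize E x * E (x ^ 2) = A0 at *
  generalize E (w * x) * E ((w * x) ^ 2) = A1 at *
  generalize E (w ^ 2 * x) * E ((w ^ 2 * x) ^ 2) = A2 at *
  generalize ∑' n, (PD (3 * n) : ℂ) * q ^ n = S0 at *
  generalize ∑' n, (PD (3 * n + 1) : ℂ) * q ^ n = S1 at *
  generalize ∑' n, (PD (3 * n + 2) : ℂ) * q ^ n = S2 at *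
  generalize E q = f1 at *
  generalize E (q ^ 2) = f2 at *
  generalize E (q ^ 3) = f3 at *
  generalize E (q ^ 6) = f6 at *
  obtain ⟨v, hv⟩ : ∃ v, v = f1 * f6 ^ 3 / (f2 * f3 ^ 3) := ⟨_, rfl⟩
  obtain ⟨D, hD⟩ : ∃ D, D = f2 * f3 ^ 4 / (f1 * f6 ^ 2) := ⟨_, rfl⟩
  rw [← hv, ← hD] at a0 a1 a2
  have h3 : f2 / (A0 * f1) + w ^ 2 * (f2 / (A1 * f1)) + w * (f2 / (A2 * f1)) = 3 * (x * S1) := by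
    rw [b0, b1, b2]
    linear_combination (S0 + x ^ 2 * S2) * hw + (2 * x * S1 + x ^ 2 * S2 * (w + w ^ 2)) * hw3
  have h4 : f2 / (A0 * f1) + w ^ 2 * (f2 / (A1 * f1)) + w * (f2 / (A2 * f1)) =
      f2 / (f1 * (A0 * A1 * A2)) * (A1 * A2 + w ^ 2 * (A0 * A2) + w * (A0 * A1)) := by
    field_simp
  have h5 : A1 * A2 + w ^ 2 * (A0 * A2) + w * (A0 * A1) =
      D ^ 2 * (3 * (x * v + 4 * (x * v) ^ 4)) := by
    rw [← alg hw (x * v), a0, a1, a2]; ring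
  rw [h4, hK, h5] at h3
  have h6 : x * S1 = x * (f2 / (f1 * (f1 ^ 4 / f3 * (f2 ^ 4 / f6))) * (D ^ 2 * (v + 4 * q * v ^ 4))) := by
    rw [← hxq]
    linear_combination -h3 / 3
  rw [mul_left_cancel₀ x0 h6, hv, hD]
  field_simp

end PDProof

theorem generating_function_PD_three_n_add_one (q : ℂ) (hq : ‖q‖ < 1) :
    ∑' n : ℕ, (PD (3 * n + 1) : ℂ) * q ^ n =
      qPoch (q ^ 3) (q ^ 6) ^ 3 * qPoch (q ^ 6) (q ^ 6) ^ 6 /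
          (qPoch q (q ^ 2) ^ 5 * qPoch (q ^ 2) (q ^ 2) ^ 8) *
        (4 * q * qPoch q (q ^ 2) ^ 2 / qPoch (q ^ 3) (q ^ 6) ^ 6 +
          qPoch (q ^ 3) (q ^ 6) ^ 3 / qPoch q (q ^ 2)) := by
  by_cases h0 : q = 0
  · subst h0
    have h1 : PD 1 = 1 := by
      rw [PD, Fintype.sum_unique, Subsingleton.elim default (Nat.Partition.indiscrete 1),
        Nat.Partition.indiscrete_parts one_ne_zero]
      simp
    rw [tsum_eq_single 0 (fun n hn => by simp [hn])]
    simp [h1, qPoch]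
  · have h2 : ‖q ^ 2‖ < 1 := PDProof.norm_pow_lt hq (by norm_num)
    have h3 : ‖q ^ 3‖ < 1 := PDProof.norm_pow_lt hq (by norm_num)
    have h6 : ‖q ^ 6‖ < 1 := PDProof.norm_pow_lt hq (by norm_num)
    have a1 := PDProof.odd_eq hq
    have a3 := PDProof.odd_eq h3
    rw [show (q ^ 3) ^ 2 = q ^ 6 by ring] at a3
    rw [PDProof.S1_eq h0 hq, ← a1, ← a3]
    have e2 := PDProof.E_ne h2
    have e6 := PDProof.E_ne h6
    have g1 : qPoch q (q ^ 2) ≠ 0 := PDProof.qPoch_ne_zero h2 hq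
    have g3 : qPoch (q ^ 3) (q ^ 6) ≠ 0 := PDProof.qPoch_ne_zero h6 h3
    change _ = qPoch (q ^ 3) (q ^ 6) ^ 3 * PDProof.E (q ^ 6) ^ 6 /
          (qPoch q (q ^ 2) ^ 5 * PDProof.E (q ^ 2) ^ 8) *
        (4 * q * qPoch q (q ^ 2) ^ 2 / qPoch (q ^ 3) (q ^ 6) ^ 6 +
          qPoch (q ^ 3) (q ^ 6) ^ 3 / qPoch q (q ^ 2))
    field_simp
    ring
end
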